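/- Let x₁, x₂ be nonzero rational numbers and let z₁, z₂ be rational numbers with 0 < z₁ < z₂ < 1 such that each z_k, written as a fraction in lowest terms p_k/q_k, has either its numerator p_k or its denominator q_k equal to a power of 2 (where 2⁰ = 1 counts as a power of 2). If x₁·arctan(z₁) + x₂·arctan(z₂) = π/4, then the quadruple (x₁, z₁, x₂, z₂) is one of the ten sporadic solutions (−1, 1/239, 4, 1/5), (−1, 1/7, 2, 1/2), (−1, 2/11, 3/2, 3/4), (−1, 2/11, 3, 1/3), (1/3, 1/239, 4/3, 2/3), (1/2, 2/11, 3/2, 1/2), (1, 1/41, 2, 2/5), (1, 1/7, 2, 1/3), (1, 1/2, 1/2, 3/4), (3, 1/7, 2, 2/11), or there exists a positive integer a such that (x₁, z₁, x₂, z₂) = (1, 1/(2^(a+1)+1), 1, 2^a/(2^a+1)) or (x₁, z₁, x₂, z₂) = (1, 1/(2^(a+1)−1), 1, (2^a−1)/2^a). -/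

import Mathlib

/-!
For a 2-integer ratio `z = p / q`, the number `arctan z` is the argument of the Gaussian integer
`q + i p`. Dividing by `1 + i` if `p` and `q` are both odd, and multiplying by a unit, one attaches
to `z` a Gaussian integer `G = u + i v` with `u` odd, `v` even and nonzero (`OddEven`) and coprime
coordinates, whose argument is `± arctan z` modulo `π / 4`. That `z` is a 2-integer ratio makes `G`
*nice*: `u = ± 1`, or `v = ± 2 ^ a`, or `u ± v = ± 1` (`exists_gauss_of_ratio`, `Shape.nice`).

A relation `m arctan z₁ + n arctan z₂ ∈ π ℤ` makes a product of powers of `G₁` and `G₂`, or of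
conjugates of these, real. By unique factorization `± G₁` and `± G₂` are, up to conjugation, coprime
powers `h ^ i` and `h ^ j` of a common base (`exists_base_of_relation`). So it must be determined
when powers of `h` can be nice.

* `Re h ^ m = ± 1` forces `m = 1` (`OddEven.re_pow`), by `2`-adic expansions and divisibility.
* `Re h ^ m ± Im h ^ m = ± 1` forces `m = 2 ^ t` (`OddEven.add_pow_exponent`). If moreover `h` is
  nice and `t ≥ 2`, then `m = 4` and `h = ± 3 ± 2 i`: a descent along the Pell equation
  `x ^ 2 - 2 b ^ 2 = 1` gives congruences modulo a power of `2` too strong for the size of `h`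
  (`OddEven.pow_two_exponent`).
* `Im h ^ m = ± 2 ^ a` with `m` even forces `m = 2` (`OddEven.im_pow_even`). With `m ≥ 3` odd it
  forces `m = 3` and `h = ± 1 ± 2 i` (`OddEven.im_pow_odd`). Here `Im h ^ m = - Im h`; the case
  `Im h = ± 2` is settled by congruences, and the other ones reduce to a prime exponent
  `e ≡ 7 (mod 8)`.

The equation `Im h ^ e = - Im h`, with `Im h = ± 2 ^ α`, `α ≥ 2`, and `e ≡ 7 (mod 8)` prime, is the
hard case; it is refuted in `im_pow_ne_neg`.

* For `e ≥ 2 ^ 18`, the quotient `(h / conj h) ^ e` would be extremely close to `1`. An explicit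
  interpolation determinant in the style of Laurent, built from the functions `binom(x, k) y ^ m`,
  excludes this (`not_small_im`).
* For `e < 2 ^ 18`, the equation determines the Jacobi symbols of `Im h ^ e / Im h = - 1` modulo
  the odd integers `Im h ^ b / Im h` and `Re h ^ b ± Im h ^ b`. On the other hand, these symbols are
  computed by quadratic reciprocity from the exponents and the signs of integers of this kind, and the
  signs depend only on the position of `arg h` among finitely many rational multiples of `π`. For
  every prime `e` and every position some `b ≤ 53` yields a contradiction, by a finite computation
  in the kernel (`SymBase.symF_ne`).

The resulting pairs `(h ^ i, h ^ j)` give the pairs `(z₁, z₂)` (`ratio_pairs`). As `arctan z₂` is not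
a rational multiple of `π`, the coefficients `x₁, x₂` are unique (`coeff_unique`), and they are read
off from addition formulas for the arctangent. The pairs with `arctan z₂ = 2 arctan z₁` do not
satisfy a relation at all.
-/


/-! ### Odd sequences attached to a Gaussian integer and their Jacobi symbols -/

/-- Quadratic reciprocity for odd integers of arbitrary sign. -/
lemma jacobiSym_natAbs_swap (F G : ℤ) (hF : F % 2 = 1) (hG : G % 2 = 1) :
    jacobiSym F G.natAbs = (if F < 0 ∧ G < 0 then -1 else 1) *
      (if F % 4 = 3 ∧ G % 4 = 3 then -1 else 1) * jacobiSym G F.natAbs := by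
  have key : ∀ f g : ℕ, f % 2 = 1 → g % 2 = 1 →
      jacobiSym (f : ℤ) g = (if f % 4 = 3 ∧ g % 4 = 3 then -1 else 1) * jacobiSym g f := by
    intro f g hf hg
    split_ifs with h
    · rw [jacobiSym.quadratic_reciprocity_three_mod_four h.1 h.2]; ring
    · rw [one_mul]
      by_cases h1 : f % 4 = 1
      · exact jacobiSym.quadratic_reciprocity_one_mod_four h1 (Nat.odd_iff.2 hg)
      · have h2 : g % 4 = 1 := by omega
        exact (jacobiSym.quadratic_reciprocity_one_mod_four h2 (Nat.odd_iff.2 hf)).symm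
  have hneg : ∀ (f : ℤ) (g : ℕ), g % 2 = 1 →
      jacobiSym (-f) g = (if g % 4 = 3 then -1 else 1) * jacobiSym f g := by
    intro f g hg
    rw [jacobiSym.neg _ (Nat.odd_iff.2 hg)]
    split_ifs with h
    · rw [ZMod.χ₄_nat_three_mod_four h]
    · rw [ZMod.χ₄_nat_one_mod_four (by omega)]
  rcases Int.natAbs_eq F with h1 | h1 <;> rcases Int.natAbs_eq G with h2 | h2 <;>
    generalize F.natAbs = f at h1 <;> generalize G.natAbs = g at h2 <;> subst h1 <;> subst h2 <;>
    have hf : f % 2 = 1 := by omega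
  all_goals have hg : g % 2 = 1 := by omega
  · rw [key f g hf hg, if_neg (by omega : ¬((f : ℤ) < 0 ∧ (g : ℤ) < 0)), one_mul]
    congr 2; apply propext; omega
  · rw [hneg _ _ hf, key f g hf hg]
    split_ifs <;> omega
  · rw [hneg _ _ hg, key f g hf hg]
    split_ifs <;> omega
  · rw [hneg _ _ hg, hneg _ _ hf, key f g hf hg]
    split_ifs <;> omega

/-- `dir t` is a positive multiple of `exp (t π i / 4)`. -/
def dir (t : ℕ) : GaussianInt := if t % 2 = 0 then ⟨0, 1⟩ ^ (t / 2) else ⟨0, 1⟩ ^ (t / 2) * ⟨1, 1⟩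

lemma dir_add (t k : ℕ) : dir (t + 2 * k) = ⟨0, 1⟩ ^ k * dir t := by
  have h1 : (t + 2 * k) % 2 = t % 2 := by omega
  have h2 : (t + 2 * k) / 2 = k + t / 2 := by omega
  simp only [dir, h1, h2, pow_add]
  split_ifs <;> ring

lemma dir_four_add (t : ℕ) : dir (t + 4) = - dir t := by
  have h : (⟨0, 1⟩ : GaussianInt) ^ 2 = -1 := by decide
  rw [show t + 4 = t + 2 * 2 by rfl, dir_add, h, neg_one_mul]

lemma I_pow_four : (⟨0, 1⟩ : GaussianInt) ^ 4 = 1 := by decide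

lemma dir_mod (t : ℕ) : dir (t % 8) = dir t := by
  conv_rhs => rw [← Nat.mod_add_div t 8, show t % 8 + 8 * (t / 8) = t % 8 + 2 * (4 * (t / 8)) by ring,
    dir_add, pow_mul, I_pow_four, one_pow, one_mul]

lemma star_dir (t : ℕ) (ht : t ≤ 8) : star (dir t) = dir (8 - t) := by
  interval_cases t <;> decide

/-- The odd integer attached to the direction `t` and the exponent `a`: up to the positive factor
`Im h` for `t = 0`, it is the imaginary part of `dir t * h ^ a`. -/
def symF (h : GaussianInt) (t a : ℕ) : ℤ :=
  match t with
  | 0 => (h ^ a).im / h.im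
  | 1 => (h ^ a).re + (h ^ a).im
  | 2 => (h ^ a).re
  | _ => (h ^ a).re - (h ^ a).im

lemma im_dvd_im_pow (h : GaussianInt) (a : ℕ) : h.im ∣ (h ^ a).im := by
  induction a with
  | zero => simp
  | succ a ih =>
    rw [pow_succ, Zsqrtd.im_mul]
    exact dvd_add (Dvd.intro_left _ rfl) (ih.mul_right _)

/-- The factor relating `symF h t a` to the imaginary part of `dir t * h ^ a`. -/
def symC (h : GaussianInt) (t : ℕ) : ℤ := if t = 0 then h.im else 1

lemma im_dir_mul (h : GaussianInt) (t a : ℕ) (ht : t < 4) :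
    (dir t * h ^ a).im = symC h t * symF h t a := by
  interval_cases t
  · simp [dir, symC, symF, Int.mul_ediv_cancel' (im_dvd_im_pow h a)]
  · simp [dir, symC, symF]; ring
  · simp [dir, symC, symF]
  · simp [dir, symC, symF]; ring

lemma sq_eq_norm_add (w : GaussianInt) : w ^ 2 = w.norm + w.im * (⟨0, 2⟩ * w) := by
  ext <;> simp [Zsqrtd.norm_def, pow_two] <;> ring

lemma pow_two_mul_modEq (w : GaussianInt) (m : ℤ) (hm : m ∣ w.im) (q : ℕ) :
    ∃ y, w ^ (2 * q) = (w.norm : GaussianInt) ^ q + m * y := by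
  obtain ⟨k, hk⟩ := hm
  have h1 : (m : GaussianInt) ∣ w ^ 2 - w.norm := by
    rw [sq_eq_norm_add, hk]
    exact ⟨k * (⟨0, 2⟩ * w), by push_cast; ring⟩
  have h2 := h1.trans (sub_dvd_pow_sub_pow (w ^ 2) (w.norm : GaussianInt) q)
  obtain ⟨y, hy⟩ := h2
  exact ⟨y, by rw [← hy, ← pow_mul]; ring⟩

/-- The normalization of the base `h = u + i v`: `v` is a power of two divisible by `4`, and both
`u ≡ 1 (mod 4)` and `u + v ≡ ±1 (mod 8)`. -/
structure SymBase (h : GaussianInt) (α : ℕ) : Prop where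
  two_le : 2 ≤ α
  im_eq : h.im = 2 ^ α
  re_mod : h.re % 4 = 1
  sum_mod : (h.re + h.im) % 8 = 1 ∨ (h.re + h.im) % 8 = 7

namespace SymBase
variable {h : GaussianInt} {α : ℕ}

lemma four_dvd (H : SymBase h α) : (4 : ℤ) ∣ h.im := by
  rw [H.im_eq, show (4 : ℤ) = 2 ^ 2 by norm_num]
  exact pow_dvd_pow 2 H.two_le

lemma im_pos (H : SymBase h α) : 0 < h.im := by rw [H.im_eq]; positivity

lemma pow_mod_four (H : SymBase h α) (a : ℕ) : (h ^ a).re % 4 = 1 ∧ (4 : ℤ) ∣ (h ^ a).im := by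
  refine ⟨?_, H.four_dvd.trans (im_dvd_im_pow h a)⟩
  induction a with
  | zero => simp
  | succ a ih =>
    have h1 := H.four_dvd.trans (im_dvd_im_pow h a)
    obtain ⟨k, hk⟩ := H.four_dvd
    have h2 : (h ^ (a + 1)).re = (h ^ a).re * h.re - 4 * (k * (h ^ a).im) := by
      rw [pow_succ, Zsqrtd.re_mul, hk]; ring
    rw [h2, Int.sub_emod, Int.mul_emod, ih, H.re_mod]
    omega

lemma im_div_mod_four (H : SymBase h α) (a : ℕ) : (h ^ a).im / h.im % 4 = (a : ℤ) % 4 := by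
  induction a with
  | zero => simp
  | succ a ih =>
    have h1 := (H.pow_mod_four a).1
    obtain ⟨k, hk⟩ := im_dvd_im_pow h a
    have hv := H.im_pos.ne'
    rw [hk, Int.mul_ediv_cancel_left _ hv] at ih
    have h2 : (h ^ (a + 1)).im / h.im = (h ^ a).re + k * h.re := by
      rw [pow_succ, Zsqrtd.im_mul, hk,
        show (h ^ a).re * h.im + h.im * k * h.re = h.im * ((h ^ a).re + k * h.re) by ring,
        Int.mul_ediv_cancel_left _ hv]
    rw [h2, Int.add_emod, Int.mul_emod, h1, ih, H.re_mod]
    push_cast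
    omega

/-- Validity of an index: `symF h t a` is odd for it. -/
def _root_.SymValid (t a : ℕ) : Prop := t < 4 ∧ (t % 2 = 0 → a % 2 = 1)

lemma symF_mod_four (H : SymBase h α) {t a : ℕ} (ht : SymValid t a) :
    symF h t a % 4 = if t = 0 ∧ a % 4 = 3 then 3 else 1 := by
  obtain ⟨h1, h2⟩ := ht
  obtain ⟨h3, h4⟩ := H.pow_mod_four a
  have h5 := H.im_div_mod_four a
  generalize hL : (h ^ a).im / h.im = L at h5
  interval_cases t
  · change (h ^ a).im / h.im % 4 = _
    rw [hL]
    split_ifs <;> omega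
  · change ((h ^ a).re + (h ^ a).im) % 4 = _
    rw [if_neg (by simp)]
    omega
  · change (h ^ a).re % 4 = _
    rw [if_neg (by simp)]
    omega
  · change ((h ^ a).re - (h ^ a).im) % 4 = _
    rw [if_neg (by simp)]
    omega

lemma symF_odd (H : SymBase h α) {t a : ℕ} (ht : SymValid t a) : symF h t a % 2 = 1 := by
  have := H.symF_mod_four ht
  split_ifs at this <;> omega

lemma symF_mod_eight (H : SymBase h α) {t a : ℕ} (ht : t < 4) (ht2 : t % 2 = 1) :
    symF h t a % 8 = 1 ∨ symF h t a % 8 = 7 := by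
  obtain ⟨c, hc⟩ := H.four_dvd
  have hu := H.re_mod
  have hs := H.sum_mod
  have key : ∀ k, (h ^ (2 * k)).re % 8 = 1 ∧ (h ^ (2 * k)).im % 8 = 0 := by
    intro k
    have h1 : (h ^ 2).re % 8 = 1 ∧ (h ^ 2).im % 8 = 0 := by
      obtain ⟨d, hd⟩ : ∃ d, h.re = 4 * d + 1 := ⟨h.re / 4, by omega⟩
      rw [pow_two, Zsqrtd.re_mul, Zsqrtd.im_mul, hc, hd]
      ring_nf
      omega
    rw [pow_mul]
    induction k with
    | zero => simp
    | succ k ih =>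
      obtain ⟨a1, ha1⟩ : ∃ d, (h ^ 2).re = 8 * d + 1 := ⟨(h ^ 2).re / 8, by omega⟩
      obtain ⟨a2, ha2⟩ : ∃ d, (h ^ 2).im = 8 * d := ⟨(h ^ 2).im / 8, by omega⟩
      obtain ⟨a3, ha3⟩ : ∃ d, ((h ^ 2) ^ k).re = 8 * d + 1 := ⟨((h ^ 2) ^ k).re / 8, by omega⟩
      obtain ⟨a4, ha4⟩ : ∃ d, ((h ^ 2) ^ k).im = 8 * d := ⟨((h ^ 2) ^ k).im / 8, by omega⟩
      rw [pow_succ, Zsqrtd.re_mul, Zsqrtd.im_mul, ha1, ha2, ha3, ha4]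
      ring_nf
      omega
  have key2 : ((h ^ a).re + (h ^ a).im) % 8 = 1 ∨ ((h ^ a).re + (h ^ a).im) % 8 = 7 := by
    rcases Nat.even_or_odd' a with ⟨k, rfl | rfl⟩
    · have := key k; omega
    · obtain ⟨h1, h2⟩ := key k
      obtain ⟨a3, ha3⟩ : ∃ d, (h ^ (2 * k)).re = 8 * d + 1 := ⟨(h ^ (2 * k)).re / 8, by omega⟩
      obtain ⟨a4, ha4⟩ : ∃ d, (h ^ (2 * k)).im = 8 * d := ⟨(h ^ (2 * k)).im / 8, by omega⟩
      have h3 : (h ^ (2 * k + 1)).re + (h ^ (2 * k + 1)).im = (h.re + h.im) +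
          8 * (a3 * (h.re + h.im) + a4 * (h.re - h.im)) := by
        rw [pow_succ, Zsqrtd.re_mul, Zsqrtd.im_mul, ha3, ha4]; ring
      rw [h3]; omega
  have h4 := (H.pow_mod_four a).2
  interval_cases t
  · omega
  · exact key2
  · omega
  · simp only [symF]; omega

lemma _root_.jacobiSym_two_of_mod_eight (m : ℤ) (hm : m % 8 = 1 ∨ m % 8 = 7) :
    jacobiSym 2 m.natAbs = 1 := by
  have h1 : m.natAbs % 8 = 1 ∨ m.natAbs % 8 = 7 := by omega
  rw [jacobiSym.at_two (Nat.odd_iff.2 (by omega)), ZMod.χ₈_nat_eq_if_mod_eight]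
  rw [if_neg (by omega), if_pos h1]

lemma norm_mod_eight (H : SymBase h α) : h.norm % 8 = 1 := by
  obtain ⟨c, hc⟩ := H.four_dvd
  have hu := H.re_mod
  obtain ⟨d, hd⟩ : ∃ d, h.re = 4 * d + 1 := ⟨h.re / 4, by omega⟩
  rw [Zsqrtd.norm_def, hc, hd]
  ring_nf
  omega

lemma isCoprime (H : SymBase h α) : IsCoprime h.re h.im := by
  rw [H.im_eq]
  refine IsCoprime.pow_right ?_
  have := H.re_mod
  exact ⟨1, -(h.re / 2), by omega⟩

/-- If `h.norm` is a square times `c` modulo an odd number `m` coprime to it, then the symbols of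
`m` modulo the norm and of `c` modulo `m` agree. -/
lemma jacobiSym_norm (H : SymBase h α) (m c : ℤ) (x : ℤ) (hm : m % 2 = 1)
    (hx : IsCoprime x m) (hmod : h.norm % m = c * x ^ 2 % m) :
    jacobiSym m h.norm.natAbs = jacobiSym c m.natAbs := by
  have hN := H.norm_mod_eight
  have hN0 := GaussianInt.norm_nonneg h
  rw [jacobiSym_natAbs_swap m h.norm hm (by omega), if_neg (by omega), if_neg (by omega), one_mul,
    one_mul, jacobiSym.mod_left, Int.natCast_natAbs, Int.emod_abs, hmod, ← Int.emod_abs,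
    ← Int.natCast_natAbs, ← jacobiSym.mod_left, jacobiSym.mul_left, pow_two, jacobiSym.mul_left]
  have h1 : jacobiSym x m.natAbs * jacobiSym x m.natAbs = 1 := by
    rw [← pow_two]
    refine jacobiSym.sq_one ?_
    rw [← Int.isCoprime_iff_gcd_eq_one]
    rcases Int.natAbs_eq m with h2 | h2
    · rwa [← h2]
    · rw [show (m.natAbs : ℤ) = -m by omega]; exact hx.neg_right
  rw [h1, mul_one]

end SymBase

lemma pow_modEq_norm (h : GaussianInt) (a : ℕ) :
    ∃ y, h ^ (a + 1) = ((2 * h.re) ^ a : ℤ) * h + h.norm * y := by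
  induction a with
  | zero => exact ⟨0, by simp⟩
  | succ a ih =>
    obtain ⟨y, hy⟩ := ih
    refine ⟨y * h - ((2 * h.re) ^ a : ℤ), ?_⟩
    have h1 : h * h = (2 * h.re : ℤ) * h - h.norm := by
      ext <;> simp [Zsqrtd.norm_def] <;> ring
    rw [pow_succ, hy, add_mul, mul_assoc, h1]
    push_cast
    ring

namespace SymBase
variable {h : GaussianInt} {α : ℕ}

lemma jacobiSym_re (H : SymBase h α) : jacobiSym h.re h.norm.natAbs = 1 := by
  have := H.re_mod
  rw [H.jacobiSym_norm h.re 1 h.im (by omega) H.isCoprime.symm, jacobiSym.one_left]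
  exact Int.modEq_iff_dvd.2 ⟨-h.re, by rw [Zsqrtd.norm_def]; ring⟩

lemma jacobiSym_two (H : SymBase h α) : jacobiSym 2 h.norm.natAbs = 1 :=
  jacobiSym_two_of_mod_eight _ (Or.inl H.norm_mod_eight)

lemma jacobiSym_add (H : SymBase h α) : jacobiSym (h.re + h.im) h.norm.natAbs = 1 := by
  have hs := H.sum_mod
  rw [H.jacobiSym_norm (h.re + h.im) 2 h.re (by omega), jacobiSym_two_of_mod_eight _ hs]
  · obtain ⟨a, b, hab⟩ := H.isCoprime
    exact ⟨a - b, b, by linear_combination hab⟩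
  · exact Int.modEq_iff_dvd.2 ⟨h.re - h.im, by rw [Zsqrtd.norm_def]; ring⟩

lemma jacobiSym_sub (H : SymBase h α) : jacobiSym (h.re - h.im) h.norm.natAbs = 1 := by
  have hs := H.sum_mod
  have h4 := H.four_dvd
  rw [H.jacobiSym_norm (h.re - h.im) 2 h.re (by omega),
    jacobiSym_two_of_mod_eight _ (by omega)]
  · obtain ⟨a, b, hab⟩ := H.isCoprime
    exact ⟨a + b, -b, by linear_combination hab⟩
  · exact Int.modEq_iff_dvd.2 ⟨h.re + h.im, by rw [Zsqrtd.norm_def]; ring⟩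

lemma jacobiSym_symF_norm (H : SymBase h α) {t a : ℕ} (ht : t < 4) :
    jacobiSym (symF h t (a + 1)) h.norm.natAbs = 1 := by
  obtain ⟨y, hy⟩ := pow_modEq_norm h a
  have hre : (h ^ (a + 1)).re = (2 * h.re) ^ a * h.re + h.norm * y.re := by
    rw [hy]; generalize (2 * h.re) ^ a = c; simp
  have him : (h ^ (a + 1)).im = (2 * h.re) ^ a * h.im + h.norm * y.im := by
    rw [hy]; generalize (2 * h.re) ^ a = c; simp
  have hN0 := GaussianInt.norm_nonneg h
  have key : ∀ c d e : ℤ, c = (2 * h.re) ^ a * d + h.norm * e →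
      jacobiSym c h.norm.natAbs = jacobiSym d h.norm.natAbs := by
    intro c d e hc
    have h1 : jacobiSym c h.norm.natAbs = jacobiSym ((2 * h.re) ^ a * d) h.norm.natAbs := by
      apply jacobiSym.mod_left'
      rw [hc, Int.natCast_natAbs, abs_of_nonneg hN0, Int.add_mul_emod_self_left]
    rw [h1, jacobiSym.mul_left, jacobiSym.pow_left, jacobiSym.mul_left, H.jacobiSym_two,
      H.jacobiSym_re, one_mul, one_pow, one_mul]
  interval_cases t
  · have hv : jacobiSym h.im h.norm.natAbs = 1 := by
      rw [H.im_eq, jacobiSym.pow_left, H.jacobiSym_two, one_pow]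
    have h2 : h.im * symF h 0 (a + 1) = (h ^ (a + 1)).im :=
      Int.mul_ediv_cancel' (im_dvd_im_pow h _)
    have h3 := key _ _ _ him
    rwa [← h2, jacobiSym.mul_left, hv, one_mul] at h3
  · exact (key _ (h.re + h.im) (y.re + y.im) (by simp only [symF]; rw [hre, him]; ring)).trans
      H.jacobiSym_add
  · exact (key _ h.re y.re hre).trans H.jacobiSym_re
  · exact (key _ (h.re - h.im) (y.re - y.im) (by simp only [symF]; rw [hre, him]; ring)).trans
      H.jacobiSym_sub

lemma jacobiSym_norm_symF (H : SymBase h α) {t a : ℕ} (ht : SymValid t (a + 1)) :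
    jacobiSym h.norm (symF h t (a + 1)).natAbs = 1 := by
  have hN := H.norm_mod_eight
  have hN0 := GaussianInt.norm_nonneg h
  rw [jacobiSym_natAbs_swap _ _ (by omega) (H.symF_odd ht), if_neg (by omega), if_neg (by omega),
    H.jacobiSym_symF_norm ht.1]
  norm_num

end SymBase

lemma jacobiSym_two_ne {m : ℤ} (hm : m % 2 = 1) (k : ℕ) : jacobiSym (2 ^ k) m.natAbs ≠ 0 := by
  rw [jacobiSym.pow_left]
  refine pow_ne_zero _ (jacobiSym.ne_zero ?_)
  rw [← Int.isCoprime_iff_gcd_eq_one]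
  exact ⟨-((m.natAbs : ℤ) / 2), 1, by omega⟩

lemma jacobiSym_neg_one {m : ℤ} (hm : m % 2 = 1) :
    jacobiSym (-1) m.natAbs = if Xor (m < 0) (m % 4 = 3) then -1 else 1 := by
  rw [jacobiSym.at_neg_one (Nat.odd_iff.2 (by omega))]
  split_ifs with h
  · exact ZMod.χ₄_nat_three_mod_four (by rcases h with h | h <;> omega)
  · refine ZMod.χ₄_nat_one_mod_four ?_
    by_contra h1
    apply h
    by_cases h2 : m < 0
    · exact Or.inl ⟨h2, by omega⟩
    · exact Or.inr ⟨by omega, h2⟩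

lemma jacobiSym_congr {a b m : ℤ} (h : m ∣ a - b) : jacobiSym a m.natAbs = jacobiSym b m.natAbs := by
  apply jacobiSym.mod_left'
  exact (Int.modEq_iff_dvd.2 ((Int.natAbs_dvd.2 ((dvd_sub_comm).1 h))))

lemma dir_sq {s : ℕ} (hs : s < 4) : dir s ^ 2 = ((dir s).norm : GaussianInt) * ⟨0, 1⟩ ^ s := by
  interval_cases s <;> decide

lemma norm_dir {s : ℕ} (hs : s < 4) : (dir s).norm = if s % 2 = 0 then 1 else 2 := by
  interval_cases s <;> decide

lemma normPow (h : GaussianInt) (k : ℕ) : (h ^ k).norm = h.norm ^ k :=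
  map_pow (Zsqrtd.normMonoidHom (d := -1)) h k

lemma dvd_im_sub (m n k : ℤ) (z y w : GaussianInt) (hz : k * z = n * w + m * y) :
    m ∣ k * z.im - n * w.im := by
  have h1 := congrArg Zsqrtd.im hz
  simp only [Zsqrtd.im_add, Zsqrtd.im_smul] at h1
  exact ⟨y.im, by linarith⟩

namespace SymBase
variable {h : GaussianInt} {α : ℕ}

/-- The norm of `dir s` is `1` or `2`, the latter for odd `s`, when `symF h s b ≡ ± 1 (mod 8)`. -/
lemma jacobiSym_dir (H : SymBase h α) {s b : ℕ} (hs : SymValid s (b + 1)) :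
    jacobiSym (dir s).norm (symF h s (b + 1)).natAbs = 1 := by
  rw [norm_dir hs.1]
  split_ifs with h1
  · exact jacobiSym.one_left _
  · exact jacobiSym_two_of_mod_eight _ (H.symF_mod_eight hs.1 (by omega))

lemma jacobiSym_norm_w (H : SymBase h α) {s b : ℕ} (hs : SymValid s (b + 1)) :
    jacobiSym (dir s * h ^ (b + 1)).norm (symF h s (b + 1)).natAbs = 1 := by
  rw [Zsqrtd.norm_mul, normPow, jacobiSym.mul_left, jacobiSym.pow_left, H.jacobiSym_dir hs,
    H.jacobiSym_norm_symF hs]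
  simp

/-- Reduction of the exponent modulo `2 b`, the remainder being taken nonnegative. -/
lemma step_add (H : SymBase h α) {s b : ℕ} (hs : SymValid s (b + 1)) (τ q a : ℕ) :
    jacobiSym (dir (τ + 2 * (s * q)) * h ^ (2 * (b + 1) * q + a)).im (symF h s (b + 1)).natAbs =
      jacobiSym (dir τ * h ^ a).im (symF h s (b + 1)).natAbs := by
  set m := symF h s (b + 1) with hm
  set w := dir s * h ^ (b + 1) with hw
  obtain ⟨y, hy⟩ := pow_two_mul_modEq w m (by rw [hw, im_dir_mul h s _ hs.1]; exact Dvd.intro_left _ rfl) q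
  have h1 : m ∣ ((dir s).norm ^ q * (dir (τ + 2 * (s * q)) * h ^ (2 * (b + 1) * q + a)).im) -
      w.norm ^ q * (dir τ * h ^ a).im := by
    have h2 : (((dir s).norm ^ q : ℤ) : GaussianInt) * (dir (τ + 2 * (s * q)) *
        h ^ (2 * (b + 1) * q + a)) = (w.norm ^ q : ℤ) * (dir τ * h ^ a) + m * (y * (dir τ * h ^ a)) := by
      have h3 : w ^ (2 * q) = ((dir s).norm : GaussianInt) ^ q * ⟨0, 1⟩ ^ (s * q) *
          h ^ (2 * (b + 1) * q) := by
        rw [hw, pow_mul, mul_pow, dir_sq hs.1]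
        ring
      rw [dir_add, pow_add]
      push_cast
      linear_combination (dir τ * h ^ a) * (hy - h3)
    exact dvd_im_sub m _ _ _ _ _ h2
  have h2 := jacobiSym_congr h1
  rwa [jacobiSym.mul_left, jacobiSym.mul_left, jacobiSym.pow_left, jacobiSym.pow_left,
    H.jacobiSym_dir hs, H.jacobiSym_norm_w hs, one_pow, one_mul, one_mul] at h2

/-- Reduction of the exponent modulo `2 b`, the remainder being taken nonpositive. -/
lemma step_sub (H : SymBase h α) {s b : ℕ} (hs : SymValid s (b + 1)) (τ q a a₂ : ℕ) (hτ : τ ≤ 8)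
    (ha : a + a₂ = 2 * (b + 1) * q) :
    jacobiSym (dir (τ + 2 * (s * q)) * h ^ a).im (symF h s (b + 1)).natAbs =
      jacobiSym (-1) (symF h s (b + 1)).natAbs *
      jacobiSym (dir (8 - τ) * h ^ a₂).im (symF h s (b + 1)).natAbs := by
  set m := symF h s (b + 1) with hm
  set w := dir s * h ^ (b + 1) with hw
  obtain ⟨y, hy⟩ := pow_two_mul_modEq w m (by rw [hw, im_dir_mul h s _ hs.1]; exact Dvd.intro_left _ rfl) q
  have h1 : m ∣ ((dir s).norm ^ q * h.norm ^ a₂) * (dir (τ + 2 * (s * q)) * h ^ a).im -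
      w.norm ^ q * (star (dir (8 - τ) * h ^ a₂)).im := by
    refine dvd_im_sub m _ _ _ (y * star (dir (8 - τ) * h ^ a₂)) _ ?_
    have h3 : w ^ (2 * q) = ((dir s).norm : GaussianInt) ^ q * ⟨0, 1⟩ ^ (s * q) *
        h ^ (2 * (b + 1) * q) := by
      rw [hw, pow_mul, mul_pow, dir_sq hs.1]
      ring
    have h4 : star (dir (8 - τ) * h ^ a₂) = dir τ * star h ^ a₂ := by
      rw [← star_dir τ hτ, star_mul, star_star, star_pow, mul_comm]
    have h5 : (h.norm : GaussianInt) ^ a₂ * h ^ a = h ^ (2 * (b + 1) * q) * star h ^ a₂ := by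
      rw [Zsqrtd.norm_eq_mul_conj, ← ha, mul_pow, pow_add]; ring
    rw [h4, dir_add]
    push_cast
    linear_combination (dir τ * star h ^ a₂) * (hy - h3) +
      ((dir s).norm : GaussianInt) ^ q * ⟨0, 1⟩ ^ (s * q) * dir τ * h5
  have h2 := jacobiSym_congr h1
  rw [jacobiSym.mul_left, jacobiSym.mul_left, jacobiSym.mul_left, jacobiSym.pow_left,
    jacobiSym.pow_left, jacobiSym.pow_left,
    H.jacobiSym_dir hs, H.jacobiSym_norm_w hs, H.jacobiSym_norm_symF hs, one_pow, one_pow, one_mul,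
    one_mul, one_mul, Zsqrtd.im_star, neg_eq_neg_one_mul (dir (8 - τ) * h ^ a₂).im, jacobiSym.mul_left] at h2
  exact h2

end SymBase

/-- The sign attached to a bit. -/
def pm (b : Bool) : ℤ := if b then -1 else 1

lemma pm_xor (a b : Bool) : pm (a ^^ b) = pm a * pm b := by cases a <;> cases b <;> rfl

lemma pm_mul_self (a : Bool) : pm a * pm a = 1 := by cases a <;> rfl

namespace SymBase
variable {h : GaussianInt} {α : ℕ}

lemma jacobiSym_symC_ne (H : SymBase h α) {m : ℤ} (hm : m % 2 = 1) (t : ℕ) :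
    jacobiSym (symC h t) m.natAbs ≠ 0 := by
  unfold symC
  split_ifs
  · rw [H.im_eq]; exact jacobiSym_two_ne hm _
  · simp

lemma jacobiSym_symC (H : SymBase h α) {s b : ℕ} (hs : SymValid s (b + 1)) (t t' : ℕ)
    (ht : s % 2 = 0 → (t = 0 ↔ t' = 0)) :
    jacobiSym (symC h t) (symF h s (b + 1)).natAbs =
      jacobiSym (symC h t') (symF h s (b + 1)).natAbs := by
  rcases Nat.mod_two_eq_zero_or_one s with h1 | h1
  · simp only [symC, ht h1]
  · have h2 : ∀ t, jacobiSym (symC h t) (symF h s (b + 1)).natAbs = 1 := by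
      intro t
      unfold symC
      split_ifs
      · rw [H.im_eq, jacobiSym.pow_left,
          jacobiSym_two_of_mod_eight _ (H.symF_mod_eight hs.1 h1), one_pow]
      · simp
    rw [h2, h2]

lemma pm_jacobiSym_neg_one (H : SymBase h α) {s b : ℕ} (hs : SymValid s b) :
    jacobiSym (-1) (symF h s b).natAbs =
      pm (decide (symF h s b < 0) ^^ decide (s = 0 ∧ b % 4 = 3)) := by
  rw [jacobiSym_neg_one (H.symF_odd hs)]
  have h1 := H.symF_mod_four hs
  have h2 : symF h s b % 4 = 3 ↔ (s = 0 ∧ b % 4 = 3) := by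
    split_ifs at h1 with h3
    · exact ⟨fun _ => h3, fun _ => h1⟩
    · exact ⟨fun h4 => absurd (h4.symm.trans h1) (by norm_num), fun h4 => absurd h4 h3⟩
  simp only [← h2]
  generalize symF h s b = F
  by_cases h3 : F < 0 <;> by_cases h4 : F % 4 = 3 <;> simp only [h3, h4, pm, Xor] <;> simp

/-- Rewriting the symbol of an imaginary part as that of the corresponding `symF`. -/
lemma reduce_dir (H : SymBase h α) {s b : ℕ} (hs : SymValid s (b + 1)) {t a τ a' : ℕ} {ε : ℤ}
    (ht : t < 4) (hτ : τ < 8) (hst : s % 2 = 0 → τ % 4 = t ∨ τ % 4 + t = 4)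
    (hX : jacobiSym (dir t * h ^ a).im (symF h s (b + 1)).natAbs =
      ε * jacobiSym (dir τ * h ^ a').im (symF h s (b + 1)).natAbs) :
    jacobiSym (symF h t a) (symF h s (b + 1)).natAbs =
      ε * (if 4 ≤ τ then jacobiSym (-1) (symF h s (b + 1)).natAbs else 1) *
      jacobiSym (symF h (τ % 4) a') (symF h s (b + 1)).natAbs := by
  have h0 := H.jacobiSym_symC_ne (H.symF_odd hs) t
  have h1 : jacobiSym (dir τ * h ^ a').im (symF h s (b + 1)).natAbs =
      (if 4 ≤ τ then jacobiSym (-1) (symF h s (b + 1)).natAbs else 1) *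
      jacobiSym (dir (τ % 4) * h ^ a').im (symF h s (b + 1)).natAbs := by
    split_ifs with h2
    · obtain ⟨k, rfl⟩ : ∃ k, τ = k + 4 := ⟨τ - 4, by omega⟩
      rw [dir_four_add, show (k + 4) % 4 = k by omega, neg_mul, Zsqrtd.im_neg,
        neg_eq_neg_one_mul (dir k * h ^ a').im, jacobiSym.mul_left]
    · rw [one_mul, Nat.mod_eq_of_lt (by omega : τ < 4)]
  rw [h1, im_dir_mul h t a ht, im_dir_mul h (τ % 4) a' (by omega), jacobiSym.mul_left,
    jacobiSym.mul_left, H.jacobiSym_symC hs (τ % 4) t (by omega)] at hX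
  refine mul_left_cancel₀ h0 (hX.trans ?_)
  ring

/-- Reduction of the exponent modulo `2 (b + 1)`, for `symF`, the remainder being taken nonnegative. -/
lemma step_pos (H : SymBase h α) {s b : ℕ} (hs : SymValid s (b + 1)) {t a : ℕ} (ht : t < 4)
    (q a' τ : ℕ) (ha : a = 2 * (b + 1) * q + a') (hτ : τ = (t + 6 * (s * q)) % 8) :
    jacobiSym (symF h t a) (symF h s (b + 1)).natAbs =
      1 * (if 4 ≤ τ then jacobiSym (-1) (symF h s (b + 1)).natAbs else 1) *
      jacobiSym (symF h (τ % 4) a') (symF h s (b + 1)).natAbs := by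
  refine H.reduce_dir hs ht (by omega) ?_ ?_
  · intro h1
    obtain ⟨k, rfl⟩ : ∃ k, s = 2 * k := ⟨s / 2, by omega⟩
    rw [mul_assoc 2 k q] at hτ
    omega
  · rw [one_mul, ← H.step_add hs τ q a', ← ha, ← dir_mod (τ + 2 * (s * q)),
      show (τ + 2 * (s * q)) % 8 = t by omega]

/-- Reduction of the exponent modulo `2 (b + 1)`, for `symF`, the remainder being taken nonpositive. -/
lemma step_neg (H : SymBase h α) {s b : ℕ} (hs : SymValid s (b + 1)) {t a : ℕ} (ht : t < 4)
    (q a' τ : ℕ) (ha : a + a' = 2 * (b + 1) * q) (hτ : τ = (8 - (t + 6 * (s * q)) % 8) % 8) :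
    jacobiSym (symF h t a) (symF h s (b + 1)).natAbs =
      jacobiSym (-1) (symF h s (b + 1)).natAbs *
        (if 4 ≤ τ then jacobiSym (-1) (symF h s (b + 1)).natAbs else 1) *
      jacobiSym (symF h (τ % 4) a') (symF h s (b + 1)).natAbs := by
  refine H.reduce_dir hs ht (by omega) ?_ ?_
  · intro h1
    obtain ⟨k, rfl⟩ : ∃ k, s = 2 * k := ⟨s / 2, by omega⟩
    rw [mul_assoc 2 k q] at hτ
    omega
  · have h1 := H.step_sub hs ((t + 6 * (s * q)) % 8) q a a' (by omega) ha
    rw [← dir_mod ((t + 6 * (s * q)) % 8 + 2 * (s * q)),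
      show ((t + 6 * (s * q)) % 8 + 2 * (s * q)) % 8 = t by omega,
      ← dir_mod (8 - (t + 6 * (s * q)) % 8), ← hτ] at h1
    exact h1

end SymBase

/-! ### An algorithm for the Jacobi symbols -/

/-- `force n f = f n`; matching on `n` makes the kernel evaluate `n` first. -/
def force {β : Type} (n : ℕ) (f : ℕ → β) : β :=
  match n with
  | 0 => f 0
  | k + 1 => f (Nat.succ k)

@[simp] lemma force_eq {β : Type} (n : ℕ) (f : ℕ → β) : force n f = f n := by cases n <;> rfl

lemma natBeq (a b : ℕ) : Nat.beq a b = decide (a = b) := by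
  rw [Bool.eq_iff_iff, decide_eq_true_iff]
  exact ⟨Nat.eq_of_beq_eq_true, fun h => h ▸ Nat.beq_refl a⟩

lemma natBle (a b : ℕ) : Nat.ble a b = decide (a ≤ b) := by
  rw [Bool.eq_iff_iff, decide_eq_true_iff]
  exact iff_of_eq Nat.ble_eq

/-- The positions at which `|symF h s b| ≡ 3 (mod 4)`. -/
def symM (neg : ℕ → ℕ → ℕ) (all b s : ℕ) : ℕ :=
  bif Nat.beq s 0 && Nat.beq (b % 4) 3 then neg b s ^^^ all else neg b s

/-- Reciprocity step. -/
def symSwap (neg : ℕ → ℕ → ℕ) (all : ℕ) (rec : ℕ → ℕ → ℕ → ℕ → ℕ → ℕ) (a t b s r : ℕ) : ℕ :=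
  bif Nat.beq a 0 then r else bif Nat.beq a 1 && Nat.beq t 0 then r else
    force a fun a => force t fun t =>
      force (r ^^^ (neg a t &&& neg b s) ^^^
        (bif Nat.beq t 0 && Nat.beq s 0 && Nat.beq (a % 4) 3 && Nat.beq (b % 4) 3 then all else 0))
        fun r => rec b s a t r

/-- Normalization of the direction. -/
def symFold (neg : ℕ → ℕ → ℕ) (all : ℕ) (rec : ℕ → ℕ → ℕ → ℕ → ℕ → ℕ) (a t b s r : ℕ) : ℕ :=
  bif Nat.ble 4 t then symSwap neg all rec a (t % 4) b s (r ^^^ symM neg all b s)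
  else symSwap neg all rec a (t % 4) b s r

/-- Euclidean algorithm for the Jacobi symbol of `symF h t a` modulo `symF h s b`, run in parallel
on a family of intervals containing the argument of `h`; bit `i` of a number belongs to the
`i`-th interval. -/
def sym (neg : ℕ → ℕ → ℕ) (all : ℕ) : ℕ → ℕ → ℕ → ℕ → ℕ → ℕ → ℕ
  | 0, _, _, _, _, _ => 0
  | f + 1, a, t, b, s, r =>
    bif Nat.beq b 1 && Nat.beq s 0 then r else
    force ((a + b) % (2 * b)) fun a₁ => force ((t + 6 * (s * ((a + b) / (2 * b)))) % 8) fun t₁ =>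
      bif Nat.beq a₁ 0 then 0 else
      bif Nat.ble b a₁ then symFold neg all (sym neg all f) (a₁ - b) t₁ b s r
      else symFold neg all (sym neg all f) (b - a₁) ((8 - t₁) % 8) b s (r ^^^ symM neg all b s)

/-- The oracle `neg`, `all` describes the signs of `symF h t a` at bit `i`. -/
structure SignOracle (h : GaussianInt) (neg : ℕ → ℕ → ℕ) (all B i : ℕ) : Prop where
  all : all.testBit i = true
  neg : ∀ t a, SymValid t a → a ≤ B → (neg a t).testBit i = decide (symF h t a < 0)

section
variable {h : GaussianInt} {α : ℕ} {neg : ℕ → ℕ → ℕ} {all B i : ℕ}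

lemma testBit_symM (H : SymBase h α) (O : SignOracle h neg all B i) {s b : ℕ} (hs : SymValid s b)
    (hb : b ≤ B) : pm ((symM neg all b s).testBit i) = jacobiSym (-1) (symF h s b).natAbs := by
  rw [H.pm_jacobiSym_neg_one hs]
  simp only [symM, natBeq, ← Bool.decide_and, Bool.cond_decide]
  congr 1
  split_ifs with h1
  · rw [Nat.testBit_xor, O.all, O.neg s b hs hb, decide_eq_true h1]
  · rw [O.neg s b hs hb, decide_eq_false h1, Bool.xor_false]

/-- What a bit of the output of the algorithm asserts. -/
def SymSound (h : GaussianInt) (B i : ℕ) (rec : ℕ → ℕ → ℕ → ℕ → ℕ → ℕ) : Prop :=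
  ∀ a t b s r, SymValid t a → SymValid s b → 1 ≤ b → b ≤ B → (rec a t b s r).testBit i = true →
    pm (r.testBit i) * jacobiSym (symF h t a) (symF h s b).natAbs = -1

lemma symSwap_sound (H : SymBase h α) (O : SignOracle h neg all B i)
    {rec : ℕ → ℕ → ℕ → ℕ → ℕ → ℕ} (hrec : SymSound h B i rec) (a t b s r : ℕ) (ht : SymValid t a)
    (hs : SymValid s b) (hb : b ≤ B) (ha : a ≤ b)
    (hr : (symSwap neg all rec a t b s r).testBit i = true) :
    pm (r.testBit i) * jacobiSym (symF h t a) (symF h s b).natAbs = -1 := by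
  have key : symF h t a = 1 → r.testBit i = true → 
      pm (r.testBit i) * jacobiSym (symF h t a) (symF h s b).natAbs = -1 := by
    intro h1 h2
    rw [h1, h2, jacobiSym.one_left]; rfl
  simp only [symSwap, natBeq, ← Bool.decide_and, Bool.cond_decide, force_eq] at hr
  split_ifs at hr with h0 h1 h2
  · subst h0
    refine key ?_ hr
    obtain ⟨h1, h2⟩ := ht
    interval_cases t <;> simp_all [symF]
  · refine key ?_ hr
    rw [h1.1, h1.2]
    simp [symF, H.im_pos.ne']
  all_goals
    have h3 := hrec _ _ _ _ _ hs ht (by omega) (by omega) hr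
    refine Eq.trans ?_ h3
    rw [jacobiSym_natAbs_swap _ _ (H.symF_odd ht) (H.symF_odd hs)]
    have h4 := H.symF_mod_four ht
    have h5 := H.symF_mod_four hs
    simp only [Nat.testBit_xor, Nat.testBit_and, O.all, O.neg t a ht (ha.trans hb), O.neg s b hs hb,
      pm_xor, Nat.zero_testBit, ← Bool.decide_and]
  · have h6 : symF h t a % 4 = 3 ∧ symF h s b % 4 = 3 := by
      rw [h4, h5, if_pos ⟨h2.1.1.1, h2.1.2⟩, if_pos ⟨h2.1.1.2, h2.2⟩]; simp
    rw [if_pos h6]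
    simp only [pm, decide_eq_true_eq, if_true]
    ring
  · have h6 : ¬(symF h t a % 4 = 3 ∧ symF h s b % 4 = 3) := by
      rw [h4, h5]
      split_ifs with h6 h7 <;> simp
      exact h2 ⟨⟨⟨h6.1, h7.1⟩, h6.2⟩, h7.2⟩
    rw [if_neg h6]
    simp only [pm, decide_eq_true_eq, Bool.false_eq_true, if_false]
    ring

lemma symFold_sound (H : SymBase h α) (O : SignOracle h neg all B i)
    {rec : ℕ → ℕ → ℕ → ℕ → ℕ → ℕ} (hrec : SymSound h B i rec) (a t b s r : ℕ)
    (ht : SymValid (t % 4) a) (htt : t < 8)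
    (hs : SymValid s b) (hb : b ≤ B) (ha : a ≤ b)
    (hr : (symFold neg all rec a t b s r).testBit i = true) :
    pm (r.testBit i) * ((if 4 ≤ t then jacobiSym (-1) (symF h s b).natAbs else 1) *
      jacobiSym (symF h (t % 4) a) (symF h s b).natAbs) = -1 := by
  simp only [symFold, natBle, Bool.cond_decide] at hr
  split_ifs at hr ⊢ with h1
  · have h2 := symSwap_sound H O hrec _ _ _ _ _ ht hs hb ha hr
    rw [Nat.testBit_xor, pm_xor, testBit_symM H O hs hb] at h2
    exact Eq.trans (by ring) h2
  · rw [one_mul]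
    exact symSwap_sound H O hrec _ _ _ _ _ ht hs hb ha hr

lemma sym_sound (H : SymBase h α) (O : SignOracle h neg all B i) (f : ℕ) :
    SymSound h B i (sym neg all f) := by
  induction f with
  | zero => intro a t b s r _ _ _ _ hr; simp [sym] at hr
  | succ f ih =>
    intro a t b s r ht hs hb1 hb hr
    simp only [sym, natBeq, natBle, ← Bool.decide_and, Bool.cond_decide, force_eq] at hr
    obtain ⟨b, rfl⟩ : ∃ c, b = c + 1 := ⟨b - 1, by omega⟩
    set q := (a + (b + 1)) / (2 * (b + 1)) with hq
    set a₁ := (a + (b + 1)) % (2 * (b + 1)) with ha₁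
    have hdiv : 2 * (b + 1) * q + a₁ = a + (b + 1) := Nat.div_add_mod _ _
    have hlt : a₁ < 2 * (b + 1) := Nat.mod_lt _ (by omega)
    have hpar : a % 2 = (a₁ + (b + 1)) % 2 := by
      have h1 : 2 * (b + 1) * q = 2 * ((b + 1) * q) := by ring
      omega
    have ht4 := ht.1
    split_ifs at hr with h1 h2 h3
    · have h2 : symF h s (b + 1) = 1 := by
        rw [h1.1, h1.2]; simp [symF, H.im_pos.ne']
      rw [h2, hr]
      simp [pm]
    · simp at hr
    · have hv : SymValid ((t + 6 * (s * q)) % 8 % 4) (a₁ - (b + 1)) := by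
        refine ⟨by omega, fun h4 => ?_⟩
        have := ht.2 (by omega)
        omega
      rw [H.step_pos hs ht4 q (a₁ - (b + 1)) _ (by omega) rfl, one_mul]
      exact symFold_sound H O ih _ _ _ _ _ hv (by omega) hs hb (by omega) hr
    · have hv : SymValid ((8 - (t + 6 * (s * q)) % 8) % 8 % 4) (b + 1 - a₁) := by
        refine ⟨by omega, fun h4 => ?_⟩
        have := ht.2 (by omega)
        omega
      have h4 := symFold_sound H O ih _ _ _ _ _ hv (by omega) hs hb (by omega) hr
      rw [Nat.testBit_xor, pm_xor, testBit_symM H O hs hb] at h4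
      rw [H.step_neg hs ht4 q (b + 1 - a₁) _ (by omega) rfl]
      exact Eq.trans (by ring) h4

end

open Complex in
lemma dir_polar {t : ℕ} (ht : t < 4) :
    ∃ ρ : ℝ, 0 < ρ ∧ ((dir t : GaussianInt) : ℂ) = ρ * exp ((t / 4 * Real.pi : ℝ) * I) := by
  have h4 : exp ((1 / 4 * Real.pi : ℝ) * I) = (√2 / 2 : ℝ) * (1 + I) := by
    rw [exp_mul_I, ← ofReal_cos, ← ofReal_sin, show 1 / 4 * Real.pi = Real.pi / 4 by ring,
      Real.cos_pi_div_four, Real.sin_pi_div_four]; ring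
  have h2 : exp ((2 / 4 * Real.pi : ℝ) * I) = I := by
    rw [exp_mul_I, ← ofReal_cos, ← ofReal_sin, show 2 / 4 * Real.pi = Real.pi / 2 by ring,
      Real.cos_pi_div_two, Real.sin_pi_div_two]; simp
  have h3 : exp ((3 / 4 * Real.pi : ℝ) * I) = I * ((√2 / 2 : ℝ) * (1 + I)) := by
    calc _ = exp ((2 / 4 * Real.pi : ℝ) * I) * exp ((1 / 4 * Real.pi : ℝ) * I) := by
          rw [← exp_add]; congr 1; push_cast; ring
      _ = _ := by rw [h2, h4]
  have hs : √2 * (√2 / 2) = 1 := by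
    rw [mul_div_assoc', Real.mul_self_sqrt (by norm_num)]; norm_num
  have hs' : (√2 : ℂ) * ((√2 / 2 : ℝ) : ℂ) = 1 := by exact_mod_cast hs
  have hd : ∀ z : GaussianInt, (z : ℂ) = z.re + z.im * I := GaussianInt.toComplex_def
  interval_cases t
  · exact ⟨1, one_pos, by simp [dir]⟩
  · refine ⟨√2, by positivity, ?_⟩
    rw [Nat.cast_one, h4, ← mul_assoc, hs', hd, show (dir 1) = ⟨1, 1⟩ by decide]; simp
  · refine ⟨1, one_pos, ?_⟩
    rw [Nat.cast_ofNat, h2, hd, show (dir 2) = ⟨0, 1⟩ by decide]; simp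
  · refine ⟨√2, by positivity, ?_⟩
    rw [Nat.cast_ofNat, h3, hd, show (dir 3) = ⟨-1, 1⟩ by decide]
    linear_combination (-I * (1 + I)) * hs' - I_mul_I

lemma sin_sign (k : ℕ) (x : ℝ) (h1 : k ≤ x) (h2 : x ≤ k + 1) : 0 ≤ (-1) ^ k * Real.sin (x * Real.pi) := by
  have h3 : Real.sin (x * Real.pi) = (-1) ^ k * Real.sin ((x - k) * Real.pi) := by
    rw [show x * Real.pi = (x - k) * Real.pi + k * Real.pi by ring, Real.sin_add_nat_mul_pi]
  rw [h3, ← mul_assoc, ← mul_pow]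
  have h4 : 0 ≤ Real.sin ((x - k) * Real.pi) := by
    apply Real.sin_nonneg_of_nonneg_of_le_pi
    · exact mul_nonneg (by linarith) Real.pi_pos.le
    · have := Real.pi_pos
      nlinarith
  simpa using h4

open Complex in
/-- The sign of `symF h t a` is that of `sin (a arg h + t π / 4)`, so it only depends on `arg h` being in
a given interval between consecutive multiples of `π / (4 a)`. -/
lemma SymBase.decide_symF_neg {h : GaussianInt} {α : ℕ} (H : SymBase h α) {t a : ℕ}
    (ht : SymValid t a) (n : ℕ) (h1 : n ≤ 4 * a * ((h : ℂ).arg / Real.pi))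
    (h2 : 4 * a * ((h : ℂ).arg / Real.pi) < n + 1) :
    decide (symF h t a < 0) = decide ((n + t) / 4 % 2 = 1) := by
  obtain ⟨ρ, hρ, hd⟩ := dir_polar ht.1
  set y := (h : ℂ).arg / Real.pi with hy
  have hpi := Real.pi_pos
  have hh0 : (h : ℂ) ≠ 0 := by
    intro h0
    have := GaussianInt.intCast_im h
    rw [h0] at this
    have := H.im_pos
    simp_all
  have hC : 0 < symC h t := by
    unfold symC; split_ifs
    · exact H.im_pos
    · exact one_pos
  have him : (((dir t * h ^ a : GaussianInt) : ℂ)).im =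
      ρ * ‖(h : ℂ)‖ ^ a * Real.sin ((a * y + t / 4) * Real.pi) := by
    rw [GaussianInt.toComplex_mul, map_pow, hd]
    conv_lhs => rw [← norm_mul_exp_arg_mul_I (h : ℂ), mul_pow, ← exp_nat_mul]
    rw [show (ρ : ℂ) * exp ((t / 4 * Real.pi : ℝ) * I) * (‖(h : ℂ)‖ ^ a * exp (a * ((h : ℂ).arg * I)))
      = ((ρ * ‖(h : ℂ)‖ ^ a : ℝ) : ℂ) * exp (((a * y + t / 4) * Real.pi : ℝ) * I) by
        rw [show ((((a * y + t / 4) * Real.pi : ℝ) : ℂ) * I) =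
          ((t / 4 * Real.pi : ℝ) * I) + (a * ((h : ℂ).arg * I)) by
            rw [hy]; push_cast; field_simp; ring, exp_add]
        push_cast; ring]
    rw [im_ofReal_mul, exp_ofReal_mul_I_im]
  rw [← GaussianInt.intCast_im, im_dir_mul h t a ht.1] at him
  have hodd := H.symF_odd ht
  set k := (n + t) / 4 with hk
  have hk1 : 4 * k ≤ n + t := by omega
  have hk2 : n + t + 1 ≤ 4 * k + 4 := by omega
  have hk1' : 4 * (k : ℝ) ≤ n + t := by exact_mod_cast hk1
  have hk2' : (n : ℝ) + t + 1 ≤ 4 * k + 4 := by exact_mod_cast hk2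
  have hsin := sin_sign k (a * y + t / 4) (by linarith) (by linarith)
  have hpos : 0 < ρ * ‖(h : ℂ)‖ ^ a := mul_pos hρ (pow_pos (norm_pos_iff.2 hh0) _)
  have h3 : 0 ≤ (-1 : ℝ) ^ k * ((symC h t * symF h t a : ℤ) : ℝ) := by
    rw [him]; nlinarith
  have h4 : 0 ≤ (-1 : ℤ) ^ k * (symC h t * symF h t a) := by exact_mod_cast h3
  have h5 : 0 ≤ (-1 : ℤ) ^ k * symF h t a := by
    refine nonneg_of_mul_nonneg_right (a := symC h t) ?_ hC
    linarith
  rw [decide_eq_decide]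
  rcases Nat.mod_two_eq_zero_or_one k with h6 | h6
  · rw [(Nat.even_iff.2 h6).neg_one_pow] at h5
    omega
  · rw [(Nat.odd_iff.2 h6).neg_one_pow] at h5
    omega

/-- The numbers `f 0, …, f (n - 1)` as digits to the base `2 ^ w`, in front of `T`. -/
def packTab (w : ℕ) (f : ℕ → ℕ) : ℕ → ℕ → ℕ
  | 0, T => T
  | c + 1, T => force (Nat.lor (Nat.shiftLeft T w) (f c)) fun T => packTab w f c T

lemma testBit_packTab {w : ℕ} {f : ℕ → ℕ} (hf : ∀ c i, w ≤ i → (f c).testBit i = false)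
    (n T c i : ℕ) (hi : i < w) : (packTab w f n T).testBit (w * c + i) =
      if c < n then (f c).testBit i else T.testBit (w * (c - n) + i) := by
  induction n generalizing T with
  | zero => simp [packTab]
  | succ n ih =>
    rw [packTab, force_eq, ih]
    have h0 : (Nat.lor (Nat.shiftLeft T w) (f n)) = (T <<< w) ||| f n := rfl
    rcases lt_trichotomy c n with h | h | h
    · rw [if_pos h, if_pos (by omega)]
    · subst h
      rw [if_neg (by omega), if_pos (by omega), h0, Nat.testBit_or, Nat.testBit_shiftLeft]
      simp [hi]
    · obtain ⟨d, rfl⟩ : ∃ d, c = n + 1 + d := ⟨c - (n + 1), by omega⟩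
      rw [if_neg (by omega), if_neg (by omega), h0, Nat.testBit_or, Nat.testBit_shiftLeft,
        hf n _ (by nlinarith [show 1 ≤ n + 1 + d - n by omega])]
      have h1 : w * (n + 1 + d - n) + i = w + (w * (n + 1 + d - (n + 1)) + i) := by
        rw [show n + 1 + d - n = d + 1 by omega, show n + 1 + d - (n + 1) = d by omega]; ring
      rw [h1]
      simp

/-- The sign of `symF h t a`, as a function of a position `i < 4 Q` encoding `arg h`; the breakpoint
`arg h = π n / (4 a)` has position `⌊Q n / a⌋`. -/
def negRow (Q all a t : ℕ) : ℕ → ℕ → ℕ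
  | 0, acc => acc
  | j + 1, acc => force (Nat.xor (Nat.xor acc all) (Nat.sub (Nat.pow 2
      (Nat.div (Nat.mul Q (Nat.sub (Nat.mul 4 (Nat.succ j)) t)) a)) 1))
      fun acc => negRow Q all a t j acc

lemma negRow_succ (Q all a t j acc : ℕ) : negRow Q all a t (j + 1) acc =
    negRow Q all a t j (acc ^^^ all ^^^ (2 ^ (Q * (4 * (j + 1) - t) / a) - 1)) := by
  rw [negRow, force_eq]; rfl

/-- `i` is the position of the largest breakpoint not exceeding `y`. -/
def IsPos (B : ℕ) (y : ℝ) (i : ℕ) : Prop :=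
  i < 4 * (B * B) ∧ ∀ a n : ℕ, 1 ≤ a → a ≤ B → (B * B * n / a ≤ i ↔ (n : ℝ) ≤ 4 * a * y)

/-- Distinct fractions `n / a` with `a ≤ B` are at distance at least `1 / B ^ 2`, so their order is
reflected by `⌊B ^ 2 n / a⌋`. -/
lemma exists_isPos {B : ℕ} (hB : 1 ≤ B) {y : ℝ} (h0 : 0 ≤ y) (h1 : y < 1) : ∃ i, IsPos B y i := by
  classical
  let P : ℕ → Prop := fun i => ∃ a n : ℕ, 1 ≤ a ∧ a ≤ B ∧ (n : ℝ) ≤ 4 * a * y ∧ i = B * B * n / a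
  have hbd : ∀ i, P i → i < 4 * (B * B) := by
    rintro i ⟨a, n, ha, haB, hn, rfl⟩
    have ha' : (0 : ℝ) < a := by exact_mod_cast ha
    have h2 : (n : ℝ) < (4 * a : ℕ) := by push_cast; nlinarith
    have h3 : n < 4 * a := by exact_mod_cast h2
    rw [Nat.div_lt_iff_lt_mul ha]
    have : 0 < B * B := by positivity
    nlinarith
  have hP0 : P 0 := ⟨1, 0, le_rfl, hB, by simpa using h0, by simp⟩
  have hs : P (Nat.findGreatest P (4 * (B * B))) := Nat.findGreatest_spec (Nat.zero_le _) hP0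
  refine ⟨Nat.findGreatest P (4 * (B * B)), hbd _ hs, fun a n ha haB => ⟨fun hle => ?_, fun h => ?_⟩⟩
  · obtain ⟨a₀, n₀, ha₀, haB₀, hn₀, he⟩ := hs
    rw [he] at hle
    by_contra hlt
    push Not at hlt
    have ha' : (0 : ℝ) < a := by exact_mod_cast ha
    have ha₀' : (0 : ℝ) < a₀ := by exact_mod_cast ha₀
    have h2 : ((n₀ * a : ℕ) : ℝ) < (n * a₀ : ℕ) := by
      push_cast
      nlinarith
    have h3 : n₀ * a < n * a₀ := by exact_mod_cast h2
    have h4 : B * B * n₀ / a₀ + 1 ≤ B * B * n / a := by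
      rw [Nat.le_div_iff_mul_le ha]
      have h5 : B * B * n₀ / a₀ * a₀ ≤ B * B * n₀ := Nat.div_mul_le_self _ _
      have h6 : a * a₀ ≤ B * B := Nat.mul_le_mul haB haB₀
      have h7 : B * B * n₀ / a₀ * a₀ * a ≤ B * B * n₀ * a := Nat.mul_le_mul_right _ h5
      have h8 : B * B * (n₀ * a + 1) ≤ B * B * (n * a₀) := Nat.mul_le_mul_left _ h3
      have h9 : (B * B * n₀ / a₀ + 1) * a * a₀ ≤ B * B * n * a₀ := by nlinarith
      exact Nat.le_of_mul_le_mul_right h9 ha₀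
    omega
  · exact Nat.le_findGreatest (hbd _ ⟨a, n, ha, haB, h, rfl⟩).le ⟨a, n, ha, haB, h, rfl⟩

lemma testBit_negRow {B i a t : ℕ} {y : ℝ} (hi : IsPos B y i) (ha : 1 ≤ a) (haB : a ≤ B)
    (hy : 0 ≤ y) (j acc : ℕ) :
    (negRow (B * B) (2 ^ (4 * (B * B)) - 1) a t j acc).testBit i =
      (acc.testBit i ^^ decide (min j ((⌊4 * a * y⌋₊ + t) / 4) % 2 = 1)) := by
  induction j generalizing acc with
  | zero => simp [negRow]
  | succ j ih =>
    rw [negRow_succ, ih]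
    simp only [Nat.testBit_xor, Nat.testBit_two_pow_sub_one, decide_eq_true hi.1]
    have h1 := hi.2 a (4 * (j + 1) - t) ha haB
    rw [← Nat.le_floor_iff (by positivity)] at h1
    generalize ⌊4 * a * y⌋₊ = N at *
    have h2 : decide (i < B * B * (4 * (j + 1) - t) / a) = !decide (j + 1 ≤ (N + t) / 4) := by
      rw [← decide_not, decide_eq_decide, ← not_le, h1]
      omega
    rw [h2]
    by_cases h3 : j + 1 ≤ (N + t) / 4
    · rw [min_eq_left h3, min_eq_left (by omega), decide_eq_true h3]
      rcases Nat.mod_two_eq_zero_or_one j with h4 | h4 <;>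
        simp [h4, show (j + 1) % 2 = _ by rw [Nat.add_mod, h4]]
    · rw [min_eq_right (by omega), min_eq_right (by omega), decide_eq_false h3]
      simp

lemma negRow_high {Q a t i : ℕ} (hi : 4 * Q ≤ i) (j acc : ℕ) (hj : j ≤ a)
    (hacc : acc.testBit i = false) :
    (negRow Q (2 ^ (4 * Q) - 1) a t j acc).testBit i = false := by
  induction j generalizing acc with
  | zero => simpa [negRow]
  | succ j ih =>
    rw [negRow_succ]
    refine ih _ (by omega) ?_
    have h1 : Q * (4 * (j + 1) - t) / a ≤ 4 * Q := by
      refine Nat.div_le_of_le_mul ?_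
      calc Q * (4 * (j + 1) - t) ≤ Q * (4 * a) := Nat.mul_le_mul_left _ (by omega)
        _ = _ := by ring
    simp only [Nat.testBit_xor, Nat.testBit_two_pow_sub_one, hacc, decide_eq_false (show ¬ i < 4 * Q by omega),
      decide_eq_false (show ¬ i < Q * (4 * (j + 1) - t) / a by omega)]
    rfl

/-- The sign table for the bound `B`. -/
def negTab (Q w all B : ℕ) : ℕ :=
  packTab w (fun c => negRow Q all (Nat.div c 4) (Nat.mod c 4) (Nat.div c 4) 0) (4 * (B + 1)) 0

/-- The entry of the sign table for `symF h t a`. -/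
def negOf (T w all a t : ℕ) : ℕ :=
  Nat.land (Nat.shiftRight T (Nat.mul w (Nat.add (Nat.mul 4 a) t))) all

/-- The continuation `k` is applied to the sign table for the bound `B`. -/
def withNeg (B : ℕ) (k : (ℕ → ℕ → ℕ) → ℕ → ℕ → Bool) : Bool :=
  force (B * B) fun Q => force (4 * Q) fun w => force (2 ^ w - 1) fun all =>
    force (negTab Q w all B) fun T => k (negOf T w all) w all

lemma testBit_negOf {T w a t i : ℕ} (hi : i < w) :
    (negOf T w (2 ^ w - 1) a t).testBit i = T.testBit (w * (4 * a + t) + i) := by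
  have : negOf T w (2 ^ w - 1) a t = (T >>> (w * (4 * a + t))) &&& (2 ^ w - 1) := rfl
  rw [this, Nat.testBit_and, Nat.testBit_shiftRight, Nat.testBit_two_pow_sub_one, decide_eq_true hi,
    Bool.and_true]

/-- The sign table is correct at the position of `arg h`. -/
theorem SymBase.signOracle {h : GaussianInt} {α B i : ℕ} (H : SymBase h α)
    (hi : IsPos B ((h : ℂ).arg / Real.pi) i) (hy0 : 0 ≤ (h : ℂ).arg / Real.pi)
    (hy1 : (h : ℂ).arg / Real.pi < 1) :
    SignOracle h (negOf (negTab (B * B) (4 * (B * B)) (2 ^ (4 * (B * B)) - 1) B) (4 * (B * B))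
      (2 ^ (4 * (B * B)) - 1)) (2 ^ (4 * (B * B)) - 1) B i := by
  refine ⟨by rw [Nat.testBit_two_pow_sub_one, decide_eq_true hi.1], fun t a hta haB => ?_⟩
  have ht := hta.1
  rw [testBit_negOf hi.1, negTab, testBit_packTab _ _ _ _ _ hi.1, if_pos (by omega)]
  · have e1 : Nat.div (4 * a + t) 4 = a := by change (4 * a + t) / 4 = a; omega
    have e2 : Nat.mod (4 * a + t) 4 = t := by change (4 * a + t) % 4 = t; omega
    simp only [e1, e2]
    rw [H.decide_symF_neg hta ⌊4 * a * ((h : ℂ).arg / Real.pi)⌋₊ (Nat.floor_le (by positivity))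
      (Nat.lt_floor_add_one _)]
    rcases Nat.eq_zero_or_pos a with rfl | ha
    · simp [negRow, show t / 4 = 0 by omega]
    · rw [testBit_negRow hi ha haB hy0, Nat.zero_testBit, Bool.false_xor]
      have h2 : ⌊4 * a * ((h : ℂ).arg / Real.pi)⌋₊ < 4 * a := by
        rw [Nat.floor_lt (by positivity)]
        have : (0 : ℝ) < a := by exact_mod_cast ha
        push_cast
        nlinarith
      rw [min_eq_right (by omega)]
  · exact fun c j hj => negRow_high hj _ _ le_rfl (Nat.zero_testBit _)

/-! ### Excluding exponents below `2 ^ 15` -/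

/-- The positions excluded for the exponent `8 k + 7`, `k ≡ r (mod b)`, by the symbols of
`symF h 0 (8 k + 7)` modulo `symF h s b`, `s = 0, 1, 3`. -/
def symD (neg : ℕ → ℕ → ℕ) (all b r : ℕ) : ℕ :=
  force (Nat.add (Nat.mul 8 r) 7) fun e => Nat.land all
    (Nat.lor (Nat.lor (bif Nat.beq (Nat.mod b 2) 1 then sym neg all 99 e 0 b 0 (symM neg all b 0) else 0)
      (sym neg all 99 e 0 b 1 (symM neg all b 1))) (sym neg all 99 e 0 b 3 (symM neg all b 3)))

/-- The continuation `k` is applied to the list of the tables of `symD neg all b`, `1 ≤ b ≤ n`,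
in front of `l`. -/
def withD (neg : ℕ → ℕ → ℕ) (w all : ℕ) : ℕ → List ℕ → (List ℕ → Bool) → Bool
  | 0, l, k => k l
  | n + 1, l, k => force (Nat.succ n) fun b => force (packTab w (symD neg all b) b 0) fun D =>
      withD neg w all n (D :: l) k

/-- Whether the tables for `b, b + 1, …` exclude every position. -/
def cover (w all k : ℕ) : List ℕ → ℕ → ℕ → Bool
  | [], _, acc => Nat.beq acc all
  | D :: l, b, acc => bif Nat.beq acc all then true else
      force (Nat.lor acc (Nat.land (Nat.shiftRight D (Nat.mul w (Nat.mod k b))) all)) fun acc =>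
        force (Nat.succ b) fun b => cover w all k l b acc

/-- The same without tables. -/
def coverOne (neg : ℕ → ℕ → ℕ) (all k : ℕ) : ℕ → ℕ → ℕ → Bool
  | 0, _, acc => Nat.beq acc all
  | f + 1, b, acc => bif Nat.beq acc all then true else
      force (Nat.lor acc (symD neg all b k)) fun acc => force (Nat.succ b) fun b =>
        coverOne neg all k f b acc

/-- A test which only composite numbers pass, if `c₁` and `c₂` are `22!` and `511!`. -/
def skip (c₁ c₂ e : ℕ) : Bool :=
  bif Nat.ble e 511 then bif Nat.ble e 22 then Nat.beq e 15 else
    bif Nat.beq (Nat.gcd e c₁) 1 then false else true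
  else bif Nat.beq (Nat.gcd e c₂) 1 then false else true

/-- The `k` such that the exponent `8 k + 7` requires a larger bound `B`. -/
def exceptional : List ℕ := [2729, 5279, 5699, 8189, 13859, 18089, 31109, 32759]

/-- Whether `k` is excluded: the exponent `8 k + 7` is composite, or every position is excluded for it by
the tables, or `k` is exceptional. -/
def testOne (w all c₁ c₂ : ℕ) (l : List ℕ) (k : ℕ) : Bool :=
  bif skip c₁ c₂ (Nat.add (Nat.mul 8 k) 7) then true else
    bif cover w all k l 1 0 then true else exceptional.any (Nat.beq k)

/-- Whether `f` holds below `n`. -/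
def allBelow (f : ℕ → Bool) : ℕ → Bool
  | 0 => true
  | n + 1 => bif f n then allBelow f n else false

/-- The computation for all `k < 2 ^ 15`, with `b ≤ 31`. -/
def mainCheck : Bool := withNeg 31 fun neg w all => withD neg w all 31 [] fun l =>
  force (Nat.factorial 22) fun c₁ => force (Nat.factorial 511) fun c₂ =>
    allBelow (fun m => allBelow (fun n => force (Nat.add (Nat.mul 256 m) n) fun k =>
      testOne w all c₁ c₂ l k) 256) 128

/-- The computation for the exceptional `k`, with `b ≤ 53`. -/
def excCheck : Bool := withNeg 53 fun neg _ all => exceptional.all fun k =>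
  coverOne neg all k 53 1 0


lemma allBelow_spec {f : ℕ → Bool} {n : ℕ} (hf : allBelow f n = true) {k : ℕ} (hk : k < n) :
    f k = true := by
  induction n with
  | zero => omega
  | succ n ih =>
    rw [allBelow, Bool.cond_eq_ite] at hf
    split_ifs at hf with h1
    rcases Nat.lt_succ_iff_lt_or_eq.mp hk with h | rfl
    · exact ih hf h
    · exact h1

lemma sym_add_period (neg : ℕ → ℕ → ℕ) (all f a t b s r c : ℕ) (hb : 1 ≤ b) :
    sym neg all (f + 1) (a + 8 * b * c) t b s r = sym neg all (f + 1) a t b s r := by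
  have e : a + 8 * b * c + b = a + b + 2 * b * (4 * c) := by ring
  have h1 : (a + 8 * b * c + b) % (2 * b) = (a + b) % (2 * b) := by rw [e, Nat.add_mul_mod_self_left]
  have h2 : (t + 6 * (s * ((a + 8 * b * c + b) / (2 * b)))) % 8 =
      (t + 6 * (s * ((a + b) / (2 * b)))) % 8 := by
    rw [e, Nat.add_mul_div_left _ _ (by omega)]
    have : t + 6 * (s * ((a + b) / (2 * b) + 4 * c)) =
      t + 6 * (s * ((a + b) / (2 * b))) + 8 * (3 * s * c) := by ring
    rw [this, Nat.add_mul_mod_self_left]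
  rw [sym, sym, h1, h2]

lemma symD_mod (neg : ℕ → ℕ → ℕ) (all b k : ℕ) (hb : 1 ≤ b) :
    symD neg all b (k % b) = symD neg all b k := by
  have h0 : ∀ x, Nat.add (Nat.mul 8 x) 7 = 8 * x + 7 := fun _ => rfl
  have e : 8 * k + 7 = 8 * (k % b) + 7 + 8 * b * (k / b) := by
    conv_lhs => rw [← Nat.mod_add_div k b]
    ring
  rw [symD, symD, force_eq, force_eq, h0, h0, e]
  simp only [sym_add_period _ _ 98 _ _ _ _ _ _ hb]

section
variable {h : GaussianInt} {α : ℕ} {neg : ℕ → ℕ → ℕ} {all B i : ℕ}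

/-- If `symF h 0 (8 k + 7) = -1`, its symbol modulo `symF h s b` is that of `-1`, so the algorithm cannot
find the opposite value at the position of `arg h`. -/
lemma sym_false (H : SymBase h α) (O : SignOracle h neg all B i) {k b s : ℕ}
    (he : symF h 0 (8 * k + 7) = -1) (hb : 1 ≤ b) (hbB : b ≤ B) (hs : SymValid s b) :
    (sym neg all 99 (8 * (k % b) + 7) 0 b s (symM neg all b s)).testBit i = false := by
  rw [← sym_add_period _ _ 98 _ _ _ _ _ (k / b) hb]
  have e : 8 * (k % b) + 7 + 8 * b * (k / b) = 8 * k + 7 := by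
    conv_rhs => rw [← Nat.mod_add_div k b]
    ring
  rw [e, ← Bool.not_eq_true]
  intro h1
  have h2 := sym_sound H O _ _ _ _ _ _ ⟨by norm_num, fun _ => by omega⟩ hs hb hbB h1
  rw [testBit_symM H O hs hbB, he, ← testBit_symM H O hs hbB, pm_mul_self] at h2
  norm_num at h2

lemma symD_false (H : SymBase h α) (O : SignOracle h neg all B i) {k b : ℕ}
    (he : symF h 0 (8 * k + 7) = -1) (hb : 1 ≤ b) (hbB : b ≤ B) :
    (symD neg all b (k % b)).testBit i = false := by
  have h0 : ∀ x y z : ℕ, Nat.land all (Nat.lor (Nat.lor x y) z) = all &&& (x ||| y ||| z) :=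
    fun _ _ _ => rfl
  have h1 : Nat.add (Nat.mul 8 (k % b)) 7 = 8 * (k % b) + 7 := rfl
  rw [symD, force_eq, h0, h1]
  simp only [Nat.testBit_and, Nat.testBit_or, natBeq, Bool.cond_decide,
    sym_false H O he hb hbB (s := 1) ⟨by norm_num, by norm_num⟩,
    sym_false H O he hb hbB (s := 3) ⟨by norm_num, by norm_num⟩]
  split_ifs with h2
  · rw [sym_false H O he hb hbB (s := 0) ⟨by norm_num, fun _ => h2⟩]; simp
  · simp

lemma symD_high (neg : ℕ → ℕ → ℕ) (w b r j : ℕ) (hj : w ≤ j) :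
    (symD neg (2 ^ w - 1) b r).testBit j = false := by
  have h0 : ∀ x : ℕ, Nat.land (2 ^ w - 1) x = (2 ^ w - 1) &&& x := fun _ => rfl
  rw [symD, force_eq, h0, Nat.testBit_and, Nat.testBit_two_pow_sub_one,
    decide_eq_false (by omega), Bool.false_and]

lemma coverOne_spec (H : SymBase h α) (O : SignOracle h neg all B i) {k : ℕ} (n b acc : ℕ)
    (hc : coverOne neg all k n b acc = true) (hb : 1 ≤ b) (hbB : b + n ≤ B + 1)
    (hacc : acc.testBit i = false) : symF h 0 (8 * k + 7) ≠ -1 := by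
  intro he
  induction n generalizing b acc with
  | zero =>
    rw [coverOne, natBeq, decide_eq_true_iff] at hc
    rw [hc, O.all] at hacc; simp at hacc
  | succ n ih =>
    rw [coverOne, natBeq, Bool.cond_decide] at hc
    split_ifs at hc with h1
    · rw [h1, O.all] at hacc; simp at hacc
    · rw [force_eq, force_eq] at hc
      refine ih _ _ hc (by simp) (by simp; omega) ?_
      have h0 : ∀ x : ℕ, Nat.lor acc x = acc ||| x := fun _ => rfl
      rw [h0, Nat.testBit_or, hacc, ← symD_mod neg all b k hb, symD_false H O he hb (by omega)]; rfl

/-- `l` lists the tables for `b, b + 1, …`. -/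
def IsTables (neg : ℕ → ℕ → ℕ) (w all B i : ℕ) : List ℕ → ℕ → Prop
  | [], _ => True
  | D :: l, b => (b ≤ B ∧ ∀ r < b, D.testBit (w * r + i) = (symD neg all b r).testBit i) ∧
      IsTables neg w all B i l (b + 1)

lemma withD_spec {w : ℕ} (hi : i < w) {k : List ℕ → Bool} (n : ℕ) (l : List ℕ) (hn : n ≤ B)
    (hl : IsTables neg w (2 ^ w - 1) B i l (n + 1)) (hk : withD neg w (2 ^ w - 1) n l k = true) :
    ∃ l, IsTables neg w (2 ^ w - 1) B i l 1 ∧ k l = true := by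
  induction n generalizing l with
  | zero => exact ⟨l, hl, hk⟩
  | succ n ih =>
    rw [withD, force_eq, force_eq] at hk
    refine ih (_ :: l) (by omega) ⟨⟨hn, fun r hr => ?_⟩, hl⟩ hk
    rw [testBit_packTab (fun c j => symD_high neg w _ c j) _ _ _ _ hi, if_pos hr]

lemma cover_spec (H : SymBase h α) (O : SignOracle h neg all B i) {w k : ℕ} (l : List ℕ) (b acc : ℕ)
    (hc : cover w all k l b acc = true) (hb : 1 ≤ b) (hl : IsTables neg w all B i l b)
    (hacc : acc.testBit i = false) : symF h 0 (8 * k + 7) ≠ -1 := by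
  intro he
  induction l generalizing b acc with
  | nil =>
    rw [cover, natBeq, decide_eq_true_iff] at hc
    rw [hc, O.all] at hacc; simp at hacc
  | cons D l ih =>
    rw [cover, natBeq, Bool.cond_decide] at hc
    split_ifs at hc with h1
    · rw [h1, O.all] at hacc; simp at hacc
    · rw [force_eq, force_eq] at hc
      refine ih _ _ hc (by simp) hl.2 ?_
      have h0 : Nat.lor acc (Nat.land (Nat.shiftRight D (Nat.mul w (Nat.mod k b))) all) =
        acc ||| ((D >>> (w * (k % b))) &&& all) := rfl
      rw [h0, Nat.testBit_or, hacc, Nat.testBit_and, Nat.testBit_shiftRight,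
        hl.1.2 _ (Nat.mod_lt _ hb), symD_false H O he hb hl.1.1]
      rfl

end

lemma skip_spec {e : ℕ} (he : e.Prime) : skip (Nat.factorial 22) (Nat.factorial 511) e = false := by
  have key : ∀ n, n < e → Nat.gcd e (Nat.factorial n) = 1 := fun n hn =>
    (Nat.Prime.coprime_iff_not_dvd he).2 fun hd => by
      have := he.dvd_factorial.1 hd; omega
  simp only [skip, natBeq, natBle, Bool.cond_decide]
  split_ifs with h1 h2 h3 h4
  · rw [decide_eq_false_iff_not]; rintro rfl; norm_num at he
  · rfl
  · exact absurd (key 22 (by omega)) h3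
  · rfl
  · exact absurd (key 511 (by omega)) h4

lemma withNeg_eq (B : ℕ) (k : (ℕ → ℕ → ℕ) → ℕ → ℕ → Bool) : withNeg B k =
    k (negOf (negTab (B * B) (4 * (B * B)) (2 ^ (4 * (B * B)) - 1) B) (4 * (B * B))
      (2 ^ (4 * (B * B)) - 1)) (4 * (B * B)) (2 ^ (4 * (B * B)) - 1) := by
  simp only [withNeg, force_eq]

set_option maxRecDepth 100000 in
theorem mainCheck_eq : mainCheck = true := by decide +kernel

theorem excCheck_eq : excCheck = true := by decide +kernel

/-- `Im h ^ e ≠ - Im h` for the primes `e = 8 k + 7` below `2 ^ 18`. -/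
theorem SymBase.symF_ne {h : GaussianInt} {α : ℕ} (H : SymBase h α) {k : ℕ} (hk : k < 2 ^ 15)
    (hp : (8 * k + 7).Prime) : symF h 0 (8 * k + 7) ≠ -1 := by
  have him : 0 < (h : ℂ).im := by
    have := H.im_pos
    rw [← GaussianInt.intCast_im]
    exact_mod_cast this
  have hy0 : 0 ≤ (h : ℂ).arg / Real.pi := div_nonneg (Complex.arg_nonneg_iff.2 him.le) Real.pi_pos.le
  have hy1 : (h : ℂ).arg / Real.pi < 1 := by
    rw [div_lt_one Real.pi_pos]
    exact Complex.arg_lt_pi_iff.2 (Or.inr him.ne')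
  have main := mainCheck_eq
  have exc := excCheck_eq
  rw [mainCheck, withNeg_eq] at main
  rw [excCheck, withNeg_eq, List.all_eq_true] at exc
  obtain ⟨i, hi⟩ := exists_isPos (B := 31) (by norm_num) hy0 hy1
  obtain ⟨j, hj⟩ := exists_isPos (B := 53) (by norm_num) hy0 hy1
  obtain ⟨l, hl, hmain⟩ := withD_spec hi.1 31 [] le_rfl trivial main
  rw [force_eq, force_eq] at hmain
  have h1 := allBelow_spec (allBelow_spec hmain (k := k / 256) (by omega)) (k := k % 256)
    (Nat.mod_lt _ (by norm_num))
  have e1 : Nat.add (Nat.mul 256 (k / 256)) (k % 256) = k := Nat.div_add_mod k 256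
  have e2 : Nat.add (Nat.mul 8 k) 7 = 8 * k + 7 := rfl
  rw [force_eq, e1, testOne, e2, skip_spec hp, cond_false, Bool.cond_eq_ite] at h1
  split_ifs at h1 with h2
  · exact cover_spec H (H.signOracle hi hy0 hy1) l 1 0 h2 le_rfl hl (Nat.zero_testBit _)
  · obtain ⟨k', hk', hb⟩ := List.any_eq_true.1 h1
    rw [natBeq, decide_eq_true_iff] at hb
    subst hb
    exact coverOne_spec H (H.signOracle hj hy0 hy1) 53 1 0 (exc _ hk') le_rfl le_rfl
      (Nat.zero_testBit _)

/-! ### Interpolation determinants -/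

section
open Finset Polynomial

/-- Numbers at most `n`, distinct except for repetitions of `n`, have sum at least `0 + 1 + … + (n - 1)`. -/
lemma sum_ge_of_injOn {ι : Type*} [Fintype ι] (m : ι → ℕ)
    (hle : ∀ j, m j ≤ Fintype.card ι)
    (hinj : ∀ i j, m i = m j → m i < Fintype.card ι → i = j) :
    Fintype.card ι * (Fintype.card ι - 1) / 2 ≤ ∑ j, m j := by
  classical
  set n := Fintype.card ι with hn
  have h1 : ∑ j, m j = ∑ c ∈ range n, (univ.filter fun j => c < m j).card := by
    simp_rw [card_filter]
    rw [sum_comm]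
    refine sum_congr rfl fun j _ => ?_
    rw [← card_filter]
    have : (range n).filter (fun c => c < m j) = range (m j) := by
      ext c; simp only [mem_filter, mem_range]; have := hle j; omega
    rw [this, card_range]
  have h2 : ∀ c ∈ range n, n - 1 - c ≤ (univ.filter fun j => c < m j).card := by
    intro c hc
    rw [mem_range] at hc
    have h3 : (univ.filter fun j => ¬ c < m j).card ≤ (range (c + 1)).card := by
      refine card_le_card_of_injOn m (fun j hj => ?_) (fun i hi j hj hij => ?_)
      · simp only [coe_filter, Set.mem_ofPred_eq, mem_univ, true_and] at hj
        simp; omega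
      · simp only [coe_filter, Set.mem_ofPred_eq, mem_univ, true_and] at hi
        exact hinj i j hij (by omega)
    have h4 := card_filter_add_card_filter_not (s := (univ : Finset ι)) (fun j => c < m j)
    rw [card_range] at h3
    rw [card_univ] at h4
    omega
  rw [h1, ← sum_range_id, ← sum_range_reflect]
  exact sum_le_sum h2

lemma norm_det_le {ι : Type*} [Fintype ι] [DecidableEq ι] (B : Matrix ι ι ℂ) (s : ι → ℝ)
    (hB : ∀ j i, ‖B j i‖ ≤ s j) :
    ‖B.det‖ ≤ (Fintype.card ι).factorial * ∏ j, s j := by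
  rw [Matrix.det_apply]
  refine (norm_sum_le _ _).trans ?_
  have : ∀ σ ∈ (univ : Finset (Equiv.Perm ι)),
      ‖Equiv.Perm.sign σ • ∏ i, B (σ i) i‖ ≤ ∏ j, s j := by
    intro σ _
    have h1 : ‖Equiv.Perm.sign σ • ∏ i, B (σ i) i‖ = ∏ i, ‖B (σ i) i‖ := by
      rcases Int.units_eq_one_or (Equiv.Perm.sign σ) with h | h <;> simp [h]
    rw [h1, ← Equiv.prod_comp σ s]
    exact prod_le_prod (fun _ _ => norm_nonneg _) fun i _ => hB _ _
  refine (sum_le_sum this).trans ?_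
  rw [sum_const, card_univ, Fintype.card_perm, nsmul_eq_mul]

/-- A determinant whose rows are, up to a remainder of relative size `q ^ n`, power series in the
points `x i` with geometrically decaying terms is at most about `q ^ (n (n - 1) / 2)`: two rows
cannot contribute the same monomial. -/
lemma norm_det_le_of_series {ι : Type*} [Fintype ι] [DecidableEq ι] (B : Matrix ι ι ℂ)
    (q : ℝ) (hq0 : 0 < q) (hq1 : q ≤ 1) (a : ι → ℕ → ℂ) (x : ι → ℂ) (R : ι → ι → ℂ) (S : ι → ℝ)
    (hB : ∀ j i, B j i = (∑ m ∈ range (Fintype.card ι), a j m * x i ^ m) + R j i)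
    (ha : ∀ j i m, ‖a j m * x i ^ m‖ ≤ S j * q ^ m)
    (hR : ∀ j i, ‖R j i‖ ≤ S j * q ^ Fintype.card ι) :
    ‖B.det‖ ≤ ((Fintype.card ι + 1 : ℕ) : ℝ) ^ Fintype.card ι *
      ((Fintype.card ι).factorial * ((∏ j, S j) *
        q ^ (Fintype.card ι * (Fintype.card ι - 1) / 2))) := by
  set n := Fintype.card ι with hn
  rcases isEmpty_or_nonempty ι with hι | ⟨⟨i₀⟩⟩
  · simp [hn]
  have hS : ∀ j, 0 ≤ S j := by
    intro j
    have h := (norm_nonneg _).trans (ha j i₀ 0)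
    simpa using h
  let w : ι → Fin (n + 1) → ι → ℂ := fun j m i => if (m : ℕ) < n then a j m * x i ^ (m : ℕ) else R j i
  have hBw : B = fun j => ∑ m, w j m := by
    ext j i
    rw [hB, Finset.sum_apply, Fin.sum_univ_castSucc]
    simp only [w, Fin.val_castSucc, Fin.is_lt, if_true, Fin.val_last, lt_irrefl, if_false]
    rw [Finset.sum_range]
  -- multilinearity: in each row keep either one monomial of degree `< n` or the remainder
  have hdet : B.det = ∑ r : ι → Fin (n + 1), Matrix.det (fun j => w j (r j)) := by
    have := (Matrix.detRowAlternating (n := ι) (R := ℂ)).toMultilinearMap.map_sum w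
    rw [← hBw] at this
    exact this
  rw [hdet]
  refine (norm_sum_le _ _).trans ?_
  have key : ∀ r ∈ (univ : Finset (ι → Fin (n + 1))), ‖Matrix.det (fun j => w j (r j))‖ ≤
      (n.factorial : ℝ) * ((∏ j, S j) * q ^ (n * (n - 1) / 2)) := by
    intro r _
    -- two rows that keep the same monomial are proportional, and such a term vanishes; otherwise the
    -- degrees below `n` are distinct, so that, with the remainder counted as degree `n`, the degrees sum
    -- to at least `n (n - 1) / 2`
    by_cases hinj : ∀ i j, (r i : ℕ) = r j → (r i : ℕ) < n → i = j
    · have h1 := norm_det_le (fun j => w j (r j)) (fun j => S j * q ^ (r j : ℕ)) (by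
        intro j i
        simp only [w]
        split_ifs with h
        · exact ha _ _ _
        · have : (r j : ℕ) = n := by omega
          rw [this]; exact hR j i)
      refine h1.trans ?_
      rw [prod_mul_distrib, prod_pow_eq_pow_sum]
      gcongr ?_ * (?_ * ?_)
      · exact prod_nonneg fun j _ => hS j
      · exact pow_le_pow_of_le_one hq0.le hq1
          (sum_ge_of_injOn (fun j => (r j : ℕ)) (fun j => by omega) hinj)
    · push Not at hinj
      obtain ⟨i, j, hij, hlt, hne⟩ := hinj
      have h0 : Matrix.det (fun j => w j (r j)) = 0 := by
        let c : ι → ℂ := fun j => if (r j : ℕ) < n then a j (r j) else 1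
        let w' : Matrix ι ι ℂ := fun j i => if (r j : ℕ) < n then x i ^ (r j : ℕ) else R j i
        have h2 : (fun j => w j (r j)) = Matrix.of fun j i => c j * w' j i := by
          ext j i
          simp only [w, c, w', Matrix.of_apply]
          split_ifs <;> simp
        rw [h2, Matrix.det_mul_column, Matrix.det_zero_of_row_eq hne, mul_zero]
        ext k
        simp only [w']
        rw [if_pos hlt, if_pos (hij ▸ hlt), hij]
      rw [h0, norm_zero]
      have := prod_nonneg fun j (_ : j ∈ (univ : Finset ι)) => hS j
      positivity
  refine (sum_le_sum key).trans ?_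
  rw [sum_const, nsmul_eq_mul, card_univ, Fintype.card_fun, Fintype.card_fin]
  push_cast
  exact le_rfl

/-- Laurent's bound for an interpolation determinant: entire functions `f j`, bounded by `S j` on
the circle of radius `4 X`, are sampled (up to a tiny error) at points of modulus at most `X`. -/
lemma norm_det_le_of_entire {ι : Type*} [Fintype ι] [DecidableEq ι] (B : Matrix ι ι ℂ)
    (f : ι → ℂ → ℂ) (hf : ∀ j, Differentiable ℂ (f j)) (x : ι → ℂ) (X : ℝ) (hX : 0 < X)
    (hx : ∀ i, ‖x i‖ ≤ X) (S : ι → ℝ) (hS : ∀ j z, ‖z‖ = 4 * X → ‖f j z‖ ≤ S j)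
    (hB : ∀ j i, ‖B j i - f j (x i)‖ ≤ 2 / 3 * S j * (1 / 4) ^ Fintype.card ι) :
    ‖B.det‖ ≤ ((Fintype.card ι + 1 : ℕ) : ℝ) ^ Fintype.card ι *
      ((Fintype.card ι).factorial * ((∏ j, 2 * S j) *
        (1 / 4) ^ (Fintype.card ι * (Fintype.card ι - 1) / 2))) := by
  have hS0 : ∀ j, 0 ≤ S j := fun j =>
    (norm_nonneg _).trans (hS j ((4 * X : ℝ) : ℂ) (by
      rw [Complex.norm_real, Real.norm_of_nonneg (by positivity)]))
  set a : ι → ℕ → ℂ := fun j m => (m.factorial : ℂ)⁻¹ * iteratedDeriv m (f j) 0 with ha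
  have hab : ∀ j i m, ‖a j m * x i ^ m‖ ≤ S j * (1 / 4) ^ m := by
    intro j i m
    have h1 := Complex.norm_iteratedDeriv_le_of_forall_mem_sphere_norm_le (c := 0) (R := 4 * X)
      (C := S j) (f := f j) m (by positivity) (hf j).diffContOnCl
      (fun z hz => hS j z (by simpa using hz))
    have h2 : ‖a j m‖ ≤ S j / (4 * X) ^ m := by
      rw [ha]
      simp only [norm_mul, norm_inv, Complex.norm_natCast]
      have : (0 : ℝ) < m.factorial := by positivity
      rw [inv_mul_le_iff₀ this]
      calc _ ≤ _ := h1
        _ = _ := by ring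
    calc ‖a j m * x i ^ m‖ = ‖a j m‖ * ‖x i‖ ^ m := by rw [norm_mul, norm_pow]
      _ ≤ S j / (4 * X) ^ m * X ^ m := by
          gcongr
          · have := hS0 j; positivity
          · exact hx i
      _ = S j * (1 / 4) ^ m := by
          rw [mul_pow, one_div, inv_pow]; field_simp
  have hsum : ∀ j i, HasSum (fun m => a j m * x i ^ m) (f j (x i)) := by
    intro j i
    have := Complex.hasSum_taylorSeries_on_ball (c := 0) (r := 2 * X) (f := f j) (z := x i)
      (hf j).differentiableOn (by
        rw [Metric.mem_ball, dist_zero_right]; linarith [hx i])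
    refine this.congr_fun ?_ |> fun h => h
    intro m
    simp only [ha, sub_zero, smul_eq_mul]; ring
  have htail : ∀ j i, ‖f j (x i) - ∑ m ∈ range (Fintype.card ι), a j m * x i ^ m‖ ≤
      4 / 3 * S j * (1 / 4) ^ Fintype.card ι := by
    intro j i
    have h1 := (hasSum_nat_add_iff' (Fintype.card ι)).2 (hsum j i)
    have hg : HasSum (fun m : ℕ => S j * (1 / 4) ^ Fintype.card ι * (1 / 4 : ℝ) ^ m)
        (S j * (1 / 4) ^ Fintype.card ι * (1 - 1 / 4)⁻¹) :=
      (hasSum_geometric_of_lt_one (by norm_num) (by norm_num)).mul_left _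
    have h2 := h1.norm_le_of_bounded hg (fun m => by
      refine (hab j i _).trans (le_of_eq ?_)
      rw [pow_add]; ring)
    refine h2.trans (le_of_eq ?_)
    norm_num; ring
  refine norm_det_le_of_series B (1 / 4) (by norm_num) (by norm_num) a x
    (fun j i => B j i - ∑ m ∈ range (Fintype.card ι), a j m * x i ^ m) (fun j => 2 * S j)
    (fun j i => by ring) (fun j i m => (hab j i m).trans ?_) (fun j i => ?_)
  · have := hS0 j
    gcongr; linarith
  · calc ‖B j i - ∑ m ∈ range (Fintype.card ι), a j m * x i ^ m‖
        = ‖(B j i - f j (x i)) + (f j (x i) - ∑ m ∈ range (Fintype.card ι), a j m * x i ^ m)‖ := by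
          congr 1; ring
      _ ≤ _ := norm_add_le _ _
      _ ≤ 2 / 3 * S j * (1 / 4) ^ Fintype.card ι + 4 / 3 * S j * (1 / 4) ^ Fintype.card ι :=
          add_le_add (hB j i) (htail j i)
      _ = _ := by ring

lemma coeff_prod_sum_of_natDegree_le {ι R : Type*} [CommRing R] (s : Finset ι)
    (f : ι → R[X]) (d : ι → ℕ) (h : ∀ i ∈ s, (f i).natDegree ≤ d i) :
    (∏ i ∈ s, f i).coeff (∑ i ∈ s, d i) = ∏ i ∈ s, (f i).coeff (d i) := by
  classical
  induction s using Finset.induction_on with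
  | empty => simp
  | insert i s hi ih =>
    rw [prod_insert hi, sum_insert hi, prod_insert hi, coeff_mul_add_eq_of_natDegree_le
      (h i (mem_insert_self _ _)) ((natDegree_prod_le _ _).trans
        (sum_le_sum fun j hj => h j (mem_insert_of_mem hj))),
      ih fun j hj => h j (mem_insert_of_mem hj)]

/-- Zero estimate: an exponential polynomial `∑ λ, P λ (x) * y ^ λ` cannot vanish on a translation
box that is too large. The translates by `(r J, γ ^ r)` form a square system whose determinant, a
polynomial in `x`, has a Vandermonde leading coefficient. -/
lemma zero_estimate (γ J : ℂ) (L K : ℕ)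
    (hγ : Function.Injective fun i : Fin L => γ ^ (i : ℕ))
    (P : Fin L → ℂ[X]) (hP : ∀ i, (P i).natDegree ≤ K - 1) (T : Finset ℂ) (y : ℂ → ℂ)
    (hy : ∀ x ∈ T, y x ≠ 0) (hT : L * (K - 1) < T.card)
    (h0 : ∀ x ∈ T, ∀ r < L, ∑ i, (P i).eval (x + r * J) * (γ ^ r * y x) ^ (i : ℕ) = 0) :
    ∀ i, P i = 0 := by
  classical
  by_contra! hne
  obtain ⟨i₀, hi₀⟩ := hne
  let Λ := {i : Fin L // P i ≠ 0}
  set n := Fintype.card Λ with hn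
  have hnL : n ≤ L := by
    have := Fintype.card_subtype_le (fun i : Fin L => P i ≠ 0)
    rwa [Fintype.card_fin] at this
  let g : Fin n ≃ Λ := (Fintype.equivFin Λ).symm
  let M : Matrix (Fin n) (Fin n) ℂ[X] := fun r i =>
    taylor ((r : ℕ) * J) (P (g i).1) * C (γ ^ ((r : ℕ) * ((g i).1 : ℕ)))
  have hMdeg : ∀ r i, (M r i).natDegree ≤ (P (g i).1).natDegree := by
    intro r i
    refine (natDegree_mul_C_le _ _).trans ?_
    rw [natDegree_taylor]
  set D := ∑ i, (P (g i).1).natDegree with hD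
  have hDle : D ≤ L * (K - 1) := by
    calc D ≤ ∑ _i : Fin n, (K - 1) := sum_le_sum fun i _ => hP _
      _ = n * (K - 1) := by simp
      _ ≤ _ := by gcongr
  have hprod : ∀ σ : Equiv.Perm (Fin n), (∏ i, M (σ i) i).natDegree ≤ D := fun σ =>
    (natDegree_prod_le _ _).trans (sum_le_sum fun i _ => hMdeg _ _)
  have hdeg : M.det.natDegree ≤ D := by
    rw [Matrix.det_apply]
    refine natDegree_sum_le_of_forall_le _ _ fun σ _ => ?_
    refine le_trans ?_ (hprod σ)
    rcases Int.units_eq_one_or (Equiv.Perm.sign σ) with h | h <;> simp [h]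
  -- the top coefficient is a nonzero multiple of a Vandermonde determinant in the `γ ^ i`
  have hcoeff : M.det.coeff D = (∏ i, (P (g i).1).leadingCoeff) *
      (Matrix.vandermonde fun i => γ ^ ((g i).1 : ℕ)).det := by
    rw [← Matrix.det_transpose (Matrix.vandermonde _), Matrix.det_apply, Matrix.det_apply,
      finsetSum_coeff, mul_sum]
    refine sum_congr rfl fun σ _ => ?_
    have h1 : (∏ i, M (σ i) i).coeff D = (∏ i, (P (g i).1).leadingCoeff) *
        ∏ i, (Matrix.vandermonde fun i => γ ^ ((g i).1 : ℕ)).transpose (σ i) i := by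
      rw [hD, coeff_prod_sum_of_natDegree_le _ _ _ fun i _ => hMdeg _ _, ← prod_mul_distrib]
      refine prod_congr rfl fun i _ => ?_
      simp only [M, coeff_mul_C, coeff_taylor_natDegree, Matrix.transpose_apply,
        Matrix.vandermonde_apply]
      rw [← pow_mul, mul_comm (σ i : ℕ)]
    rcases Int.units_eq_one_or (Equiv.Perm.sign σ) with h | h <;> simp [h, h1]
  have hne : M.det ≠ 0 := by
    intro h
    rw [h, coeff_zero] at hcoeff
    rcases mul_eq_zero.1 hcoeff.symm with h1 | h1
    · obtain ⟨i, -, hi⟩ := prod_eq_zero_iff.1 h1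
      exact (g i).2 (leadingCoeff_eq_zero.1 hi)
    · refine Matrix.det_vandermonde_ne_zero_iff.2 ?_ h1
      intro i j hij
      exact g.injective (Subtype.ext (hγ hij))
  refine hne (eq_zero_of_natDegree_lt_card_of_eval_eq_zero' M.det T ?_ (by omega))
  intro x hx
  -- at each `x ∈ T` the powers of `y x` form a kernel vector, so `det M` has too many roots
  have hmap : eval x M.det = ((evalRingHom x).mapMatrix M).det := by
    rw [← RingHom.map_det]; rfl
  rw [hmap, ← Matrix.exists_mulVec_eq_zero_iff]
  refine ⟨fun i => y x ^ ((g i).1 : ℕ), ?_, ?_⟩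
  · intro h
    have := congrFun h (g.symm ⟨i₀, hi₀⟩)
    exact pow_ne_zero _ (hy x hx) this
  · ext r
    have h1 := h0 x hx r (lt_of_lt_of_le r.2 hnL)
    rw [← sum_filter_add_sum_filter_not univ (fun i => P i ≠ 0)] at h1
    have h2 : ∑ i with ¬ P i ≠ 0, (P i).eval (x + (r : ℕ) * J) * (γ ^ (r : ℕ) * y x) ^ (i : ℕ) = 0 := by
      refine sum_eq_zero fun i hi => ?_
      rw [mem_filter] at hi
      rw [not_not.1 hi.2]; simp
    rw [h2, add_zero, sum_subtype (p := fun i => P i ≠ 0) _ (by simp), ← g.sum_comp] at h1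
    simp only [Matrix.mulVec, dotProduct, Pi.zero_apply]
    rw [← h1]
    refine sum_congr rfl fun i _ => ?_
    have h3 : ((evalRingHom x).mapMatrix M) r i = eval x (M r i) := rfl
    rw [h3]
    simp only [M, eval_mul, eval_C, taylor_eval, mul_pow, ← pow_mul]
    ring

/-- A matrix with trivial kernel has a nonzero maximal minor. -/
lemma exists_submatrix_det_ne_zero {P Q : Type} [Fintype P] [Fintype Q] [DecidableEq Q]
    (A : Matrix P Q ℂ) (hA : ∀ c, A.mulVec c = 0 → c = 0) :
    ∃ f : Q → P, (A.submatrix f id).det ≠ 0 := by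
  classical
  obtain ⟨κ, a, ha, hspan, hli⟩ := exists_linearIndependent' ℂ A.row
  have hinj : Function.Injective A.mulVecLin := by
    rw [← LinearMap.ker_eq_bot, LinearMap.ker_eq_bot']
    exact hA
  have hrank : A.rank = Fintype.card Q := by
    rw [Matrix.rank, LinearMap.finrank_range_of_inj hinj, Module.finrank_fintype_fun_eq_card]
  rw [Matrix.rank_eq_finrank_span_row] at hrank
  have : Finite κ := Finite.of_injective a ha
  have := Fintype.ofFinite κ
  have hcard : Fintype.card κ = Fintype.card Q := by
    rw [← hrank, ← hspan, finrank_span_eq_card hli]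
  let g : Q ≃ κ := (Fintype.equivOfCardEq hcard).symm
  refine ⟨a ∘ g, ?_⟩
  have h1 : LinearIndependent ℂ (A.submatrix (a ∘ g) id).row := hli.comp g g.injective
  have := Matrix.linearIndependent_rows_iff_isUnit.1 h1
  exact ((Matrix.isUnit_iff_isUnit_det _).1 this).ne_zero

/-- The binomial polynomial `X (X - 1) ⋯ (X - k + 1) / k!`. -/
noncomputable def binomPoly (k : ℕ) : ℂ[X] := C ((k.factorial : ℂ)⁻¹) * descPochhammer ℂ k

lemma natDegree_binomPoly_le (k : ℕ) : (binomPoly k).natDegree ≤ k := by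
  refine (natDegree_C_mul_le _ _).trans ?_
  exact (descPochhammer_natDegree ℂ k).le

lemma binomPoly_eval_int (k : ℕ) (x : ℤ) :
    (binomPoly k).eval (x : ℂ) = ((Ring.choose x k : ℤ) : ℂ) := by
  have h := Ring.descPochhammer_eq_factorial_smul_choose x k
  have h2 : (descPochhammer ℂ k).eval (x : ℂ) = ((k.factorial • Ring.choose x k : ℤ) : ℂ) := by
    rw [← h, ← descPochhammer_map (Int.castRingHom ℂ), eval_intCast_map]
    simp [Polynomial.eval_eq_smeval, Polynomial.smeval_eq_sum]
  rw [binomPoly, eval_mul, eval_C, h2]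
  have : (k.factorial : ℂ) ≠ 0 := by exact_mod_cast k.factorial_ne_zero
  push_cast [nsmul_eq_mul]
  field_simp

lemma norm_binomPoly_eval_le (k K : ℕ) (hk : k < K) (z : ℂ) (Y : ℝ) (hz : ‖z‖ ≤ Y) :
    ‖(binomPoly k).eval z‖ ≤ (Real.exp 1 * ((Y + K) / K)) ^ K := by
  have hY : 0 ≤ Y := (norm_nonneg _).trans hz
  have hK : (0 : ℝ) < K := by exact_mod_cast (by omega : 0 < K)
  rw [binomPoly, eval_mul, eval_C, descPochhammer_eval_eq_prod_range, norm_mul, norm_inv,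
    Complex.norm_natCast, norm_prod]
  have h1 : ∏ j ∈ range k, ‖z - j‖ ≤ (Y + K) ^ k := by
    calc _ ≤ ∏ _j ∈ range k, (Y + K) := by
          refine prod_le_prod (fun _ _ => norm_nonneg _) fun j hj => ?_
          rw [mem_range] at hj
          refine (norm_sub_le _ _).trans ?_
          rw [Complex.norm_natCast]
          have : (j : ℝ) ≤ K := by exact_mod_cast (by omega : j ≤ K)
          linarith
      _ = _ := by simp
  have h2 := Real.pow_div_factorial_le_exp K hK.le k
  have h3 : (1 : ℝ) ≤ (Y + K) / K := by rw [le_div_iff₀ hK]; linarith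
  calc (k.factorial : ℝ)⁻¹ * ∏ j ∈ range k, ‖z - j‖ ≤ (k.factorial : ℝ)⁻¹ * (Y + K) ^ k := by gcongr
    _ = (K : ℝ) ^ k / k.factorial * ((Y + K) / K) ^ k := by
        rw [div_pow]; field_simp
    _ ≤ Real.exp K * ((Y + K) / K) ^ K := by
        gcongr
    _ = _ := by
        rw [mul_pow, ← Real.exp_nat_mul, mul_one]

lemma binomPoly_comb_eq_zero (K : ℕ) (c : Fin K → ℂ)
    (h : ∑ k, C (c k) * binomPoly k = 0) : ∀ k, c k = 0 := by
  have key : ∀ n : ℕ, ∀ hn : n < K, c ⟨n, hn⟩ = 0 := by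
    intro n
    induction n using Nat.strong_induction_on with
    | _ n ih =>
      intro hn
      have h1 := congrArg (eval ((n : ℤ) : ℂ)) h
      rw [eval_finsetSum, sum_eq_single ⟨n, hn⟩] at h1
      · rw [eval_zero, eval_mul, eval_C, binomPoly_eval_int, Ring.choose_natCast,
          Nat.choose_self] at h1
        simpa using h1
      · intro b _ hb
        rcases lt_trichotomy (b : ℕ) n with hlt | heq | hgt
        · rw [ih b hlt b.2]; simp
        · exact absurd (Fin.ext heq) hb
        · rw [eval_mul, binomPoly_eval_int, Ring.choose_natCast, Nat.choose_eq_zero_of_lt hgt]; simp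
      · simp
  exact fun k => key k k.2

lemma sum_natAbs_sub (l : ℕ) : ∑ m : Fin (2 * l + 1), ((m : ℤ) - l).natAbs = l * (l + 1) := by
  rw [Fin.sum_univ_eq_sum_range (fun m : ℕ => ((m : ℤ) - l).natAbs),
    show 2 * l + 1 = l + (l + 1) by ring, sum_range_add]
  have h1 : ∑ m ∈ range l, ((m : ℤ) - l).natAbs = ∑ m ∈ range l, (m + 1) := by
    rw [← sum_range_reflect]
    refine sum_congr rfl fun m hm => ?_
    rw [mem_range] at hm; omega
  have h2 : ∑ m ∈ range (l + 1), (((l + m : ℕ) : ℤ) - l).natAbs = ∑ m ∈ range (l + 1), m := by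
    refine sum_congr rfl fun m _ => ?_
    omega
  rw [h1, h2]
  have h3 := Finset.sum_range_succ' (fun m => m) l
  have h4 := Finset.sum_range_id_mul_two (l + 1)
  simp at h3 h4
  nlinarith

/-- The interpolation matrix: the functions `binom(x, k) y ^ (m - l)` evaluated at the points
`x = r J + s e`, `y = γ ^ r i ^ s`, where `(r, s)` runs through a box centred at the origin. -/
noncomputable def interpMatrix (γ : ℂ) (J : ℤ) (e l M K : ℕ) :
    Matrix (Fin (13 * (2 * l + 1)) × Fin (2 * M + 1)) (Fin K × Fin (2 * l + 1)) ℂ :=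
  fun p q => (binomPoly q.1).eval
      (((((p.1 : ℕ) : ℤ) - (13 * l + 6 : ℕ)) * J + (((p.2 : ℕ) : ℤ) - M) * e : ℤ) : ℂ) *
    (γ ^ (((p.1 : ℕ) : ℤ) - (13 * l + 6 : ℕ)) * Complex.I ^ (((p.2 : ℕ) : ℤ) - M)) ^
      (((q.2 : ℕ) : ℤ) - l)

/-- The interpolation matrix has full column rank: `zero_estimate` eliminates the powers of `y`, and the
points are numerous enough because `J` and `e` are coprime. -/
lemma interpMatrix_mulVec (γ : ℂ) (hγ0 : γ ≠ 0) (J : ℤ) (e l M K : ℕ)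
    (hγ : Function.Injective fun i : Fin (2 * l + 1) => γ ^ (i : ℕ))
    (hJ : IsCoprime J (e : ℤ)) (hle : 12 * (2 * l + 1) ≤ e) (hK : K = 24 * M) (hM : 0 < M)
    (c : Fin K × Fin (2 * l + 1) → ℂ) (hc : (interpMatrix γ J e l M K).mulVec c = 0) : c = 0 := by
  classical
  have he0 : (0 : ℤ) < e := by exact_mod_cast (by omega : 0 < e)
  let P : Fin (2 * l + 1) → ℂ[X] := fun m => ∑ k : Fin K, C (c (k, m)) * binomPoly k
  let U : Finset (ℕ × ℕ) := range (12 * (2 * l + 1)) ×ˢ range (2 * M + 1)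
  let φ : ℕ × ℕ → ℤ := fun p => ((p.1 : ℤ) - (13 * l + 6 : ℕ)) * J + ((p.2 : ℤ) - M) * e
  have hφ : Set.InjOn φ U := by
    rintro ⟨r, s⟩ hp ⟨r', s'⟩ hp' h
    simp only [U, coe_product, Set.mem_prod, coe_range, Set.mem_Iio] at hp hp'
    simp only [φ] at h
    have h1 : ((r : ℤ) - r') * J = (s' - s) * e := by linear_combination h
    have h2 : (e : ℤ) ∣ (r : ℤ) - r' := by
      refine hJ.symm.dvd_of_dvd_mul_right ⟨s' - s, ?_⟩
      rw [h1]; ring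
    have h3 : (r : ℤ) - r' = 0 := by
      refine Int.eq_zero_of_abs_lt_dvd h2 ?_
      rw [abs_lt]; omega
    rw [h3, zero_mul] at h1
    have h4 : (s' : ℤ) - s = 0 := by
      rcases mul_eq_zero.1 h1.symm with h | h
      · exact h
      · omega
    ext <;> simp <;> omega
  let y : ℂ → ℂ := fun z =>
    if h : ∃ p ∈ U, (φ p : ℂ) = z then
      γ ^ (((Classical.choose h).1 : ℤ) - (13 * l + 6 : ℕ)) *
        Complex.I ^ (((Classical.choose h).2 : ℤ) - M) else 1
  have hy : ∀ p ∈ U, y (φ p) = γ ^ ((p.1 : ℤ) - (13 * l + 6 : ℕ)) * Complex.I ^ ((p.2 : ℤ) - M) := by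
    intro p hp
    have h : ∃ p' ∈ U, (φ p' : ℂ) = φ p := ⟨p, hp, rfl⟩
    have h1 := Classical.choose_spec h
    have h2 : Classical.choose h = p := hφ h1.1 hp (by exact_mod_cast h1.2)
    simp only [y]
    rw [dif_pos h, h2]
  have hP0 : ∀ m, P m = 0 := by
    refine zero_estimate γ J (2 * l + 1) K hγ P (fun m => ?_) (U.image fun p => (φ p : ℂ)) y ?_ ?_ ?_
    · refine natDegree_sum_le_of_forall_le _ _ fun k _ => ?_
      refine (natDegree_C_mul_le _ _).trans ((natDegree_binomPoly_le _).trans ?_)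
      omega
    · intro z hz
      obtain ⟨p, hp, rfl⟩ := mem_image.1 hz
      rw [hy p hp]
      exact mul_ne_zero (zpow_ne_zero _ hγ0) (zpow_ne_zero _ Complex.I_ne_zero)
    · rw [card_image_of_injOn, card_product, card_range, card_range, hK]
      · obtain ⟨M', rfl⟩ : ∃ M', M = M' + 1 := ⟨M - 1, by omega⟩
        have h1 : 24 * (M' + 1) - 1 = 24 * M' + 23 := by omega
        rw [h1]; nlinarith
      · intro p hp p' hp' h
        exact hφ hp hp' (Int.cast_injective h)
    · intro z hz r hr
      obtain ⟨⟨r2, s⟩, hp, rfl⟩ := mem_image.1 hz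
      rw [hy _ hp]
      simp only [U, mem_product, mem_range] at hp
      have h1 := congrFun hc (⟨r + r2, by omega⟩, ⟨s, hp.2⟩)
      simp only [Matrix.mulVec, dotProduct, Pi.zero_apply, interpMatrix] at h1
      rw [Fintype.sum_prod_type_right] at h1
      set Y : ℂ := γ ^ ((r : ℕ)) * (γ ^ ((r2 : ℤ) - (13 * l + 6 : ℕ)) * Complex.I ^ ((s : ℤ) - M)) with hY
      have hY0 : Y ≠ 0 := mul_ne_zero (pow_ne_zero _ hγ0)
        (mul_ne_zero (zpow_ne_zero _ hγ0) (zpow_ne_zero _ Complex.I_ne_zero))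
      have hY1 : γ ^ (((r + r2 : ℕ) : ℤ) - (13 * l + 6 : ℕ)) * Complex.I ^ ((s : ℤ) - M) = Y := by
        rw [hY, ← mul_assoc, ← zpow_natCast, ← zpow_add₀ hγ0]
        congr 3; push_cast; ring
      rw [hY1] at h1
      have h2 := congrArg (fun w => w * Y ^ l) h1
      simp only [zero_mul, sum_mul] at h2
      rw [← h2]
      refine sum_congr rfl fun m _ => ?_
      simp only [P, eval_finsetSum, sum_mul, eval_mul, eval_C]
      refine sum_congr rfl fun k _ => ?_
      have h3 : Y ^ (m : ℕ) = Y ^ (((m : ℕ) : ℤ) - l) * Y ^ l := by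
        rw [zpow_sub₀ hY0, zpow_natCast, zpow_natCast]
        field_simp
      rw [h3]
      have h4 : ((φ (r2, s) : ℤ) : ℂ) + r * J =
          ((((r + r2 : ℕ) : ℤ) - (13 * l + 6 : ℕ)) * J + ((s : ℤ) - M) * e : ℤ) := by
        simp only [φ]; push_cast; ring
      rw [h4]
      ring
  ext ⟨k, m⟩
  exact binomPoly_comb_eq_zero K (fun k => c (k, m)) (hP0 m) k

/-- A denominator for the powers of `γ`. -/
lemma exists_gaussianInt_zpow (γ : ℂ) (N : ℕ) (g1 g2 : GaussianInt)
    (hg1 : g1.toComplex = N * γ) (hg2 : g2.toComplex = N * γ⁻¹) (n : ℤ) (b : ℕ)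
    (hb : n.natAbs ≤ b) : ∃ z : GaussianInt, z.toComplex = (N : ℂ) ^ b * γ ^ n := by
  obtain ⟨c, rfl⟩ := Nat.exists_eq_add_of_le hb
  rcases Int.natAbs_eq n with h | h
  · refine ⟨(N : GaussianInt) ^ c * g1 ^ n.natAbs, ?_⟩
    have h1 : γ ^ n = γ ^ n.natAbs := by conv_lhs => rw [h, zpow_natCast]
    rw [map_mul, map_pow, map_pow, hg1, map_natCast, h1]; ring
  · refine ⟨(N : GaussianInt) ^ c * g2 ^ n.natAbs, ?_⟩
    have h1 : γ ^ n = γ⁻¹ ^ n.natAbs := by conv_lhs => rw [h, zpow_neg, zpow_natCast, ← inv_pow]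
    rw [map_mul, map_pow, map_pow, hg2, map_natCast, h1]; ring

lemma exists_gaussianInt_I_zpow (n : ℤ) : ∃ z : GaussianInt, z.toComplex = Complex.I ^ n := by
  have h1 : GaussianInt.toComplex ⟨0, 1⟩ = Complex.I := by simp [GaussianInt.toComplex_def]
  have h2 : GaussianInt.toComplex ⟨0, -1⟩ = Complex.I⁻¹ := by simp [GaussianInt.toComplex_def]
  have := exists_gaussianInt_zpow Complex.I 1 ⟨0, 1⟩ ⟨0, -1⟩ (by simpa using h1) (by simpa using h2)
    n n.natAbs le_rfl
  simpa using this

/-- Liouville's inequality: a nonzero minor of the interpolation matrix becomes a nonzero Gaussian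
integer after multiplication by powers of the norm. -/
lemma one_le_minor (γ : ℂ) (N : ℕ) (g1 g2 : GaussianInt) (hN : 0 < N)
    (hg1 : g1.toComplex = N * γ) (hg2 : g2.toComplex = N * γ⁻¹) (J : ℤ) (e l M K : ℕ)
    (f : Fin K × Fin (2 * l + 1) → Fin (13 * (2 * l + 1)) × Fin (2 * M + 1))
    (hf : ((interpMatrix γ J e l M K).submatrix f id).det ≠ 0) :
    1 ≤ (N : ℝ) ^ ((13 * l + 6) * (K * (l * (l + 1)))) *
      ‖((interpMatrix γ J e l M K).submatrix f id).det‖ := by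
  classical
  set A := (interpMatrix γ J e l M K).submatrix f id with hA
  have h1 : ∀ p q, ∃ z : GaussianInt, z.toComplex =
      (N : ℂ) ^ ((13 * l + 6) * (((q.2 : ℕ) : ℤ) - l).natAbs) * A p q := by
    intro p q
    simp only [hA, Matrix.submatrix_apply, id, interpMatrix]
    rw [binomPoly_eval_int, mul_zpow, ← zpow_mul, ← zpow_mul]
    generalize Ring.choose (_ : ℤ) _ = w
    obtain ⟨z1, hz1⟩ := exists_gaussianInt_zpow γ N g1 g2 hg1 hg2
      (((((f p).1 : ℕ) : ℤ) - (13 * l + 6 : ℕ)) * (((q.2 : ℕ) : ℤ) - l))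
      ((13 * l + 6) * (((q.2 : ℕ) : ℤ) - l).natAbs) (by
        rw [Int.natAbs_mul]
        gcongr
        have := (f p).1.2
        omega)
    obtain ⟨z2, hz2⟩ := exists_gaussianInt_I_zpow
      (((((f p).2 : ℕ) : ℤ) - M) * (((q.2 : ℕ) : ℤ) - l))
    refine ⟨(w : GaussianInt) * z1 * z2, ?_⟩
    rw [map_mul, map_mul, hz1, hz2, map_intCast]
    ring
  choose Z hZ using h1
  have h2 : (Matrix.of fun p q => Z p q).det.toComplex =
      (N : ℂ) ^ ((13 * l + 6) * (K * (l * (l + 1)))) * A.det := by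
    have h3 : (GaussianInt.toComplex.mapMatrix (Matrix.of fun p q => Z p q)) =
        Matrix.of fun p q => (N : ℂ) ^ ((13 * l + 6) * (((q.2 : ℕ) : ℤ) - l).natAbs) * A p q := by
      ext p q
      exact hZ p q
    rw [RingHom.map_det, h3, Matrix.det_mul_row, prod_pow_eq_pow_sum, ← mul_sum,
      Fintype.sum_prod_type]
    simp only [sum_const, card_univ, Fintype.card_fin, smul_eq_mul, sum_natAbs_sub]
  have hNC : (N : ℂ) ≠ 0 := by exact_mod_cast hN.ne'
  have h4 : (Matrix.of fun p q => Z p q).det ≠ 0 := by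
    intro h
    rw [h, map_zero] at h2
    exact mul_ne_zero (pow_ne_zero _ hNC) hf h2.symm
  -- a nonzero Gaussian integer has norm at least `1`
  have h5 : (1 : ℝ) ≤ ‖(Matrix.of fun p q => Z p q).det.toComplex‖ := by
    have h6 : (1 : ℤ) ≤ ((Matrix.of fun p q => Z p q).det).norm := GaussianInt.norm_pos.2 h4
    have h7 := GaussianInt.intCast_complex_norm ((Matrix.of fun p q => Z p q).det)
    rw [Complex.normSq_eq_norm_sq] at h7
    have h8 : (1 : ℝ) ≤ ‖(Matrix.of fun p q => Z p q).det.toComplex‖ ^ 2 := by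
      have h9 : (1 : ℝ) ≤ (((Matrix.of fun p q => Z p q).det.norm : ℤ) : ℝ) := by exact_mod_cast h6
      have h10 : ((((Matrix.of fun p q => Z p q).det.norm : ℤ) : ℝ)) =
        ‖(Matrix.of fun p q => Z p q).det.toComplex‖ ^ 2 := by exact_mod_cast h7
      linarith
    nlinarith [norm_nonneg ((Matrix.of fun p q => Z p q).det.toComplex)]
  rw [h2, norm_mul, norm_pow, Complex.norm_natCast] at h5
  exact h5

lemma norm_exp_I_sub_le (a b : ℝ) :
    ‖Complex.exp (a * Complex.I) - Complex.exp (b * Complex.I)‖ ≤ |a - b| := by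
  have h1 : Complex.exp (a * Complex.I) - Complex.exp (b * Complex.I) =
      Complex.exp (b * Complex.I) * (Complex.exp (Complex.I * ((a - b : ℝ) : ℂ)) - 1) := by
    rw [mul_sub, ← Complex.exp_add, mul_one]; congr 2; push_cast; ring
  rw [h1, norm_mul, Complex.norm_exp_ofReal_mul_I, one_mul]
  exact Real.norm_exp_I_mul_ofReal_sub_one_le

/-- The analytic upper bound for the minors: since `e ψ` is extremely close to `J π / 2`, the
function `y ^ m` is nearly the exponential `exp (i π m x / (2 e))` at the interpolation points. -/
lemma minor_le (ψ δ : ℝ) (J : ℤ) (e l M K : ℕ) (he : 0 < e) (hM : 0 < M)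
    (hJe : 2 * |J| ≤ e) (hδ : |e * ψ - J * (Real.pi / 2)| ≤ δ)
    (hsmall : (l : ℝ) * (13 * l + 6) * δ ≤ e * (2 / 3 * (1 / 4) ^ (K * (2 * l + 1))))
    (X : ℝ) (hX : X = e * ((13 * l + 6) / 2 + M))
    (S : ℝ) (hS : S = (Real.exp 1 * ((4 * X + K) / K)) ^ K *
      Real.exp (2 * Real.pi * l * ((13 * l + 6) / 2 + M)))
    (f : Fin K × Fin (2 * l + 1) → Fin (13 * (2 * l + 1)) × Fin (2 * M + 1)) :
    ‖((interpMatrix (Complex.exp (ψ * Complex.I)) J e l M K).submatrix f id).det‖ ≤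
      ((K * (2 * l + 1) + 1 : ℕ) : ℝ) ^ (K * (2 * l + 1)) *
      ((K * (2 * l + 1)).factorial * ((2 * S) ^ (K * (2 * l + 1)) *
        (1 / 4) ^ (K * (2 * l + 1) * (K * (2 * l + 1) - 1) / 2))) := by
  classical
  have heR : (0 : ℝ) < e := by exact_mod_cast he
  have hMR : (0 : ℝ) < M := by exact_mod_cast hM
  have hX0 : 0 < X := by rw [hX]; positivity
  set A := (interpMatrix (Complex.exp (ψ * Complex.I)) J e l M K).submatrix f id with hA
  set x : Fin K × Fin (2 * l + 1) → ℤ := fun p =>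
    ((((f p).1 : ℕ) : ℤ) - (13 * l + 6 : ℕ)) * J + ((((f p).2 : ℕ) : ℤ) - M) * e with hx
  have hr : ∀ p, |((((f p).1 : ℕ) : ℝ) - (13 * l + 6))| ≤ 13 * l + 6 := by
    intro p
    have h1 : (((f p).1 : ℕ) : ℝ) ≤ 13 * (2 * l + 1) - 1 := by
      have := (f p).1.2
      have h2 : (((f p).1 : ℕ) : ℝ) + 1 ≤ ((13 * (2 * l + 1) : ℕ) : ℝ) := by exact_mod_cast this
      push_cast at h2; linarith
    have h2 : (0 : ℝ) ≤ (((f p).1 : ℕ) : ℝ) := by positivity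
    rw [abs_le]; constructor <;> linarith
  have hs : ∀ p, |((((f p).2 : ℕ) : ℝ) - M)| ≤ M := by
    intro p
    have h1 : (((f p).2 : ℕ) : ℝ) ≤ 2 * M := by
      have := (f p).2.2
      have h2 : (((f p).2 : ℕ) : ℝ) + 1 ≤ ((2 * M + 1 : ℕ) : ℝ) := by exact_mod_cast this
      push_cast at h2; linarith
    have h2 : (0 : ℝ) ≤ (((f p).2 : ℕ) : ℝ) := by positivity
    rw [abs_le]; constructor <;> linarith
  have hm : ∀ q : Fin K × Fin (2 * l + 1), |(((q.2 : ℕ) : ℝ) - l)| ≤ l := by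
    intro q
    have h1 : ((q.2 : ℕ) : ℝ) ≤ 2 * l := by
      have := q.2.2
      exact_mod_cast (by omega : (q.2 : ℕ) ≤ 2 * l)
    have h2 : (0 : ℝ) ≤ ((q.2 : ℕ) : ℝ) := by positivity
    rw [abs_le]; constructor <;> linarith
  have hJR : |(J : ℝ)| ≤ e / 2 := by
    have : (2 : ℝ) * |(J : ℝ)| ≤ e := by exact_mod_cast hJe
    linarith
  have hxX : ∀ p, ‖((x p : ℤ) : ℂ)‖ ≤ X := by
    intro p
    rw [Complex.norm_intCast, hx, hX]
    push_cast
    calc _ ≤ |((((f p).1 : ℕ) : ℝ) - (13 * l + 6)) * J| + |((((f p).2 : ℕ) : ℝ) - M) * e| :=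
          abs_add_le _ _
      _ ≤ (13 * l + 6) * (e / 2) + M * e := by
          rw [abs_mul, abs_mul, abs_of_pos heR]
          gcongr
          · exact hr p
          · exact hs p
      _ = _ := by ring
  let F : Fin K × Fin (2 * l + 1) → ℂ → ℂ := fun q z => (binomPoly q.1).eval z *
    Complex.exp (((((q.2 : ℕ) : ℝ) - l) * (Real.pi / (2 * e)) : ℝ) * Complex.I * z)
  have hE1 : 1 ≤ Real.exp (2 * Real.pi * l * ((13 * l + 6) / 2 + M)) := by
    apply Real.one_le_exp
    have := Real.pi_pos
    positivity
  have hbin : ∀ (q : Fin K × Fin (2 * l + 1)) (z : ℂ), ‖z‖ ≤ 4 * X →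
      ‖(binomPoly q.1).eval z‖ ≤ (Real.exp 1 * ((4 * X + K) / K)) ^ K :=
    fun q z hz => norm_binomPoly_eval_le q.1 K q.1.2 z _ hz
  have main := norm_det_le_of_entire (A.transpose) F (fun q => by fun_prop) (fun p => (x p : ℂ)) X
    hX0 hxX (fun _ => S) ?_ ?_
  · simpa [Matrix.det_transpose, Fintype.card_prod] using main
  · intro q z hz
    simp only [F]
    rw [norm_mul, hS]
    refine mul_le_mul (hbin q z hz.le) ?_ (norm_nonneg _) (by positivity)
    rw [Complex.norm_exp]
    apply Real.exp_le_exp.2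
    refine (Complex.re_le_norm _).trans ?_
    rw [norm_mul, norm_mul, Complex.norm_I, mul_one, hz, Complex.norm_real, Real.norm_eq_abs,
      abs_mul, abs_of_pos (show 0 < Real.pi / (2 * e) by have := Real.pi_pos; positivity)]
    calc _ ≤ (l : ℝ) * (Real.pi / (2 * e)) * (4 * X) := by
          have := Real.pi_pos
          gcongr
          exact hm q
      _ = _ := by rw [hX]; field_simp; ring
  · intro q p
    have hcard : Fintype.card (Fin K × Fin (2 * l + 1)) = K * (2 * l + 1) := by simp
    rw [hcard]
    have h1 : A.transpose q p = (binomPoly q.1).eval ((x p : ℤ) : ℂ) *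
        Complex.exp (((((q.2 : ℕ) : ℝ) - l) * (((((f p).1 : ℕ) : ℝ) - (13 * l + 6)) * ψ +
          ((((f p).2 : ℕ) : ℝ) - M) * (Real.pi / 2)) : ℝ) * Complex.I) := by
      simp only [hA, Matrix.transpose_apply, Matrix.submatrix_apply, id, interpMatrix, hx]
      congr 1
      have hI : ∀ n : ℤ, Complex.I ^ n = Complex.exp (n * (Real.pi / 2 * Complex.I)) := by
        intro n
        rw [Complex.exp_int_mul, Complex.exp_pi_div_two_mul_I]
      rw [hI, ← Complex.exp_int_mul, ← Complex.exp_add, ← Complex.exp_int_mul]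
      congr 1
      push_cast
      ring
    simp only [F]
    rw [h1, ← mul_sub, norm_mul]
    have h2 : Complex.exp (((((q.2 : ℕ) : ℝ) - l) * (Real.pi / (2 * e)) : ℝ) * Complex.I *
        ((x p : ℤ) : ℂ)) =
        Complex.exp (((((q.2 : ℕ) : ℝ) - l) * (Real.pi / (2 * e)) * (x p) : ℝ) * Complex.I) := by
      congr 1; push_cast; ring
    rw [h2]
    have h3 := norm_exp_I_sub_le ((((q.2 : ℕ) : ℝ) - l) * (((((f p).1 : ℕ) : ℝ) - (13 * l + 6)) * ψ +
          ((((f p).2 : ℕ) : ℝ) - M) * (Real.pi / 2)))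
      ((((q.2 : ℕ) : ℝ) - l) * (Real.pi / (2 * e)) * (x p))
    have h4 : (((q.2 : ℕ) : ℝ) - l) * (((((f p).1 : ℕ) : ℝ) - (13 * l + 6)) * ψ +
          ((((f p).2 : ℕ) : ℝ) - M) * (Real.pi / 2)) -
        (((q.2 : ℕ) : ℝ) - l) * (Real.pi / (2 * e)) * (x p) =
        (((q.2 : ℕ) : ℝ) - l) * (((((f p).1 : ℕ) : ℝ) - (13 * l + 6)) *
          (e * ψ - J * (Real.pi / 2))) / e := by
      rw [hx]; push_cast; field_simp; ring
    rw [h4, abs_div, abs_mul, abs_mul, abs_of_pos heR] at h3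
    have hδ0 : 0 ≤ δ := (abs_nonneg _).trans hδ
    have h5 : |(((q.2 : ℕ) : ℝ) - l)| * (|((((f p).1 : ℕ) : ℝ) - (13 * l + 6))| *
        |e * ψ - J * (Real.pi / 2)|) / e ≤ 2 / 3 * (1 / 4) ^ (K * (2 * l + 1)) := by
      rw [div_le_iff₀ heR]
      calc _ ≤ (l : ℝ) * ((13 * l + 6) * δ) := by
            gcongr
            · exact hm q
            · exact hr p
        _ ≤ _ := by linarith
    have hSb : (Real.exp 1 * ((4 * X + K) / K)) ^ K ≤ S := by
      rw [hS]
      exact le_mul_of_one_le_right (by positivity) hE1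
    calc _ ≤ S * (2 / 3 * (1 / 4) ^ (K * (2 * l + 1))) :=
          mul_le_mul ((hbin q _ ((hxX p).trans (by linarith))).trans hSb) (h3.trans h5)
            (norm_nonneg _) (by rw [hS]; positivity)
      _ = _ := by ring

lemma sixty_mul_sq_le (t : ℕ) (ht : 18 ≤ t) :
    60 * (2 * t + 3) ^ 2 ≤ 2 ^ (t - 1) ∧ 6 * ((t + 1) * (13 * t + 19)) ≤ 2 ^ t := by
  obtain ⟨s, rfl⟩ := Nat.exists_eq_add_of_le ht
  have h1 : 18 + s - 1 = 17 + s := by omega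
  rw [h1]
  clear ht h1
  induction s with
  | zero => norm_num
  | succ s ih =>
    have h2 : 2 ^ (17 + (s + 1)) = 2 * 2 ^ (17 + s) := by ring
    have h3 : 2 ^ (18 + (s + 1)) = 2 * 2 ^ (18 + s) := by ring
    rw [h2, h3]
    generalize 2 ^ (17 + s) = P at *
    generalize 2 ^ (18 + s) = Q at *
    constructor
    · refine le_trans ?_ (Nat.mul_le_mul_left 2 ih.1)
      ring_nf
      nlinarith [Nat.zero_le (s ^ 2)]
    · refine le_trans ?_ (Nat.mul_le_mul_left 2 ih.2)
      ring_nf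
      nlinarith [Nat.zero_le (s ^ 2)]

lemma interp_numeric_int (n G l K w M : ℤ) (hKZ : K = 24 * (G * (2 * l + 1)))
    (hMZ : M = G * (2 * l + 1)) (hnZ : n = K * (2 * l + 1)) (hlZ : l = 19 + w)
    (hGZ : 5 ≤ G) (hw : 0 ≤ w)
    (key3 : n * (n - 1) ≤ G * ((13 * l + 6) * (K * (l * (l + 1)))) +
      (2 * K * n + (2 * K * n + (1 + (K * (18 + w + 1) + 15 * l * M)) * n))) : False := by
  have hKpos : (0 : ℤ) < K := by rw [hKZ]; subst hlZ; positivity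
  have key4 : (2 * l + 1 : ℤ) * (K * (2 * l + 1) - 1) ≤ G * ((13 * l + 6) * (l * (l + 1))) +
      (4 * K + (1 + (K * (18 + w + 1) + 15 * l * M))) * (2 * l + 1) := by
    refine le_of_mul_le_mul_left ?_ hKpos
    rw [hnZ] at key3
    linarith
  rw [hKZ, hMZ, hlZ] at key4
  have key5 : (G : ℤ) * (24 * (39 + 2 * w) ^ 3 - 96 * (39 + 2 * w) ^ 2 -
      24 * (39 + 2 * w) ^ 2 * (19 + w) - 15 * (39 + 2 * w) ^ 2 * (19 + w) -
      (13 * (19 + w) + 6) * ((19 + w) * (20 + w))) ≤ 2 * (39 + 2 * w) := by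
    linarith
  have key6 : (39 + 2 * w : ℤ) ≤ 24 * (39 + 2 * w) ^ 3 - 96 * (39 + 2 * w) ^ 2 -
      24 * (39 + 2 * w) ^ 2 * (19 + w) - 15 * (39 + 2 * w) ^ 2 * (19 + w) -
      (13 * (19 + w) + 6) * ((19 + w) * (20 + w)) := by
    nlinarith [pow_nonneg hw 2, pow_nonneg hw 3]
  nlinarith

/-- The parameters of the interpolation determinant make the lower and upper bounds for a nonzero
minor incompatible. -/
lemma interp_numeric (e l t G M K n N : ℕ) (ht : 18 ≤ t) (hl : l = t + 1) (he1 : 2 ^ t ≤ e)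
    (he2 : e < 2 ^ (t + 1)) (hG : 5 ≤ G) (hM : M = G * (2 * l + 1)) (hK : K = 24 * M)
    (hn : n = K * (2 * l + 1)) (hNG : N ≤ 2 ^ G)
    (X : ℝ) (hX : X = e * ((13 * l + 6) / 2 + M))
    (S : ℝ) (hS : S = (Real.exp 1 * ((4 * X + K) / K)) ^ K *
      Real.exp (2 * Real.pi * l * ((13 * l + 6) / 2 + M)))
    (D : ℝ) (hD0 : 0 ≤ D) (hlow : 1 ≤ (N : ℝ) ^ ((13 * l + 6) * (K * (l * (l + 1)))) * D)
    (hup : D ≤ ((n + 1 : ℕ) : ℝ) ^ n * (n.factorial * ((2 * S) ^ n *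
        (1 / 4) ^ (n * (n - 1) / 2)))) : False := by
  have hl0 : 0 < l := by omega
  have hM0 : 0 < M := by rw [hM]; positivity
  have hMR : (0 : ℝ) < M := by exact_mod_cast hM0
  have hK0 : 0 < K := by omega
  have hKR : (K : ℝ) = 24 * M := by rw [hK]; push_cast; ring
  have heR : (262144 : ℝ) ≤ e := by
    have h0 : 2 ^ 18 ≤ e := (Nat.pow_le_pow_right (by norm_num) ht).trans he1
    have h1 : ((2 ^ 18 : ℕ) : ℝ) ≤ e := Nat.cast_le.2 h0
    have h2 : ((2 ^ 18 : ℕ) : ℝ) = 262144 := by norm_num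
    linarith
  have heR2 : (e : ℝ) ≤ 2 ^ (t + 1) := by exact_mod_cast he2.le
  have hρ : (13 * l + 6 : ℝ) ≤ 1.3 * M := by
    have h1 : 5 * (2 * l + 1) ≤ M := by rw [hM]; gcongr
    have h2 : (5 : ℝ) * (2 * l + 1) ≤ M := by exact_mod_cast h1
    linarith
  have hS1 : Real.exp 1 * ((4 * X + K) / K) ≤ 2 ^ (t + 1) := by
    have h1 : (4 * X + K) / K ≤ 0.275 * e + 1 := by
      rw [hKR, hX, div_le_iff₀ (by positivity)]
      nlinarith
    have h2 := Real.exp_one_lt_d9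
    calc Real.exp 1 * ((4 * X + K) / K) ≤ 2.7182818286 * (0.275 * e + 1) := by
          gcongr
          rw [hX]; positivity
      _ ≤ e := by linarith
      _ ≤ _ := heR2
  have hS2 : Real.exp (2 * Real.pi * l * ((13 * l + 6) / 2 + M)) ≤ 2 ^ (15 * l * M) := by
    have h1 : (2 : ℝ) ^ (15 * l * M) = Real.exp ((15 * l * M : ℕ) * Real.log 2) := by
      rw [← Real.log_pow, Real.exp_log (by positivity)]
    rw [h1]
    apply Real.exp_le_exp.2
    have h2 := Real.log_two_gt_d9
    have h3 := Real.pi_lt_d2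
    have hlR : (0 : ℝ) < l := by exact_mod_cast hl0
    push_cast
    calc 2 * Real.pi * l * ((13 * l + 6) / 2 + M) ≤ 2 * 3.15 * l * (1.65 * M) := by
          gcongr
          linarith
      _ = (2 * 3.15 * 1.65) * (l * M) := by ring
      _ ≤ (15 * Real.log 2) * (l * M) :=
          mul_le_mul_of_nonneg_right (by linarith) (by positivity)
      _ = _ := by ring
  have hS3 : S ≤ 2 ^ (K * (t + 1) + 15 * l * M) := by
    rw [hS, pow_add, mul_comm K, pow_mul]
    have : 0 ≤ Real.exp 1 * ((4 * X + K) / K) := by rw [hX]; positivity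
    gcongr
  have hS0 : 0 ≤ S := by rw [hS, hX]; positivity
  have hn1 : ((n + 1 : ℕ) : ℝ) ≤ 2 ^ (2 * K) := by
    have h1 : n + 1 ≤ K ^ 2 := by
      have : 2 * l + 2 ≤ K := by rw [hK, hM]; nlinarith
      rw [hn]; nlinarith
    have h2 : K ^ 2 ≤ (2 ^ K) ^ 2 := Nat.pow_le_pow_left Nat.lt_two_pow_self.le 2
    rw [← pow_mul, mul_comm K] at h2
    exact_mod_cast h1.trans h2
  have hfac : (n.factorial : ℝ) ≤ (2 ^ (2 * K)) ^ n := by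
    have h1 : (n.factorial : ℝ) ≤ ((n + 1 : ℕ) : ℝ) ^ n := by
      exact_mod_cast (Nat.factorial_le_pow n).trans (Nat.pow_le_pow_left (Nat.le_succ n) n)
    refine h1.trans ?_
    gcongr
  have hq : ((1 : ℝ) / 4) ^ (n * (n - 1) / 2) * 2 ^ (n * (n - 1)) = 1 := by
    have h1 : n * (n - 1) = 2 * (n * (n - 1) / 2) :=
      (Nat.mul_div_cancel' (Nat.even_mul_pred_self n).two_dvd).symm
    conv_lhs => rw [h1]
    rw [pow_mul, Nat.mul_div_cancel_left _ (by norm_num), ← mul_pow]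
    norm_num
  have hNR : (N : ℝ) ≤ 2 ^ G := by exact_mod_cast hNG
  have key : (2 : ℝ) ^ (n * (n - 1)) ≤ 2 ^ (G * ((13 * l + 6) * (K * (l * (l + 1)))) +
      (2 * K * n + (2 * K * n + (1 + (K * (t + 1) + 15 * l * M)) * n))) := by
    calc (2 : ℝ) ^ (n * (n - 1)) ≤ 2 ^ (n * (n - 1)) *
          ((N : ℝ) ^ ((13 * l + 6) * (K * (l * (l + 1)))) * D) :=
          le_mul_of_one_le_right (by positivity) hlow
      _ ≤ 2 ^ (n * (n - 1)) * ((2 ^ G) ^ ((13 * l + 6) * (K * (l * (l + 1)))) *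
          ((2 ^ (2 * K)) ^ n * ((2 ^ (2 * K)) ^ n *
            ((2 ^ (1 + (K * (t + 1) + 15 * l * M))) ^ n * (1 / 4) ^ (n * (n - 1) / 2))))) := by
          gcongr
          refine hup.trans ?_
          gcongr
          rw [pow_add 2 1, pow_one]
          gcongr
      _ = (1 / 4) ^ (n * (n - 1) / 2) * 2 ^ (n * (n - 1)) *
          ((2 ^ G) ^ ((13 * l + 6) * (K * (l * (l + 1)))) * ((2 ^ (2 * K)) ^ n *
            ((2 ^ (2 * K)) ^ n * (2 ^ (1 + (K * (t + 1) + 15 * l * M))) ^ n))) := by ring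
      _ = _ := by
          rw [hq, one_mul]
          simp only [← pow_mul, ← pow_add]
  have key2 := (pow_le_pow_iff_right₀ (by norm_num : (1 : ℝ) < 2)).1 key
  have hnpos : 1 ≤ n := Nat.succ_le_of_lt (by rw [hn]; positivity)
  obtain ⟨w, rfl⟩ := Nat.exists_eq_add_of_le ht
  have key3 : (n : ℤ) * (n - 1) ≤ G * ((13 * l + 6) * (K * (l * (l + 1)))) +
      (2 * K * n + (2 * K * n + (1 + (K * (18 + w + 1) + 15 * l * M)) * n)) := by
    have := key2
    zify [hnpos] at this
    exact this
  exact interp_numeric_int n G l K w M (by rw [hK, hM]; push_cast; ring)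
    (by rw [hM]; push_cast; ring) (by rw [hn]; push_cast; ring) (by rw [hl]; push_cast; ring)
    (by exact_mod_cast hG) (by positivity) key3

/-- If `e ψ` is too close to a multiple of `π / 2`, the bounds `one_le_minor` and `minor_le` for a nonzero
minor of the interpolation matrix contradict each other. -/
lemma interp_contradiction (ψ : ℝ) (J : ℤ) (e N G E : ℕ) (g1 g2 : GaussianInt)
    (hg1 : g1.toComplex = N * Complex.exp (ψ * Complex.I))
    (hg2 : g2.toComplex = N * (Complex.exp (ψ * Complex.I))⁻¹)
    (hinj : Function.Injective fun i : ℕ => Complex.exp (ψ * Complex.I) ^ i)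
    (he : e.Prime) (heE : e = 2 * E + 1) (he18 : 2 ^ 18 ≤ e) (hψ : |ψ| ≤ Real.pi / 4)
    (hG : 5 ≤ G) (hN1 : 2 ^ (G - 1) ≤ N) (hN2 : N ≤ 2 ^ G)
    (hδ : |e * ψ - J * (Real.pi / 2)| ≤ 4 / 2 ^ ((G - 1) * E)) : False := by
  have he0 : 0 < e := he.pos
  have heR : (0 : ℝ) < e := by exact_mod_cast he0
  have hN0 : 0 < N := lt_of_lt_of_le (by positivity) hN1
  have hNR : (0 : ℝ) < N := by exact_mod_cast hN0
  set γ := Complex.exp (ψ * Complex.I) with hγ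
  have hEbig : 100 ≤ E := by omega
  -- the distance `δ` is below `1 / 8`
  have hδ1 : (4 : ℝ) / 2 ^ ((G - 1) * E) ≤ 1 / 8 := by
    rw [div_le_div_iff₀ (by positivity) (by norm_num)]
    have : (2 : ℝ) ^ 5 ≤ 2 ^ ((G - 1) * E) :=
      pow_le_pow_right₀ (by norm_num) (by nlinarith [show 4 ≤ G - 1 by omega])
    linarith
  have hpi := Real.pi_gt_three
  have hJe : 2 * |J| ≤ (e : ℤ) := by
    have h1 : |(J : ℝ) * (Real.pi / 2)| ≤ e * (Real.pi / 4) + 1 / 8 := by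
      have h2 : |(e : ℝ) * ψ| ≤ e * (Real.pi / 4) := by
        rw [abs_mul, abs_of_pos heR]; gcongr
      have h3 := abs_sub_abs_le_abs_sub ((J : ℝ) * (Real.pi / 2)) (e * ψ)
      rw [abs_sub_comm] at h3
      linarith [hδ.trans hδ1]
    rw [abs_mul, abs_of_pos (by positivity : (0 : ℝ) < Real.pi / 2)] at h1
    have h4 : (2 * |J| : ℝ) < e + 1 := by
      have : (|(J : ℝ)| * 2 - e) * (Real.pi / 4) ≤ 1 / 8 := by linarith
      by_contra! hc
      have hc' : (1 : ℝ) ≤ |(J : ℝ)| * 2 - e := by push_cast at hc; linarith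
      nlinarith
    have h5 : 2 * |J| < (e : ℤ) + 1 := by exact_mod_cast h4
    omega
  have hγ1 : γ ≠ 1 := by
    intro h
    have := @hinj 0 1 (by simp [h])
    omega
  -- if `J = 0`, then `γ` is so close to `1` that the nonzero Gaussian integer `N (γ - 1)` has norm
  -- less than `1`
  have hJ0 : J ≠ 0 := by
    rintro rfl
    have h1 : ‖γ - 1‖ ≤ |ψ| := by
      have := Complex.norm_exp_I_mul_ofReal_sub_one ψ
      rw [mul_comm] at this
      rw [hγ, this, norm_mul, Real.norm_eq_abs, Real.norm_eq_abs]
      have h2 := Real.abs_sin_le_abs (x := ψ / 2)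
      rw [abs_div] at h2
      norm_num at h2 ⊢
      linarith
    have h2 : 1 ≤ N * ‖γ - 1‖ := by
      have h3 : (g1 - N).toComplex = N * (γ - 1) := by
        rw [map_sub, hg1, map_natCast]; ring
      have h4 : g1 - N ≠ 0 := by
        intro h
        rw [h, map_zero] at h3
        rcases mul_eq_zero.1 h3.symm with h5 | h5
        · exact hNR.ne' (by exact_mod_cast h5)
        · exact hγ1 (sub_eq_zero.1 h5)
      have h6 : (1 : ℤ) ≤ (g1 - N).norm := GaussianInt.norm_pos.2 h4
      have h7 := GaussianInt.intCast_complex_norm (g1 - N)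
      rw [Complex.normSq_eq_norm_sq, h3, norm_mul, Complex.norm_natCast] at h7
      have h9 : (1 : ℝ) ≤ (((g1 - N).norm : ℤ) : ℝ) := by exact_mod_cast h6
      have h10 : (((g1 - N).norm : ℤ) : ℝ) = (N * ‖γ - 1‖) ^ 2 := by exact_mod_cast h7
      have h11 : 0 ≤ N * ‖γ - 1‖ := by positivity
      nlinarith
    have h3 : (e : ℝ) * |ψ| ≤ 4 / 2 ^ ((G - 1) * E) := by
      have := hδ
      rwa [Int.cast_zero, zero_mul, sub_zero, abs_mul, abs_of_pos heR] at this
    have h4 : (N : ℝ) ≤ 2 ^ ((G - 1) * E) := by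
      have h5 : N ≤ 2 ^ ((G - 1) * E) :=
        hN2.trans (Nat.pow_le_pow_right (by norm_num) (by nlinarith [show G = G - 1 + 1 by omega]))
      exact_mod_cast h5
    have h5 : (1 : ℝ) ≤ N * |ψ| := h2.trans (by gcongr)
    have h6 : (4 : ℝ) < e := by
      have : 4 < e := by omega
      exact_mod_cast this
    rw [le_div_iff₀ (by positivity)] at h3
    have h7 : (e : ℝ) * (N * |ψ|) ≤ 4 := by
      calc (e : ℝ) * (N * |ψ|) = e * |ψ| * N := by ring
        _ ≤ e * |ψ| * 2 ^ ((G - 1) * E) := by gcongr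
        _ ≤ 4 := h3
    nlinarith
  have hJ : IsCoprime J (e : ℤ) := by
    rw [isCoprime_comm, (Nat.prime_iff_prime_int.1 he).coprime_iff_not_dvd]
    intro h
    have h1 := Int.le_of_dvd (abs_pos.2 hJ0) ((dvd_abs _ _).2 h)
    have h2 := abs_pos.2 hJ0
    omega
  set t := Nat.log 2 e with ht
  have ht1 : 2 ^ t ≤ e := Nat.pow_log_le_self 2 he0.ne'
  have ht2 : e < 2 ^ (t + 1) := Nat.lt_pow_succ_log_self (by norm_num) e
  have ht18 : 18 ≤ t := Nat.le_log_of_pow_le (by norm_num) he18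
  obtain ⟨hs1, hs2⟩ := sixty_mul_sq_le t ht18
  have hlow : 12 * (2 * (t + 1) + 1) ≤ e := by nlinarith
  -- With `K = 24 M`, the determinant has order `24 M (2 l + 1)`; `l` is about `log₂ e`, so that the
  -- perturbation `δ` is negligible against the interpolation error.
  set l := t + 1 with hl
  set M := G * (2 * l + 1) with hM
  have hM0 : 0 < M := by positivity
  obtain ⟨f, hf⟩ := exists_submatrix_det_ne_zero (interpMatrix γ J e l M (24 * M))
    (fun c hc => interpMatrix_mulVec γ (Complex.exp_ne_zero _) J e l M (24 * M)
      (fun i j hij => Fin.ext (hinj hij)) hJ hlow rfl hM0 c hc)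
  have hA := one_le_minor γ N g1 g2 hN0 hg1 hg2 J e l M (24 * M) f hf
  have hEt : 2 ^ (t - 1) ≤ E := by
    have : 2 ^ t = 2 * 2 ^ (t - 1) := by rw [← pow_succ']; congr 1; omega
    omega
  have hexp : 2 * (24 * M * (2 * l + 1)) ≤ (G - 1) * E := by
    obtain ⟨G', rfl⟩ := Nat.exists_eq_add_of_le' (by omega : 1 ≤ G)
    have h1 : 60 * (2 * l + 1) ^ 2 ≤ E := by
      have : 2 * l + 1 = 2 * t + 3 := by omega
      rw [this]; exact hs1.trans hEt
    rw [hM, Nat.add_sub_cancel]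
    calc 2 * (24 * ((G' + 1) * (2 * l + 1)) * (2 * l + 1))
        = (48 * (G' + 1)) * (2 * l + 1) ^ 2 := by ring
      _ ≤ (60 * G') * (2 * l + 1) ^ 2 := Nat.mul_le_mul_right _ (by omega)
      _ = G' * (60 * (2 * l + 1) ^ 2) := by ring
      _ ≤ _ := by gcongr
  have hB := minor_le ψ _ J e l M (24 * M) he0 hM0 hJe hδ (by
    have h1 : (6 : ℝ) * (l * (13 * l + 6)) ≤ e := by
      have : 6 * (l * (13 * l + 6)) ≤ e := by
        have : 13 * l + 6 = 13 * t + 19 := by omega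
        rw [this]; exact hs2.trans ht1
      exact_mod_cast this
    have h2 : (4 : ℝ) ^ (24 * M * (2 * l + 1)) ≤ 2 ^ ((G - 1) * E) := by
      rw [show (4 : ℝ) = 2 ^ 2 by norm_num, ← pow_mul]
      exact pow_le_pow_right₀ (by norm_num) hexp
    rw [one_div, inv_pow]
    calc (l : ℝ) * (13 * l + 6) * (4 / 2 ^ ((G - 1) * E))
        = (6 * (l * (13 * l + 6))) * (2 / 3 * (2 ^ ((G - 1) * E))⁻¹) := by
          field_simp; ring
      _ ≤ e * (2 / 3 * (4 ^ (24 * M * (2 * l + 1)))⁻¹) := by gcongr) _ rfl _ rfl f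
  exact interp_numeric e l t G M (24 * M) _ N ht18 hl ht1 ht2 hG hM rfl rfl hN2 _ rfl _ rfl _
    (norm_nonneg _) hA hB

/-- A point of the unit circle close to a fourth root of unity has its angle close to a multiple of
a right angle. -/
lemma exists_near_right_angle (φ ε : ℝ) (m : ℤ)
    (h : ‖Complex.exp (φ * Complex.I) - Complex.I ^ m‖ ≤ ε) :
    ∃ J : ℤ, |φ - J * (Real.pi / 2)| ≤ 2 * ε := by
  have hI : Complex.I ^ m = Complex.exp ((m * (Real.pi / 2) : ℝ) * Complex.I) := by
    conv_lhs => rw [← Complex.exp_pi_div_two_mul_I, ← Complex.exp_int_mul]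
    congr 1; push_cast; ring
  set k := round ((φ - m * (Real.pi / 2)) / (2 * Real.pi)) with hk
  set y := φ - m * (Real.pi / 2) - k * (2 * Real.pi) with hy
  have hpi := Real.pi_pos
  have h1 : Complex.exp (φ * Complex.I) - Complex.I ^ m =
      Complex.I ^ m * (Complex.exp (Complex.I * y) - 1) := by
    rw [mul_sub, mul_one, hI, ← Complex.exp_add]
    congr 1
    rw [Complex.exp_eq_exp_iff_exists_int]
    exact ⟨k, by rw [hy]; push_cast; ring⟩
  have hy1 : |y| ≤ Real.pi := by
    have h2 := abs_sub_round ((φ - m * (Real.pi / 2)) / (2 * Real.pi))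
    have h3 : y = ((φ - m * (Real.pi / 2)) / (2 * Real.pi) - k) * (2 * Real.pi) := by
      rw [hy]; field_simp
    rw [h3, abs_mul, abs_of_pos (by positivity : 0 < 2 * Real.pi)]
    nlinarith
  rw [h1, norm_mul, norm_zpow, Complex.norm_I, one_zpow, one_mul,
    Complex.norm_exp_I_mul_ofReal_sub_one, norm_mul, Real.norm_eq_abs, Real.norm_eq_abs] at h
  have h2 := Real.mul_abs_le_abs_sin (x := y / 2) (by rw [abs_div]; norm_num; linarith)
  rw [abs_div, abs_two] at h2 
  rw [abs_two] at h
  refine ⟨m + 4 * k, ?_⟩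
  have h3 : φ - ((m + 4 * k : ℤ) : ℝ) * (Real.pi / 2) = y := by rw [hy]; push_cast; ring
  rw [h3]
  have h4 : 2 / Real.pi * |y| ≤ ε := by linarith
  rw [div_mul_eq_mul_div, div_le_iff₀ hpi] at h4
  have h5 := Real.pi_le_four
  have : 0 ≤ ε := by
    by_contra! hc
    nlinarith [abs_nonneg y]
  nlinarith

/-- A large prime power of a Gaussian integer has a large imaginary part. -/
theorem not_small_im (h : GaussianInt) (hco : IsCoprime h (star h)) (hN : 17 ≤ h.norm) (e : ℕ)
    (he : e.Prime) (he18 : 2 ^ 18 ≤ e) (him : |(h ^ e).im| ≤ |h.im|) : False := by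
  obtain ⟨N, hNe⟩ := Int.eq_ofNat_of_zero_le (by omega : 0 ≤ h.norm)
  have hN17 : 17 ≤ N := by omega
  set z := h.toComplex with hz
  set w := (star h).toComplex with hw
  have hzw : z * w = N := by
    rw [hz, hw, ← map_mul, ← Zsqrtd.norm_eq_mul_conj, hNe]; simp
  have hwz : w = (starRingEnd ℂ) z := by
    rw [hw, hz]; exact GaussianInt.toComplex_star h
  have hN0 : (N : ℂ) ≠ 0 := by exact_mod_cast (by omega : N ≠ 0)
  have hz0 : z ≠ 0 := by rintro h0; rw [h0, zero_mul] at hzw; exact hN0 hzw.symm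
  have hw0 : w ≠ 0 := by rintro h0; rw [h0, mul_zero] at hzw; exact hN0 hzw.symm
  have hnz : ‖z‖ ^ 2 = N := by
    have h1 := GaussianInt.intCast_complex_norm h
    rw [Complex.normSq_eq_norm_sq, hNe] at h1
    exact_mod_cast h1.symm
  have hnw : ‖w‖ = ‖z‖ := by rw [hwz, Complex.norm_conj]
  have hnz0 : 0 < ‖z‖ := norm_pos_iff.2 hz0
  set α := (z / w).arg with hα
  have hγ0 : Complex.exp (α * Complex.I) = z / w := by
    have h1 := Complex.norm_mul_exp_arg_mul_I (z / w)
    rwa [norm_div, hnw, div_self hnz0.ne', Complex.ofReal_one, one_mul] at h1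
  set κ := round (-α / (Real.pi / 2)) with hκ
  set ψ := α + κ * (Real.pi / 2) with hψ
  have hpi := Real.pi_pos
  have hγ : Complex.exp (ψ * Complex.I) = Complex.I ^ κ * (z / w) := by
    have h1 : Complex.I ^ κ = Complex.exp (κ * (Real.pi / 2 * Complex.I)) := by
      rw [Complex.exp_int_mul, Complex.exp_pi_div_two_mul_I]
    rw [← hγ0, h1, ← Complex.exp_add]
    congr 1; rw [hψ]; push_cast; ring
  have hψ4 : |ψ| ≤ Real.pi / 4 := by
    have h2 : |-α / (Real.pi / 2) - κ| ≤ 1 / 2 := abs_sub_round (-α / (Real.pi / 2))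
    have h3 : ψ = -((-α / (Real.pi / 2) - κ) * (Real.pi / 2)) := by
      rw [hψ]; field_simp; ring
    rw [h3, abs_neg, abs_mul, abs_of_pos (by positivity : 0 < Real.pi / 2)]
    nlinarith
  obtain ⟨E, hE⟩ : Odd e := he.odd_of_ne_two (by omega)
  -- the quotient `(z / w) ^ e` is close to `1`
  have h1 : ‖(z / w) ^ e - 1‖ ≤ 2 * (1 / N) ^ E := by
    have h2 : z ^ e - w ^ e = 2 * ((h ^ e).im : ℝ) * Complex.I := by
      have h3 : w ^ e = (starRingEnd ℂ) (z ^ e) := by rw [map_pow, hwz]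
      rw [h3, Complex.sub_conj]
      have h4 : (z ^ e).im = ((h ^ e).im : ℝ) := by
        rw [hz, ← map_pow]; exact (GaussianInt.intCast_im _).symm
      rw [h4]; push_cast; ring
    have h3 : (z / w) ^ e - 1 = (z ^ e - w ^ e) / w ^ e := by
      rw [div_pow, sub_div, div_self (pow_ne_zero _ hw0)]
    have h4 : |((h ^ e).im : ℝ)| ≤ ‖z‖ := by
      calc |((h ^ e).im : ℝ)| ≤ |(h.im : ℝ)| := by exact_mod_cast him
        _ = |z.im| := by rw [hz, GaussianInt.intCast_im]
        _ ≤ ‖z‖ := Complex.abs_im_le_norm z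
    rw [h3, h2, norm_div, norm_mul, norm_mul, Complex.norm_I, Complex.norm_real, norm_pow, hnw,
      Real.norm_eq_abs, mul_one, Complex.norm_ofNat]
    have h6 : ‖z‖ ^ e = N ^ E * ‖z‖ := by rw [hE, pow_succ, pow_mul, hnz]
    rw [h6, div_le_iff₀ (by positivity)]
    have h5 : (1 / (N : ℝ)) ^ E * N ^ E = 1 := by
      rw [← mul_pow, one_div_mul_cancel (by positivity), one_pow]
    calc (2 : ℝ) * |((h ^ e).im : ℝ)| ≤ 2 * ‖z‖ := by gcongr
      _ = 2 * ((1 / (N : ℝ)) ^ E * N ^ E) * ‖z‖ := by rw [h5, mul_one]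
      _ = _ := by ring
  have h2 : ‖Complex.exp ((e * ψ : ℝ) * Complex.I) - Complex.I ^ (κ * e)‖ ≤ 2 * (1 / N) ^ E := by
    have h3 : Complex.exp ((e * ψ : ℝ) * Complex.I) - Complex.I ^ (κ * e) =
        Complex.I ^ (κ * e) * ((z / w) ^ e - 1) := by
      have h4 : Complex.exp ((e * ψ : ℝ) * Complex.I) = Complex.exp (ψ * Complex.I) ^ e := by
        rw [← Complex.exp_nat_mul]; congr 1; push_cast; ring
      rw [h4, hγ, mul_pow, zpow_mul, zpow_natCast]; ring
    rw [h3, norm_mul, norm_zpow, Complex.norm_I, one_zpow, one_mul]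
    exact h1
  obtain ⟨J, hJ⟩ := exists_near_right_angle _ _ _ h2
  obtain ⟨i1, hi1⟩ := exists_gaussianInt_I_zpow κ
  obtain ⟨i2, hi2⟩ := exists_gaussianInt_I_zpow (-κ)
  set G := Nat.log 2 N + 1 with hG
  have hG4 : 4 ≤ Nat.log 2 N := Nat.le_log_of_pow_le (by norm_num) (by omega)
  have hNG : 2 ^ (G - 1) ≤ N := by
    rw [hG, Nat.add_sub_cancel]; exact Nat.pow_log_le_self 2 (by omega)
  refine interp_contradiction ψ J e N G E (i1 * h ^ 2) (i2 * star h ^ 2) ?_ ?_ ?_ he hE he18 hψ4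
    (by omega) hNG (Nat.lt_pow_succ_log_self (by norm_num) N).le ?_
  · rw [map_mul, map_pow, hi1, hγ, ← hzw, ← hz]; field_simp
  · rw [map_mul, map_pow, hi2, hγ, ← hzw, ← hw, mul_inv, zpow_neg]; field_simp
  · -- `h / star h` is not a root of unity since `h` and `star h` are coprime
    have hroot : ∀ n : ℕ, 0 < n → Complex.exp (ψ * Complex.I) ^ n ≠ 1 := by
      intro n hn hc
      have h3 : (z / w) ^ (4 * n) = 1 := by
        have h4 : (Complex.exp (ψ * Complex.I) ^ n) ^ 4 = 1 := by rw [hc, one_pow]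
        have h5 : (Complex.I ^ κ) ^ 4 = 1 := by
          rw [← zpow_natCast, zpow_comm, zpow_natCast, Complex.I_pow_four, one_zpow]
        rw [hγ, mul_pow, mul_pow, ← pow_mul, ← pow_mul, mul_comm n, pow_mul, h5, one_pow,
          one_mul] at h4
        exact h4
      rw [div_pow, div_eq_one_iff_eq (pow_ne_zero _ hw0), hz, hw, ← map_pow, ← map_pow,
        GaussianInt.toComplex_inj] at h3
      have h4 : IsUnit h := by
        have h5 : h ∣ star h ^ (4 * n) := h3 ▸ dvd_pow_self h (by omega)
        exact (hco.pow_right (n := 4 * n)).isUnit_of_dvd' dvd_rfl h5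
      have h5 := Zsqrtd.norm_eq_one_iff.2 h4
      rw [hNe] at h5
      simp at h5
      omega
    intro i j hij
    simp only at hij
    rcases lt_trichotomy i j with hlt | heq | hlt
    · exfalso
      obtain ⟨d, rfl⟩ := Nat.exists_eq_add_of_lt hlt
      rw [add_assoc, pow_add] at hij
      exact hroot _ (Nat.succ_pos d)
        (mul_left_cancel₀ (pow_ne_zero i (Complex.exp_ne_zero _)) (hij.symm.trans (mul_one _).symm))
    · exact heq
    · exfalso
      obtain ⟨d, rfl⟩ := Nat.exists_eq_add_of_lt hlt
      rw [add_assoc, pow_add] at hij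
      exact hroot _ (Nat.succ_pos d)
        (mul_left_cancel₀ (pow_ne_zero j (Complex.exp_ne_zero _)) (hij.trans (mul_one _).symm))
  · refine hJ.trans ?_
    have h3 : (2 : ℝ) ^ (G - 1) ≤ N := by exact_mod_cast hNG
    rw [one_div, inv_pow, pow_mul]
    calc 2 * (2 * ((N : ℝ) ^ E)⁻¹) ≤ 2 * (2 * (((2 : ℝ) ^ (G - 1)) ^ E)⁻¹) := by gcongr
      _ = _ := by ring

end

/-! ### The equation `Im (h ^ e) = - Im h` -/

lemma isCoprime_star {h : GaussianInt} (hco : IsCoprime h.re h.im) (hN : Odd h.norm) :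
    IsCoprime h (star h) := by
  have h2 : IsCoprime (2 * h.re) h.norm := by
    refine IsCoprime.mul_left ?_ ?_
    · exact Int.isCoprime_two_left.2 hN
    · have : h.norm = h.im * h.im + h.re * h.re := by rw [Zsqrtd.norm_def]; ring
      rw [this]
      exact (hco.mul_right hco).add_mul_left_right _
  obtain ⟨a, b, hab⟩ := h2
  refine ⟨a + b * star h, a, ?_⟩
  have h3 : ((a * (2 * h.re) + b * h.norm : ℤ) : GaussianInt) = 1 := by rw [hab]; rfl
  have h4 : h + star h = ((2 * h.re : ℤ) : GaussianInt) := by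
    ext <;> simp <;> ring
  have h5 : h * star h = ((h.norm : ℤ) : GaussianInt) := by rw [Zsqrtd.norm_eq_mul_conj]
  push_cast at h3 h4 h5
  linear_combination h3 + (a : GaussianInt) * h4 + (b : GaussianInt) * h5

/-- Modulo `M = Re h + Im h`, the base `h` is `(Re h) (1 - i)`, so the equation says that `2 x ^ 2` is
congruent to `1 (mod M)` for some `x`. -/
lemma sum_mod_of_im_pow {h : GaussianInt} (hco : IsCoprime h.re h.im) (hodd : (h.re + h.im) % 2 = 1) {k : ℕ}
    (he : (h ^ (8 * k + 7)).im = -h.im) :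
    (h.re + h.im) % 8 = 1 ∨ (h.re + h.im) % 8 = 7 := by
  set M := h.re + h.im with hM
  have h1 : h = (h.re : GaussianInt) * ⟨1, -1⟩ + (M : GaussianInt) * ⟨0, 1⟩ := by
    ext <;> simp [hM]
  have h2 : (M : GaussianInt) ∣ h ^ (8 * k + 7) - ((h.re : GaussianInt) * ⟨1, -1⟩) ^ (8 * k + 7) :=
    (Dvd.intro _ (by linear_combination -h1 :
      (M : GaussianInt) * ⟨0, 1⟩ = h - (h.re : GaussianInt) * ⟨1, -1⟩)).trans (sub_dvd_pow_sub_pow _ _ _)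
  have h3 : ((h.re : GaussianInt) * ⟨1, -1⟩) ^ (8 * k + 7) =
      ((h.re ^ (8 * k + 7) * 16 ^ k : ℤ) : GaussianInt) * ⟨8, 8⟩ := by
    have e8 : (⟨1, -1⟩ : GaussianInt) ^ 8 = ((16 : ℤ) : GaussianInt) := by decide
    have e7 : (⟨1, -1⟩ : GaussianInt) ^ 7 = ⟨8, 8⟩ := by decide
    rw [mul_pow, pow_add (⟨1, -1⟩ : GaussianInt), pow_mul (⟨1, -1⟩ : GaussianInt), e8, e7]
    push_cast
    ring
  obtain ⟨z, hz⟩ := h2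
  have h4 := congrArg Zsqrtd.im hz
  rw [h3, Zsqrtd.im_sub, he, Zsqrtd.im_smul, Zsqrtd.im_smul] at h4
  have h5 : M ∣ h.re * (1 - 2 * (h.re ^ (4 * k + 3) * 2 * 4 ^ k) ^ 2) := by
    refine ⟨z.im + 1, ?_⟩
    have e16 : (16 : ℤ) ^ k = (4 ^ k) ^ 2 := by rw [← pow_mul, mul_comm k 2, pow_mul]; norm_num
    rw [e16] at h4
    simp only [] at h4
    have : h.re ^ (8 * k + 7) = h.re * (h.re ^ (4 * k + 3)) ^ 2 := by rw [← pow_mul, ← pow_succ']; congr 1; ring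
    rw [this] at h4
    linear_combination h4 - hM
  have hcM : IsCoprime M h.re := by
    have := (hco.symm.add_mul_left_left 1 : IsCoprime (h.im + h.re * 1) h.re)
    rwa [mul_one, add_comm] at this
  have h6 := hcM.dvd_of_dvd_mul_left h5
  have h7 := jacobiSym_congr h6
  rw [jacobiSym.one_left, jacobiSym.mul_left, jacobiSym.pow_left] at h7
  have hno : Odd M.natAbs := Int.natAbs_odd.2 (Int.odd_iff.2 hodd)
  rw [jacobiSym.at_two hno] at h7
  generalize jacobiSym (h.re ^ (4 * k + 3) * 2 * 4 ^ k) M.natAbs = J at h7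
  by_contra hcon
  have h8 : ZMod.χ₈ ((M.natAbs : ℕ) : ZMod 8) = -1 := by
    rw [ZMod.χ₈_nat_eq_if_mod_eight]
    rw [if_neg (by omega), if_neg (by omega)]
  rw [h8] at h7
  nlinarith [sq_nonneg J]

/-- The case `L = -1` for a prime exponent `≡ 7 (mod 8)`. -/
theorem im_pow_ne_neg {h : GaussianInt} {α : ℕ} (hα : 2 ≤ α) (him : |h.im| = 2 ^ α)
    (hre : h.re % 2 = 1) {e : ℕ} (hp : e.Prime) (he : e % 8 = 7) : (h ^ e).im ≠ -h.im := by
  intro hpow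
  -- conjugation and negation
  wlog hpos : 0 < h.im generalizing h with W
  · refine W (h := star h) (by simpa using him) (by simpa using hre) (by simp [← star_pow, hpow]) ?_
    have : (2 : ℤ) ^ α > 0 := by positivity
    rcases abs_choice h.im with h1 | h1
    · omega
    · simp; omega
  have heo : Odd e := Nat.odd_iff.2 (by omega)
  wlog hre4 : h.re % 4 = 1 generalizing h with W
  · have e1 : ((-star h) ^ e) = -star (h ^ e) := by rw [heo.neg_pow, star_pow]
    refine W (h := -star h) (by simpa using him) (by simp; omega) ?_ (by simpa using hpos)
      (by simp; omega)
    rw [e1]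
    simpa only [Zsqrtd.im_neg, Zsqrtd.im_star, neg_neg] using hpow
  rw [abs_of_pos hpos] at him
  have h4 : (4 : ℤ) ∣ h.im := by
    rw [him, show (4 : ℤ) = 2 ^ 2 by norm_num]; exact pow_dvd_pow 2 hα
  have hco : IsCoprime h.re h.im := by
    rw [him]
    exact IsCoprime.pow_right (Int.isCoprime_two_right.2 (Int.odd_iff.2 hre))
  obtain ⟨k, rfl⟩ : ∃ k, e = 8 * k + 7 := ⟨e / 8, by omega⟩
  have H : SymBase h α := ⟨hα, him, hre4, sum_mod_of_im_pow hco (by omega) hpow⟩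
  rcases Nat.lt_or_ge k (2 ^ 15) with hk | hk
  · refine H.symF_ne hk hp ?_
    rw [symF, hpow, Int.neg_ediv_of_dvd dvd_rfl, Int.ediv_self hpos.ne']
  · have hN : h.norm = h.re ^ 2 + h.im ^ 2 := by rw [Zsqrtd.norm_def]; ring
    refine not_small_im h (isCoprime_star hco ?_) ?_ _ hp (by omega) (by rw [hpow, abs_neg])
    · rw [hN, Int.odd_iff]
      obtain ⟨c, hc⟩ := h4
      rw [hc, Int.add_emod, show (4 * c) ^ 2 = 2 * (8 * c ^ 2) by ring]
      rw [Int.mul_emod_right, pow_two, Int.mul_emod, hre]; rfl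
    · rw [hN]
      have : (4 : ℤ) ≤ h.im := Int.le_of_dvd hpos h4
      have h5 : h.re ≠ 0 := by rintro h; omega
      have : 1 ≤ h.re ^ 2 := by have := sq_pos_of_ne_zero h5; omega
      nlinarith

/-! ### Odd-even Gaussian integers -/

/-- `h = u + i v` with `u` odd and `v` even and nonzero. -/
structure OddEven (h : GaussianInt) : Prop where
  re : h.re % 2 = 1
  im : h.im % 2 = 0
  ne : h.im ≠ 0

lemma gaussNorm (h : GaussianInt) : h.norm = h.re ^ 2 + h.im ^ 2 := by
  rw [Zsqrtd.norm_def]; ring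

lemma gaussRe_mul (a b : GaussianInt) : (a * b).re = a.re * b.re - a.im * b.im := by
  rw [Zsqrtd.re_mul]; ring

lemma gaussIm_mul (a b : GaussianInt) : (a * b).im = a.re * b.im + a.im * b.re := by
  rw [Zsqrtd.im_mul]

lemma gaussRe_sq (a : GaussianInt) : (a ^ 2).re = a.re ^ 2 - a.im ^ 2 := by
  rw [sq, gaussRe_mul]; ring

lemma gaussIm_sq (a : GaussianInt) : (a ^ 2).im = 2 * (a.re * a.im) := by
  rw [sq, gaussIm_mul]; ring

/-- `Re h ^ k` is odd, and `Im h ^ k / Im h ≡ k (Re h) ^ (k - 1) (mod 4)`. -/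
lemma OddEven.pow_form {h : GaussianInt} (H : OddEven h) (k : ℕ) :
    ∃ l, (h ^ k).im = h.im * l ∧ (h ^ k).re % 2 = 1 ∧ l % 2 = k % 2 ∧
      (k % 2 = 1 → (h ^ k).re % 4 = h.re % 4 ∧ l % 4 = k % 4) ∧
      (k % 2 = 0 → (h ^ k).re % 4 = 1 ∧ (l - k * h.re) % 4 = 0) := by
  have h1 := H.re
  have h2 := H.im
  obtain ⟨c, hc⟩ : ∃ c, h.im = 2 * c := ⟨h.im / 2, by omega⟩
  induction k with
  | zero => exact ⟨0, by simp⟩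
  | succ k ih =>
    obtain ⟨l, hl, hA, hlk, ho, he⟩ := ih
    have e1 : (h ^ (k + 1)).re = (h ^ k).re * h.re - 4 * (c ^ 2 * l) := by
      rw [pow_succ, gaussRe_mul, hl, hc]; ring
    have e2 : (h ^ (k + 1)).im = h.im * ((h ^ k).re + l * h.re) := by
      rw [pow_succ, gaussIm_mul, hl]; ring
    refine ⟨_, e2, ?_⟩
    rw [e1]
    have hlu : (l * h.re) % 2 = l % 2 := by rw [Int.mul_emod, h1]; omega
    generalize c ^ 2 * l = d
    have hAu : ((h ^ k).re * h.re) % 2 = 1 := by rw [Int.mul_emod, hA, h1]; rfl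
    refine ⟨by omega, by push_cast; omega, fun hk => ?_, fun hk => ?_⟩
    · obtain ⟨he1, he2⟩ := he (by omega)
      have : ((h ^ k).re * h.re) % 4 = h.re % 4 := by rw [Int.mul_emod, he1]; omega
      refine ⟨by omega, ?_⟩
      obtain ⟨q, hq⟩ : ∃ q, l - k * h.re = 4 * q := ⟨_, (Int.mul_ediv_cancel' (Int.dvd_of_emod_eq_zero he2)).symm⟩
      have h3 : l * h.re = k * (h.re * h.re) + 4 * (q * h.re) := by linear_combination h.re * hq
      obtain ⟨j, hj⟩ : ∃ j, h.re = 2 * j + 1 := ⟨h.re / 2, by omega⟩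
      have h4 : l * h.re = k + 4 * (k * (j * j + j) + q * h.re) := by
        rw [h3, hj]; ring
      rw [h4]; push_cast; omega
    · obtain ⟨ho1, ho2⟩ := ho (by omega)
      obtain ⟨j, hj⟩ : ∃ j, h.re = 2 * j + 1 := ⟨h.re / 2, by omega⟩
      obtain ⟨q, hq⟩ : ∃ q, (h ^ k).re = h.re + 4 * q := ⟨((h ^ k).re - h.re) / 4, by omega⟩
      obtain ⟨r, hr⟩ : ∃ r, l = k + 4 * r := ⟨(l - k) / 4, by omega⟩
      refine ⟨?_, ?_⟩
      · have : (h ^ k).re * h.re = 1 + 4 * (j * j + j + q * h.re) := by rw [hq, hj]; ring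
        omega
      · have : (h ^ k).re + l * h.re - ((k + 1 : ℕ) : ℤ) * h.re = 4 * (q + r * h.re) := by
          rw [hq, hr]; push_cast; ring
        rw [this]; omega

/-- The `2`-adic shape of `h ^ k`. -/
lemma OddEven.pow_two_adic {h : GaussianInt} (H : OddEven h) (σ : ℕ) {κ : ℕ} (hκ : κ % 2 = 1) :
    ∃ x o : ℤ, o % 2 = 1 ∧ (h ^ (2 ^ σ * κ)).re = 1 + 2 ^ (σ + 1) * x ∧
      (h ^ (2 ^ σ * κ)).im = 2 ^ σ * h.im * o := by
  induction σ with
  | zero =>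
    obtain ⟨l, hl, hA, hlk, -⟩ := H.pow_form κ
    refine ⟨(h ^ κ).re / 2, l, by omega, ?_, ?_⟩
    · rw [pow_zero, one_mul]; omega
    · rw [pow_zero, one_mul, pow_zero, one_mul, hl]
  | succ σ ih =>
    obtain ⟨x, o, ho, hre, him⟩ := ih
    obtain ⟨c, hc⟩ : ∃ c, h.im = 2 * c := ⟨h.im / 2, by have := H.im; omega⟩
    have e : h ^ (2 ^ (σ + 1) * κ) = (h ^ (2 ^ σ * κ)) ^ 2 := by rw [← pow_mul]; congr 1; ring
    refine ⟨x + 2 ^ σ * x ^ 2 - 2 ^ σ * (c * o) ^ 2, o * (1 + 2 ^ (σ + 1) * x), ?_, ?_, ?_⟩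
    · have : o * (1 + 2 ^ (σ + 1) * x) = o + 2 * (o * 2 ^ σ * x) := by ring
      omega
    · rw [e, gaussRe_sq, hre, him, hc]; ring
    · rw [e, gaussIm_sq, hre, him]; ring

lemma exists_two_pow_mul_odd' {k : ℕ} (hk : k ≠ 0) : ∃ σ κ, κ % 2 = 1 ∧ k = 2 ^ σ * κ := by
  obtain ⟨σ, κ, h1, h2⟩ := Nat.exists_eq_two_pow_mul_odd hk
  exact ⟨σ, κ, Nat.odd_iff.1 h1, h2⟩

lemma OddEven.im_pow_ne {h : GaussianInt} (H : OddEven h) {k : ℕ} (hk : k ≠ 0) : (h ^ k).im ≠ 0 := by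
  obtain ⟨σ, κ, h1, rfl⟩ := exists_two_pow_mul_odd' hk
  obtain ⟨x, o, ho, -, him⟩ := H.pow_two_adic σ h1
  rw [him]
  exact mul_ne_zero (mul_ne_zero (by positivity) H.ne) (by rintro rfl; omega)

lemma OddEven.pow {h : GaussianInt} (H : OddEven h) {k : ℕ} (hk : k ≠ 0) : OddEven (h ^ k) := by
  obtain ⟨l, hl, hA, -⟩ := H.pow_form k
  exact ⟨hA, by rw [hl, Int.mul_emod, H.im]; simp, H.im_pow_ne hk⟩

lemma OddEven.star {h : GaussianInt} (H : OddEven h) : OddEven (star h) :=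
  ⟨by simpa using H.re, by have := H.im; simp; omega, by simpa using H.ne⟩

/-- `(1 + 2 B η) ^ k` to the second order. -/
lemma one_add_pow_form (B : ℤ) (η : GaussianInt) {k : ℕ} (hk : k ≠ 0) :
    ∃ (c : ℕ) (o : ℤ) (τ : GaussianInt), o % 2 = 1 ∧
      (1 + 2 * (B : GaussianInt) * η) ^ k =
        1 + 2 ^ (c + 1) * (B : GaussianInt) * η * ((o : GaussianInt) + (B : GaussianInt) * τ) := by
  obtain ⟨σ, κ, h1, rfl⟩ := exists_two_pow_mul_odd' hk
  refine ⟨σ, κ, ?_⟩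
  have hdoub : ∀ σ, ∃ τ : GaussianInt, (1 + 2 * (B : GaussianInt) * η) ^ (2 ^ σ * κ) =
      1 + 2 ^ (σ + 1) * (B : GaussianInt) * η * (((κ : ℤ) : GaussianInt) + (B : GaussianInt) * τ) := by
    intro σ
    induction σ with
    | zero =>
      have h2 : ∀ κ : ℕ, ∃ τ : GaussianInt, (1 + 2 * (B : GaussianInt) * η) ^ κ =
          1 + 2 * (B : GaussianInt) * η * (((κ : ℤ) : GaussianInt) + (B : GaussianInt) * τ) := by
        intro κ
        induction κ with
        | zero => exact ⟨0, by simp⟩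
        | succ κ ih =>
          obtain ⟨τ, hτ⟩ := ih
          refine ⟨τ + 2 * η * (((κ : ℤ) : GaussianInt) + (B : GaussianInt) * τ), ?_⟩
          rw [pow_succ, hτ]
          push_cast
          ring
      simpa using h2 κ
    | succ σ ih =>
      obtain ⟨τ, hτ⟩ := ih
      refine ⟨τ + 2 ^ σ * η * (((κ : ℤ) : GaussianInt) + (B : GaussianInt) * τ) ^ 2, ?_⟩
      rw [show 2 ^ (σ + 1) * κ = 2 ^ σ * κ * 2 by ring, pow_mul, hτ]
      ring
  obtain ⟨τ, hτ⟩ := hdoub σ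
  exact ⟨τ, by omega, hτ⟩

lemma re_dvd_re_pow (h : GaussianInt) (k : ℕ) :
    h.re ∣ (h ^ (2 * k + 1)).re ∧ h.re ∣ (h ^ (2 * k)).im := by
  induction k with
  | zero => simp
  | succ k ih =>
    obtain ⟨⟨a, ha⟩, -⟩ := ih
    have e1 : (h ^ (2 * k + 1 + 1)).im = h.re * (a * h.im + (h ^ (2 * k + 1)).im) := by
      rw [pow_succ, gaussIm_mul, ha]; ring
    refine ⟨?_, ?_⟩
    · rw [show 2 * (k + 1) + 1 = 2 * k + 1 + 1 + 1 by ring, pow_succ, gaussRe_mul, e1]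
      exact ⟨(h ^ (2 * k + 1 + 1)).re - (a * h.im + (h ^ (2 * k + 1)).im) * h.im, by ring⟩
    · rw [show 2 * (k + 1) = 2 * k + 1 + 1 by ring, e1]
      exact Dvd.intro _ rfl

/-- `one_add_pow_form`, multiplied by `g` and written in coordinates. -/
lemma mul_one_add_pow_form (g : GaussianInt) (B : ℤ) (η : GaussianInt) {k : ℕ} (hk : k ≠ 0) :
    ∃ (c : ℕ) (o : ℤ) (τ : GaussianInt), o % 2 = 1 ∧
      (g * (1 + 2 * (B : GaussianInt) * η) ^ k).re =
        g.re + 2 ^ (c + 1) * B * (o * (g * η).re + B * (g * η * τ).re) ∧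
      (g * (1 + 2 * (B : GaussianInt) * η) ^ k).im =
        g.im + 2 ^ (c + 1) * B * (o * (g * η).im + B * (g * η * τ).im) := by
  obtain ⟨c, o, τ, ho, h⟩ := one_add_pow_form B η hk
  have e : g * (1 + 2 * (B : GaussianInt) * η) ^ k = g + ((2 ^ (c + 1) * B : ℤ) : GaussianInt) *
      ((o : GaussianInt) * (g * η) + (B : GaussianInt) * (g * η * τ)) := by
    rw [h]; push_cast; ring
  refine ⟨c, o, τ, ho, ?_, ?_⟩
  · rw [e, Zsqrtd.re_add, Zsqrtd.re_smul, Zsqrtd.re_add, Zsqrtd.re_smul, Zsqrtd.re_smul]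
  · rw [e, Zsqrtd.im_add, Zsqrtd.im_smul, Zsqrtd.im_add, Zsqrtd.im_smul, Zsqrtd.im_smul]

lemma abs_one_cases {x : ℤ} (h : |x| = 1) : x = 1 ∨ x = -1 := by
  rcases abs_cases x with ⟨h1, -⟩ | ⟨h1, -⟩ <;> omega

lemma OddEven.re_pow_odd {h : GaussianInt} (H : OddEven h) {k : ℕ} (hk : k ≠ 0) :
    |(h ^ (2 * k + 1)).re| ≠ 1 := by
  intro hX
  have hu : h.re = 1 ∨ h.re = -1 := by
    have := Int.isUnit_iff.1 (isUnit_of_dvd_unit (re_dvd_re_pow h k).1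
      (Int.isUnit_iff.2 (abs_one_cases hX)))
    exact this
  have hXu : (h ^ (2 * k + 1)).re = h.re := by
    obtain ⟨l, -, -, -, h1, -⟩ := H.pow_form (2 * k + 1)
    have := (h1 (by omega)).1
    rcases abs_one_cases hX with h2 | h2 <;> rcases hu with h3 | h3 <;> omega
  obtain ⟨c, hc⟩ : ∃ c, h.im = 2 * c := ⟨h.im / 2, by have := H.im; omega⟩
  have hu2 : h.re ^ 2 = 1 := by rcases hu with h | h <;> rw [h] <;> norm_num
  have hs : h ^ 2 = 1 + 2 * (h.im : GaussianInt) * (⟨-c, h.re⟩ : GaussianInt) := by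
    apply Zsqrtd.ext
    · simp [sq, hc]; linear_combination hu2
    · simp [sq]; ring
  obtain ⟨c', o, τ, ho, h1, -⟩ := mul_one_add_pow_form h h.im ⟨-c, h.re⟩ hk
  rw [← hs, ← pow_mul, ← pow_succ', hXu, gaussRe_mul _ τ, gaussRe_mul h, gaussIm_mul h] at h1
  have h2 : (2 : ℤ) ^ (c' + 1) * h.im ≠ 0 := mul_ne_zero (by positivity) H.ne
  have h3 : o * (h.re * -c - h.im * h.re) + h.im * ((h.re * -c - h.im * h.re) * τ.re -
      (h.re * h.re + h.im * -c) * τ.im) = 0 := by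
    refine (mul_eq_zero.1 (?_ : (2 : ℤ) ^ (c' + 1) * h.im * _ = 0)).resolve_left h2
    linear_combination -h1
  rw [hc] at h3
  have hc0 : c ≠ 0 := by rintro rfl; exact H.ne (by rw [hc]; rfl)
  have h4 : h.re * o * 3 + 2 * (3 * h.re * c * τ.re + (h.re * h.re - 2 * c * c) * τ.im) = 0 := by
    refine (mul_eq_zero.1 (?_ : c * _ = 0)).resolve_left hc0
    linear_combination -h3
  rcases hu with h5 | h5 <;> rw [h5] at h4 <;> omega

lemma pow_four_form {h : GaussianInt} {d n₀ : ℤ} {e₀ : GaussianInt}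
    (h4 : h ^ 4 = n₀ + d * e₀) (j : ℕ) :
    ∃ (n : ℤ) (e : GaussianInt), h ^ (4 * j) = n + d * e := by
  induction j with
  | zero => exact ⟨1, 0, by simp⟩
  | succ j ih =>
    obtain ⟨n, e, he⟩ := ih
    refine ⟨n * n₀, n * e₀ + e * (n₀ + d * e₀), ?_⟩
    rw [mul_add, pow_add, he, mul_one, h4]; push_cast; ring

lemma add_dvd_pow (h : GaussianInt) (j : ℕ) :
    h.re + h.im ∣ (h ^ (4 * j + 1)).re + (h ^ (4 * j + 1)).im := by
  have h4 : h ^ 4 = ((-4 * h.im ^ 4 : ℤ) : GaussianInt) + ((h.re + h.im : ℤ) : GaussianInt) *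
      ⟨h.re ^ 3 - h.re ^ 2 * h.im - 5 * h.re * h.im ^ 2 + 5 * h.im ^ 3,
        4 * h.re * h.im * (h.re - h.im)⟩ := by
    rw [show 4 = 2 * 2 by rfl, pow_mul]
    apply Zsqrtd.ext
    · rw [gaussRe_sq, gaussRe_sq, gaussIm_sq, Zsqrtd.re_add, Zsqrtd.re_smul, Zsqrtd.re_intCast]; ring
    · rw [gaussIm_sq, gaussRe_sq, gaussIm_sq, Zsqrtd.im_add, Zsqrtd.im_smul, Zsqrtd.im_intCast]; ring
  obtain ⟨n, e, he⟩ := pow_four_form h4 j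
  rw [pow_succ, he, add_mul, Zsqrtd.re_add, Zsqrtd.im_add, Zsqrtd.re_smul, Zsqrtd.im_smul,
    mul_assoc, Zsqrtd.re_smul, Zsqrtd.im_smul]
  exact ⟨n + (e * h).re + (e * h).im, by ring⟩

lemma sub_dvd_pow (h : GaussianInt) (j : ℕ) :
    h.re - h.im ∣ (h ^ (4 * j + 3)).re + (h ^ (4 * j + 3)).im := by
  have h4 : h ^ 4 = ((-4 * h.im ^ 4 : ℤ) : GaussianInt) + ((h.re - h.im : ℤ) : GaussianInt) *
      ⟨h.re ^ 3 + h.re ^ 2 * h.im - 5 * h.re * h.im ^ 2 - 5 * h.im ^ 3,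
        4 * h.re * h.im * (h.re + h.im)⟩ := by
    rw [show 4 = 2 * 2 by rfl, pow_mul]
    apply Zsqrtd.ext
    · rw [gaussRe_sq, gaussRe_sq, gaussIm_sq, Zsqrtd.re_add, Zsqrtd.re_smul, Zsqrtd.re_intCast]; ring
    · rw [gaussIm_sq, gaussRe_sq, gaussIm_sq, Zsqrtd.im_add, Zsqrtd.im_smul, Zsqrtd.im_intCast]; ring
  obtain ⟨n, e, he⟩ := pow_four_form h4 j
  have h3 : (h ^ 3).re + (h ^ 3).im = (h.re - h.im) * (h.re ^ 2 + 4 * h.re * h.im + h.im ^ 2) := by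
    rw [pow_succ, gaussRe_mul, gaussIm_mul, gaussRe_sq, gaussIm_sq]; ring
  rw [pow_add, he, add_mul, Zsqrtd.re_add, Zsqrtd.im_add, Zsqrtd.re_smul, Zsqrtd.im_smul,
    mul_assoc, Zsqrtd.re_smul, Zsqrtd.im_smul]
  exact ⟨n * (h.re ^ 2 + 4 * h.re * h.im + h.im ^ 2) + (e * h ^ 3).re + (e * h ^ 3).im, by
    linear_combination n * h3⟩

/-- With `h = u + i v`: if `m ≡ 1 (mod 4)` then `u + v` divides `Re h ^ m + Im h ^ m`, and if
`m ≡ 3 (mod 4)` then `u - v` does; when that divisor is a unit, `h ^ 2` is congruent to `1` modulo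
`2 v`, and the second-order expansion of `h ^ (m - 1)` gives the result. -/
lemma OddEven.add_pow_odd {h : GaussianInt} (H : OddEven h) {k : ℕ} (hk : k ≠ 0) :
    |(h ^ (2 * k + 1)).re + (h ^ (2 * k + 1)).im| ≠ 1 := by
  intro hX
  have hX' := Int.isUnit_iff.2 (abs_one_cases hX)
  have hXX := abs_one_cases hX
  have hi := H.im
  have hi0 := H.ne
  obtain ⟨c, hc⟩ : ∃ c, h.im = 2 * c := ⟨h.im / 2, by omega⟩
  have key : ∀ w : ℤ, w = 1 ∨ w = -1 → ∀ η : GaussianInt,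
      h ^ 2 = 1 + 2 * (h.im : GaussianInt) * η → ∃ (c' : ℕ) (o : ℤ) (τ : GaussianInt), o % 2 = 1 ∧
      (h ^ (2 * k + 1)).re + (h ^ (2 * k + 1)).im = h.re + h.im + 2 ^ (c' + 1) * h.im *
        (o * ((h * η).re + (h * η).im) + h.im * (((h * η).re + (h * η).im) * τ.re +
          ((h * η).re - (h * η).im) * τ.im)) := by
    intro w hw η hs
    obtain ⟨c', o, τ, ho, h1, h2⟩ := mul_one_add_pow_form h h.im η hk
    rw [← hs, ← pow_mul, ← pow_succ', gaussRe_mul _ τ] at h1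
    rw [← hs, ← pow_mul, ← pow_succ', gaussIm_mul _ τ] at h2
    exact ⟨c', o, τ, ho, by rw [h1, h2]; ring⟩
  rcases Nat.even_or_odd' k with ⟨j, hj | hj⟩
  · have hd := add_dvd_pow h j
    rw [show 4 * j + 1 = 2 * k + 1 by omega] at hd
    have hu := Int.isUnit_iff.1 (isUnit_of_dvd_unit hd hX')
    obtain ⟨w, hw⟩ : ∃ w, w = h.re + h.im := ⟨_, rfl⟩
    rw [← hw] at hu
    have hre : h.re = w - h.im := by omega
    have hu2 : w ^ 2 = 1 := by rcases hu with h5 | h5 <;> rw [h5] <;> norm_num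
    obtain ⟨c', o, τ, ho, h1⟩ := key w hu ⟨-w, w - h.im⟩ (by
      apply Zsqrtd.ext
      · simp [sq, hre]; linear_combination hu2
      · simp [sq, hre]; ring)
    rw [gaussRe_mul, gaussIm_mul] at h1
    simp only [hre] at h1
    have h3 : (h ^ (2 * k + 1)).re + (h ^ (2 * k + 1)).im = w + 2 ^ (c' + 1) * h.im * (h.im *
        (w * o * (-3) + 2 * (o * h.im + c * (2 * h.im - 3 * w) * τ.re + (3 * w * c - 1) * τ.im))) := by
      rw [h1]
      linear_combination 2 ^ (c' + 1) * h.im * (-2 * τ.im * h.im * hu2) + 2 ^ (c' + 1) * h.im * h.im * ((2 * h.im - 3 * w) * τ.re + 3 * w * τ.im) * hc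
    generalize o * h.im + c * (2 * h.im - 3 * w) * τ.re + (3 * w * c - 1) * τ.im = K at h3
    have h4 : w * o * (-3) + 2 * K ≠ 0 := by rcases hu with h5 | h5 <;> rw [h5] <;> omega
    by_cases h6 : (h ^ (2 * k + 1)).re + (h ^ (2 * k + 1)).im = w
    · refine mul_ne_zero (mul_ne_zero (pow_ne_zero (c' + 1) two_ne_zero) hi0) (mul_ne_zero hi0 h4)
        ?_
      linear_combination h6 - h3
    · have h7 : (h ^ (2 * k + 1)).re + (h ^ (2 * k + 1)).im = -w := by omega
      have h8 : 2 * w = 4 * -(2 ^ c' * c * (h.im * (w * o * (-3) + 2 * K))) := by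
        linear_combination h7 - h3 - 2 * 2 ^ c' * (h.im * (w * o * (-3) + 2 * K)) * hc
      omega
  · have hd := sub_dvd_pow h j
    rw [show 4 * j + 3 = 2 * k + 1 by omega] at hd
    have hu := Int.isUnit_iff.1 (isUnit_of_dvd_unit hd hX')
    obtain ⟨w, hw⟩ : ∃ w, w = h.re - h.im := ⟨_, rfl⟩
    rw [← hw] at hu
    have hre : h.re = w + h.im := by omega
    have hu2 : w ^ 2 = 1 := by rcases hu with h5 | h5 <;> rw [h5] <;> norm_num
    obtain ⟨c', o, τ, ho, h1⟩ := key w hu ⟨w, w + h.im⟩ (by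
      apply Zsqrtd.ext
      · simp [sq, hre]; linear_combination hu2
      · simp [sq, hre]; ring)
    rw [gaussRe_mul, gaussIm_mul] at h1
    simp only [hre] at h1
    obtain ⟨K, h3⟩ : ∃ K, (h ^ (2 * k + 1)).re + (h ^ (2 * k + 1)).im = w + 2 * h.im + 4 * h.im * K := by
      refine ⟨2 ^ c' * (o * (1 + 3 * w * c) + c * ((2 + 3 * w * h.im) * τ.re - (3 * w * h.im + 2 * h.im ^ 2) * τ.im)), ?_⟩
      rw [h1]
      linear_combination 2 ^ (c' + 1) * h.im * ((2 * o + 2 * h.im * τ.re) * hu2 +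
        (3 * o * w + (2 + 3 * w * h.im) * τ.re - (3 * w * h.im + 2 * h.im ^ 2) * τ.im) * hc)
    by_cases h6 : (h ^ (2 * k + 1)).re + (h ^ (2 * k + 1)).im = w
    · refine mul_ne_zero (mul_ne_zero two_ne_zero hi0) (?_ : 1 + 2 * K ≠ 0) ?_
      · omega
      · linear_combination h6 - h3
    · have h7 : (h ^ (2 * k + 1)).re + (h ^ (2 * k + 1)).im = -w := by omega
      have h8 : w = 2 * (-c * (1 + 2 * K)) := by
        have : 2 * w = 2 * (2 * (-c * (1 + 2 * K))) := by
          linear_combination h7 - h3 - 2 * (1 + 2 * K) * hc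
        omega
      omega

/-! ### Exponents for which a power is nice -/

/-- Multiplying `g` by a power of `h` changes its imaginary part, if `Im g = ± Im h`: with
`h ^ k = A + i B`, the equation `(A - 1) Im g = - B Re g` is impossible `2`-adically. -/
lemma OddEven.im_pow_mul_ne {g h : GaussianInt} (G : OddEven g) (H : OddEven h)
    (hgh : g.im = h.im ∨ g.im = -h.im) {k : ℕ} (hk : k ≠ 0) : (h ^ k * g).im ≠ g.im := by
  intro e
  obtain ⟨σ, κ, h1, rfl⟩ := exists_two_pow_mul_odd' hk
  obtain ⟨x, o, ho, hre, him⟩ := H.pow_two_adic σ h1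
  rw [gaussIm_mul, hre, him] at e
  have h2 : (2 : ℤ) ^ σ * h.im ≠ 0 := mul_ne_zero (by positivity) H.ne
  have h3 : (o * g.re) % 2 = 1 := by rw [Int.mul_emod, ho, G.re]; rfl
  rcases hgh with h4 | h4 <;> rw [h4] at e
  · refine mul_ne_zero h2 (?_ : 2 * x + o * g.re ≠ 0) ?_
    · omega
    · linear_combination e
  · refine mul_ne_zero h2 (?_ : -2 * x + o * g.re ≠ 0) ?_
    · omega
    · linear_combination e

/-- If `Im h ^ m = - Im h` then `N(h) - 1` and `m + 1` have the same `2`-adic valuation. -/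
lemma OddEven.norm_of_im_neg {h : GaussianInt} (H : OddEven h) {m : ℕ} (e : (h ^ m).im = -h.im) :
    ∃ (σ κ : ℕ) (o : ℤ), κ % 2 = 1 ∧ m + 1 = 2 ^ σ * κ ∧ o % 2 = 1 ∧
      h.re ^ 2 + h.im ^ 2 - 1 = 2 ^ σ * o := by
  obtain ⟨σ, κ, h1, h2⟩ := exists_two_pow_mul_odd' (Nat.succ_ne_zero m)
  obtain ⟨x, o, ho, hre, him⟩ := H.pow_two_adic σ h1
  rw [← h2, pow_succ, gaussRe_mul, e] at hre
  rw [← h2, pow_succ, gaussIm_mul, e] at him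
  have h3 : (h ^ m).re = h.re + 2 ^ σ * o := by
    refine mul_left_cancel₀ H.ne ?_
    linear_combination him
  have h4 : (o * h.re) % 2 = 1 := by rw [Int.mul_emod, ho, H.re]; rfl
  refine ⟨σ, κ, 2 * x - o * h.re, h1, h2, by omega, ?_⟩
  rw [h3] at hre
  linear_combination hre

lemma exists_prime_three_mod_four (n : ℕ) (hn : n % 4 = 3) :
    ∃ p, p.Prime ∧ p ∣ n ∧ p % 4 = 3 := by
  induction n using Nat.strong_induction_on with
  | _ n ih =>
    have h1 : n ≠ 1 := by omega
    have hp := Nat.minFac_prime h1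
    obtain ⟨q, hq⟩ := Nat.minFac_dvd n
    generalize n.minFac = p at hp hq
    by_cases h3 : p % 4 = 3
    · exact ⟨p, hp, ⟨q, hq⟩, h3⟩
    · have h4 : p * q % 4 = 3 := by rw [← hq]; exact hn
      have h5 : q % 4 = 3 := by
        rw [Nat.mul_mod] at h4
        have := Nat.mod_lt p (show 0 < 4 by norm_num)
        have := Nat.mod_lt q (show 0 < 4 by norm_num)
        generalize p % 4 = a at *
        generalize q % 4 = b at *
        interval_cases a <;> interval_cases b <;> simp_all
      have h6 : q < n := by
        have := hp.two_le
        rw [hq]; nlinarith [show 0 < q by omega]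
      obtain ⟨r, hr, hrq, hr4⟩ := ih q h6 h5
      exact ⟨r, hr, hrq.trans ⟨p, by rw [hq]; ring⟩, hr4⟩

lemma dvd_two_pow_odd {l : ℤ} {a : ℕ} (hl : l ∣ 2 ^ a) (ho : l % 2 = 1) : l = 1 ∨ l = -1 := by
  have : IsCoprime l (2 ^ a) := IsCoprime.pow_right (Int.isCoprime_two_right.2 (Int.odd_iff.2 ho))
  exact Int.isUnit_iff.1 (this.isUnit_of_dvd' dvd_rfl hl)

lemma Int.sq_mod_eight_eq_one_of_odd {x : ℤ} (hx : Odd x) : x ^ 2 % 8 = 1 := by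
  obtain ⟨c, rfl⟩ := hx
  have h := Int.even_mul_succ_self c
  obtain ⟨d, hd⟩ := h
  have : (2 * c + 1) ^ 2 = 8 * d + 1 := by linear_combination 4 * hd
  omega

/-- An exponent `m ≡ 3 (mod 8)` with `Im h ^ m = - Im h` and `Im h = ± 2`: modulo
`M = (Re h) ^ 2 - 4` this says that `-2` is a square, so `|M| ≢ 5 (mod 8)`. -/
lemma re_of_im_two {h : GaussianInt} (hu : h.re % 2 = 1) (hv : h.im = 2 ∨ h.im = -2) {j : ℕ}
    (e : (h ^ (8 * j + 3)).im = -h.im) : h.re = 1 ∨ h.re = -1 := by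
  have hv2 : h.im ^ 2 = 4 := by rcases hv with h | h <;> rw [h] <;> norm_num
  set M := h.re ^ 2 - 4 with hM
  have h4 : h ^ 4 = -64 + (M : GaussianInt) * ⟨M - 16, 4 * h.re * h.im⟩ := by
    rw [show 4 = 2 * 2 by rfl, pow_mul]
    apply Zsqrtd.ext
    · rw [gaussRe_sq, gaussRe_sq, gaussIm_sq, Zsqrtd.re_add, Zsqrtd.re_smul]
      simp only [hM, Zsqrtd.re_neg, Zsqrtd.re_ofNat]
      linear_combination (h.im ^ 2 - 6 * h.re ^ 2 + 4) * hv2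
    · rw [gaussIm_sq, gaussRe_sq, gaussIm_sq, Zsqrtd.im_add, Zsqrtd.im_smul]
      simp only [hM, Zsqrtd.im_neg, Zsqrtd.im_ofNat]
      linear_combination -4 * h.re * h.im * hv2
  have hpow : ∀ j : ℕ, ∃ f : GaussianInt,
      h ^ (4 * j) = (((-64) ^ j : ℤ) : GaussianInt) + (M : GaussianInt) * f := by
    intro j
    induction j with
    | zero => exact ⟨0, by simp⟩
    | succ j ih =>
      obtain ⟨f, hf⟩ := ih
      refine ⟨((-64) ^ j) * ⟨M - 16, 4 * h.re * h.im⟩ + f * h ^ 4, ?_⟩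
      rw [mul_add, pow_add, hf, mul_one, add_mul, h4]; push_cast; ring
  obtain ⟨f, hf⟩ := hpow (2 * j)
  have h3 : (h ^ 3).im = h.im * (3 * M + 8) := by
    rw [pow_succ, gaussIm_mul, gaussRe_sq, gaussIm_sq, hM]
    linear_combination -h.im * hv2
  have hd : M ∣ ((2 ^ (6 * j + 2)) ^ 2 : ℤ) - (-2) := by
    rw [pow_add, show 8 * j = 4 * (2 * j) by ring, hf, add_mul, Zsqrtd.im_add, Zsqrtd.im_smul,
      mul_assoc, Zsqrtd.im_smul, h3] at e
    have e64 : ((-64) ^ (2 * j) : ℤ) = (2 ^ (6 * j)) ^ 2 := by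
      have e1 : (2 ^ (6 * j) : ℤ) ^ 2 = (64 ^ 2) ^ j := by
        rw [pow_mul, ← pow_mul, mul_comm j 2, pow_mul]; norm_num
      rw [e1, pow_mul]; norm_num
    rw [e64] at e
    have h5 : M ∣ h.im * (8 * (2 ^ (6 * j)) ^ 2 + 1) := by
      refine ⟨-((f * h ^ 3).im + 3 * h.im * (2 ^ (6 * j)) ^ 2), ?_⟩
      linear_combination e
    have h6 : ((2 ^ (6 * j + 2)) ^ 2 : ℤ) - (-2) = 2 * (8 * (2 ^ (6 * j)) ^ 2 + 1) := by ring
    rw [h6]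
    rcases hv with h | h <;> rw [h] at h5
    · exact h5
    · rwa [neg_mul, dvd_neg] at h5
  have hu8 : h.re ^ 2 % 8 = 1 := Int.sq_mod_eight_eq_one_of_odd (Int.odd_iff.2 hu)
  by_contra hne
  have hM0 : 0 ≤ M := by
    have : h.re ≤ -3 ∨ 3 ≤ h.re := by omega
    have : 9 ≤ h.re ^ 2 := by rcases this with h | h <;> nlinarith
    omega
  have hJ := jacobiSym_congr hd
  have h5 : jacobiSym (-2) M.natAbs = -1 := by
    have hMn : M.natAbs % 8 = 5 := by omega
    have hodd : Odd M.natAbs := Nat.odd_iff.2 (by omega)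
    rw [show (-2 : ℤ) = -1 * 2 by rfl, jacobiSym.mul_left, jacobiSym.at_neg_one hodd,
      jacobiSym.at_two hodd, ZMod.χ₄_nat_one_mod_four (by omega), ZMod.χ₈_nat_eq_if_mod_eight]
    simp [hMn]; omega
  rw [h5, jacobiSym.pow_left] at hJ
  nlinarith [sq_nonneg (jacobiSym (2 ^ (6 * j + 2)) M.natAbs)]

/-- `Im h` divides `Im h ^ m` with an odd quotient, hence `± 1`; it is `-1` by `OddEven.im_pow_mul_ne`.
Then `m ≡ 3 (mod 8)` if `Im h = ± 2`, and otherwise `m ≡ 7 (mod 8)`, in which case `m` can be replaced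
by one of its prime factors. -/
lemma OddEven.im_pow_odd {h : GaussianInt} (H : OddEven h) {k : ℕ} (hk : k ≠ 0) {a : ℕ}
    (hY : |(h ^ (2 * k + 1)).im| = 2 ^ a) : k = 1 ∧ h.norm = 5 := by
  obtain ⟨l, hl, -, hlm, hl4, -⟩ := H.pow_form (2 * k + 1)
  have hYd : (h ^ (2 * k + 1)).im ∣ 2 ^ a := by rw [← hY]; exact (dvd_abs _ _).2 dvd_rfl
  have hl1 : l = 1 ∨ l = -1 :=
    dvd_two_pow_odd ((Dvd.intro_left _ hl.symm).trans hYd) (by omega)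
  have hv : |h.im| = 2 ^ a := by
    rw [← hY, hl]; rcases hl1 with h | h <;> rw [h] <;> simp
  have e : (h ^ (2 * k + 1)).im = -h.im := by
    rcases hl1 with h1 | h1
    · exfalso
      refine H.im_pow_mul_ne H (Or.inl rfl) (k := 2 * k) (by omega) ?_
      rw [← pow_succ, hl, h1, mul_one]
    · rw [hl, h1]; ring
  have hm4 := (hl4 (by omega)).2
  have hl1' : l = -1 := by
    refine mul_left_cancel₀ H.ne ?_
    rw [← hl, e]; ring
  have hu8 : h.re ^ 2 % 8 = 1 := Int.sq_mod_eight_eq_one_of_odd (Int.odd_iff.2 H.re)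
  rcases Nat.lt_or_ge a 2 with ha | ha
  · -- `h.im = ± 2`
    have ha1 : a = 1 := by
      have := H.im
      interval_cases a
      · rcases abs_one_cases (by simpa using hv) with h1 | h1 <;> omega
      · rfl
    rw [ha1, pow_one] at hv
    have hv' : h.im = 2 ∨ h.im = -2 := by
      rcases abs_cases h.im with ⟨h1, -⟩ | ⟨h1, -⟩ <;> omega
    have hv2 : h.im ^ 2 = 4 := by rcases hv' with h | h <;> rw [h] <;> norm_num
    obtain ⟨σ, κ, o, hκ, hσ, ho, hN⟩ := H.norm_of_im_neg e
    have hσ2 : σ = 2 := by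
      rcases Nat.lt_trichotomy σ 2 with h1 | h1 | h1
      · interval_cases σ <;> omega
      · exact h1
      · obtain ⟨t, rfl⟩ := Nat.exists_eq_add_of_lt h1
        have : h.re ^ 2 + h.im ^ 2 - 1 = 8 * (2 ^ t * o) := by rw [hN]; ring
        omega
    rw [hσ2] at hσ
    obtain ⟨j, hj⟩ : ∃ j, 2 * k + 1 = 8 * j + 3 := ⟨κ / 2, by omega⟩
    rw [hj] at e
    have hu1 := re_of_im_two H.re hv' e
    have hu2 : h.re ^ 2 = 1 := by rcases hu1 with h | h <;> rw [h] <;> norm_num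
    refine ⟨?_, by rw [gaussNorm]; omega⟩
    by_contra hk1
    have e3 : (h ^ 3).im = -h.im := by
      rw [pow_succ, gaussIm_mul, gaussRe_sq, gaussIm_sq]
      linear_combination h.im * (3 * hu2 - hv2)
    refine (H.pow (k := 3) (by norm_num)).im_pow_mul_ne H (Or.inr e3) (k := 8 * j) (by omega) ?_
    rw [← pow_add, e, e3]
  · -- `h.im` is divisible by `4`
    exfalso
    have hv8 : h.im ^ 2 % 8 = 0 := by
      rw [← sq_abs, hv]
      obtain ⟨t, rfl⟩ := Nat.exists_eq_add_of_le ha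
      have : ((2 : ℤ) ^ (2 + t)) ^ 2 = 8 * (2 * (2 ^ t) ^ 2) := by ring
      omega
    -- replacing `h` by `h ^ q` makes the exponent a prime `p ≡ 3 (mod 4)`
    obtain ⟨p, hp, ⟨q, hq⟩, hp4⟩ := exists_prime_three_mod_four (2 * k + 1) (by omega)
    have hq0 : q ≠ 0 := by rintro rfl; omega
    have hg := H.pow hq0
    obtain ⟨l₁, hl₁, -, -, -⟩ := H.pow_form q
    obtain ⟨l₂, hl₂, -, -, -⟩ := hg.pow_form p
    have hgp : (h ^ q) ^ p = h ^ (2 * k + 1) := by rw [← pow_mul, hq, mul_comm]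
    rw [hgp, e] at hl₂
    have hll : l₁ * l₂ = -1 := by
      refine mul_left_cancel₀ H.ne ?_
      linear_combination -hl₂ - l₂ * hl₁
    have hl₁' : l₁ = 1 ∨ l₁ = -1 := Int.isUnit_iff.1 (IsUnit.of_mul_eq_one (-l₂) (by linarith))
    have hgi : (h ^ q).im = h.im ∨ (h ^ q).im = -h.im := by
      rcases hl₁' with h | h <;> rw [hl₁, h] <;> simp
    have hga : |(h ^ q).im| = 2 ^ a := by
      rcases hgi with h | h <;> rw [h] <;> simp [hv]
    have eg : ((h ^ q) ^ p).im = -(h ^ q).im := by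
      rcases hl₁' with h1 | h1
      · rw [hgp, e, hl₁, h1, mul_one]
      · exfalso
        refine hg.im_pow_mul_ne hg (Or.inl rfl) (k := p - 1) (by omega) ?_
        rw [← pow_succ, Nat.sub_add_cancel hp.one_le, hgp, e, hl₁, h1]; ring
    have hp8 : p % 8 = 3 ∨ p % 8 = 7 := by omega
    rcases hp8 with hp8 | hp8
    · obtain ⟨σ, κ, o, hκ, hσ, ho, hN⟩ := hg.norm_of_im_neg eg
      have hgu8 : (h ^ q).re ^ 2 % 8 = 1 := Int.sq_mod_eight_eq_one_of_odd (Int.odd_iff.2 hg.re)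
      have hgv8 : (h ^ q).im ^ 2 % 8 = 0 := by
        rcases hgi with h | h <;> rw [h]
        · exact hv8
        · rw [neg_sq]; exact hv8
      rcases Nat.lt_or_ge σ 3 with h1 | h1
      · interval_cases σ <;> omega
      · obtain ⟨t, rfl⟩ := Nat.exists_eq_add_of_le h1
        have : p + 1 = 8 * (2 ^ t * κ) := by rw [hσ]; ring
        omega
    · exact im_pow_ne_neg ha hga hg.re hp hp8 eg

lemma OddEven.re_pow_even {h : GaussianInt} (H : OddEven h) {k : ℕ} (hk : k ≠ 0) :
    |(h ^ (2 * k)).re| ≠ 1 := by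
  intro e
  have h1 := (H.pow hk).re
  have h2 := (H.pow hk).ne
  have h3 := (H.pow hk).im
  rw [mul_comm, pow_mul, gaussRe_sq] at e
  generalize (h ^ k).re = x at *
  generalize (h ^ k).im = y at *
  have hu : IsUnit ((x - y) * (x + y)) := by
    rw [show (x - y) * (x + y) = x ^ 2 - y ^ 2 by ring]
    exact Int.isUnit_iff.2 (abs_one_cases e)
  have hu1 := Int.isUnit_iff.1 (isUnit_of_mul_isUnit_left hu)
  have hu2 := Int.isUnit_iff.1 (isUnit_of_mul_isUnit_right hu)
  omega

lemma OddEven.re_pow {h : GaussianInt} (H : OddEven h) {m : ℕ} (hm : m ≠ 0)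
    (e : |(h ^ m).re| = 1) : m = 1 := by
  rcases Nat.even_or_odd' m with ⟨k, rfl | rfl⟩
  · exact absurd e (H.re_pow_even (by omega))
  · by_contra hk
    exact H.re_pow_odd (by omega) e

lemma OddEven.im_pow_even {h : GaussianInt} (H : OddEven h) {k : ℕ} (hk : k ≠ 0) {a : ℕ}
    (hY : |(h ^ (2 * k)).im| = 2 ^ a) : k = 1 ∧ |h.re| = 1 ∧ ∃ b, |h.im| = 2 ^ b := by
  have hX := (H.pow hk).re
  have hXd : (h ^ k).re ∣ 2 ^ a := by
    rw [← hY, dvd_abs, mul_comm, pow_mul, gaussIm_sq]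
    exact ⟨2 * (h ^ k).im, by ring⟩
  have hX1 : |(h ^ k).re| = 1 := by
    rcases dvd_two_pow_odd hXd hX with h | h <;> rw [h] <;> rfl
  have hk1 := H.re_pow hk hX1
  subst hk1
  rw [pow_one] at hX1
  refine ⟨rfl, hX1, ?_⟩
  rw [mul_one, gaussIm_sq, abs_mul, abs_mul, hX1, one_mul, abs_two] at hY
  rcases a with _ | b
  · omega
  · exact ⟨b, by rw [pow_succ] at hY; omega⟩

lemma OddEven.sub_pow_odd {h : GaussianInt} (H : OddEven h) {k : ℕ} (hk : k ≠ 0) :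
    |(h ^ (2 * k + 1)).re - (h ^ (2 * k + 1)).im| ≠ 1 := by
  have := H.star.add_pow_odd hk
  rwa [← star_pow, Zsqrtd.re_star, Zsqrtd.im_star, ← sub_eq_add_neg] at this

lemma OddEven.add_pow_exponent {h : GaussianInt} (H : OddEven h) {m : ℕ} (hm : m ≠ 0)
    (e : |(h ^ m).re + (h ^ m).im| = 1) : ∃ t, m = 2 ^ t := by
  obtain ⟨t, κ, h1, rfl⟩ := exists_two_pow_mul_odd' hm
  refine ⟨t, ?_⟩
  by_contra hne
  obtain ⟨k, rfl⟩ : ∃ k, κ = 2 * k + 1 := ⟨κ / 2, by omega⟩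
  have hk : k ≠ 0 := by rintro rfl; simp at hne
  rw [pow_mul] at e
  exact (H.pow (pow_ne_zero t two_ne_zero)).add_pow_odd hk e

/-- The solutions of `x ^ 2 - 1 = 2 · 4 ^ n · w` with `w` odd, modulo `2 · 4 ^ n`. -/
lemma of_sq_sub_one {x w : ℤ} {n : ℕ} (hw : w % 2 = 1)
    (h : x ^ 2 - 1 = 2 * 4 ^ n * w) :
    ∃ η o : ℤ, (η = 1 ∨ η = -1) ∧ o % 2 = 1 ∧ x = η + 4 ^ n * o := by
  have hx : x % 2 = 1 := by
    by_contra hx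
    obtain ⟨y, rfl⟩ : ∃ y, x = 2 * y := ⟨x / 2, by omega⟩
    have : 2 * (2 * y ^ 2 - 4 ^ n * w) = 1 := by linear_combination h
    omega
  have main : ∀ y, y % 4 = 1 → y ^ 2 - 1 = 2 * 4 ^ n * w → ∃ o : ℤ, o % 2 = 1 ∧ y = 1 + 4 ^ n * o := by
    intro y hy h
    obtain ⟨z, rfl⟩ : ∃ z, y = 4 * z + 1 := ⟨y / 4, by omega⟩
    have h1 : 4 * z * (2 * z + 1) = 4 ^ n * w := by
      have : 2 * (4 * z * (2 * z + 1)) = 2 * (4 ^ n * w) := by linear_combination h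
      omega
    have hco : IsCoprime ((4 : ℤ) ^ n) (2 * z + 1) := by
      rw [show (4 : ℤ) = 2 ^ 2 by norm_num, ← pow_mul]
      exact (Int.isCoprime_two_left.2 ⟨z, rfl⟩).pow_left
    obtain ⟨o, ho⟩ := hco.dvd_of_dvd_mul_right (Dvd.intro _ h1.symm)
    refine ⟨o, ?_, by rw [← ho]; ring⟩
    have h2 : o * (2 * z + 1) = w := by
      refine mul_left_cancel₀ (pow_ne_zero n (by norm_num : (4 : ℤ) ≠ 0)) ?_
      rw [← h1, ho]; ring
    have h3 : o + 2 * (o * z) = w := by rw [← h2]; ring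
    omega
  rcases (by omega : x % 4 = 1 ∨ x % 4 = 3) with h4 | h4
  · obtain ⟨o, ho, e⟩ := main x h4 h
    exact ⟨1, o, Or.inl rfl, ho, e⟩
  · obtain ⟨o, ho, e⟩ := main (-x) (by omega) (by rw [neg_sq]; exact h)
    exact ⟨-1, -o, Or.inr rfl, by omega, by linear_combination -e⟩

/-- If `Re h ^ m + Im h ^ m = 1` with `m = 2 ^ t`, then descending along the relation
`x ^ 2 - 2 B ^ 2 = x'` between the values `x = Re + Im` at `h ^ j` and `h ^ (2 j)`, where
`B = Im h ^ j`, fixes `Re + Im` modulo a high power of `2` at every `h ^ (2 ^ c)`. -/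
lemma OddEven.add_pow_two {h : GaussianInt} (H : OddEven h) {t s : ℕ} {v' : ℤ}
    (hv' : v' % 2 = 1) (hv : h.im = 2 ^ s * v')
    (e : (h ^ 2 ^ t).re + (h ^ 2 ^ t).im = 1) {c : ℕ} (hc : c < t) :
    ∃ η o : ℤ, (η = 1 ∨ η = -1) ∧ o % 2 = 1 ∧
      (h ^ 2 ^ c).re + (h ^ 2 ^ c).im = η + 4 ^ (s + c) * o := by
  have step : ∀ c, (∃ o : ℤ, (h ^ 2 ^ (c + 1)).re + (h ^ 2 ^ (c + 1)).im = 1 + 4 ^ (s + c + 1) * o) →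
      ∃ η o : ℤ, (η = 1 ∨ η = -1) ∧ o % 2 = 1 ∧
      (h ^ 2 ^ c).re + (h ^ 2 ^ c).im = η + 4 ^ (s + c) * o := by
    rintro c ⟨o, ho⟩
    obtain ⟨x, o', ho', -, him⟩ := H.pow_two_adic c (κ := 1) rfl
    rw [mul_one, hv] at him
    rw [pow_succ 2 c, pow_mul, gaussRe_sq, gaussIm_sq] at ho
    have hw : (v' * o') % 2 = 1 := by rw [Int.mul_emod, hv', ho']; rfl
    obtain ⟨z, hz⟩ : ∃ z, v' * o' = 2 * z + 1 := ⟨v' * o' / 2, by omega⟩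
    refine of_sq_sub_one (w := 1 + 2 * (2 * z ^ 2 + 2 * z + o)) (by omega) ?_
    have h4 : ((4 : ℤ) ^ (s + c)) = (2 ^ s) ^ 2 * (2 ^ c) ^ 2 := by
      rw [show (4 : ℤ) = 2 ^ 2 by norm_num, ← pow_mul]; ring
    have him' : (h ^ 2 ^ c).im = 2 ^ s * 2 ^ c * (2 * z + 1) := by rw [him, ← hz]; ring
    have h5 : ((h ^ 2 ^ c).re + (h ^ 2 ^ c).im) ^ 2 - 1 = 2 * (h ^ 2 ^ c).im ^ 2 + 4 ^ (s + c + 1) * o := by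
      linear_combination ho
    have h6 : (4 : ℤ) ^ (s + c + 1) = 4 * ((2 ^ s) ^ 2 * (2 ^ c) ^ 2) := by rw [pow_succ, h4]; ring
    rw [h5, him', h6, h4]; ring
  have all : ∀ d, ∀ c, c + d + 1 = t → ∃ o : ℤ, (h ^ 2 ^ (c + 1)).re + (h ^ 2 ^ (c + 1)).im =
      1 + 4 ^ (s + c + 1) * o := by
    intro d
    induction d with
    | zero => intro c hct; exact ⟨0, by rw [show c + 1 = t by omega, e]; ring⟩
    | succ d ih =>
      intro c hct
      obtain ⟨η, o, hη, -, h1⟩ := step (c + 1) (ih (c + 1) (by omega))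
      refine ⟨o, ?_⟩
      obtain ⟨l, hl, -, hl2, -, he⟩ := H.pow_form (2 ^ (c + 1))
      have he2 : 2 ^ (c + 1) % 2 = 0 := by rw [pow_succ]; omega
      have h2 := (he he2).1
      have h3 : (h ^ 2 ^ (c + 1)).im % 4 = 0 := by
        have := H.im
        obtain ⟨a, ha⟩ : ∃ a, l = 2 * a := ⟨l / 2, by omega⟩
        obtain ⟨b, hb⟩ : ∃ b, h.im = 2 * b := ⟨h.im / 2, by omega⟩
        have : (h ^ 2 ^ (c + 1)).im = 4 * (a * b) := by rw [hl, ha, hb]; ring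
        omega
      have h4 : (4 : ℤ) ^ (s + (c + 1)) * o = 4 * (4 ^ (s + c) * o) := by ring
      rw [h1]
      have : η = 1 := by omega
      rw [this, add_assoc s c 1]
  exact step c (all (t - 1 - c) c (by omega))

/-- One step of descent for the Pell equation `x ^ 2 - 2 b ^ 2 = 1`: if `4 ∣ b` then
`x + b √2` is the square of `f + g √2` with `f ^ 2 - 2 g ^ 2 = 1`. -/
lemma pell_half {x b : ℤ} (hx : 0 < x) (hb : 0 < b) (h : x ^ 2 - 2 * b ^ 2 = 1) (h4 : 4 ∣ b) :
    ∃ f g : ℤ, 0 < f ∧ 0 < g ∧ f % 2 = 1 ∧ f ^ 2 - 2 * g ^ 2 = 1 ∧ x = f ^ 2 + 2 * g ^ 2 ∧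
      b = 2 * f * g := by
  obtain ⟨d, rfl⟩ := h4
  have hx2 : x % 2 = 1 := by
    by_contra hx2
    obtain ⟨y, rfl⟩ : ∃ y, x = 2 * y := ⟨x / 2, by omega⟩
    have : 2 * (2 * y ^ 2 - 16 * d ^ 2) = 1 := by linear_combination h
    omega
  obtain ⟨y, rfl⟩ : ∃ y, x = 2 * y + 1 := ⟨x / 2, by omega⟩
  have hy : y * (y + 1) = 8 * d ^ 2 := by
    have : 4 * (y * (y + 1)) = 4 * (8 * d ^ 2) := by linear_combination h
    omega
  have hd : 0 < d := by omega
  have hy0 : 0 < y := by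
    rcases Int.lt_or_le 0 y with h1 | h1
    · exact h1
    · have : y = 0 := by omega
      subst this
      nlinarith [sq_pos_of_pos hd]
  have hco : IsCoprime y (y + 1) := ⟨-1, 1, by ring⟩
  have sqrt : ∀ a c e : ℤ, 0 ≤ a → IsCoprime a c → a * c = e ^ 2 → ∃ r, a = r ^ 2 := by
    intro a c e ha hac hm
    obtain ⟨r, hr | hr⟩ := Int.sq_of_isCoprime hac hm
    · exact ⟨r, hr⟩
    · exact ⟨0, by nlinarith [sq_nonneg r]⟩
  rcases Int.even_or_odd' y with ⟨z, hz | hz⟩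
  · have hco2 : IsCoprime z (y + 1) := by rw [hz] at hco ⊢; exact hco.of_mul_left_right
    have hm : z * (y + 1) = (2 * d) ^ 2 := by
      have : 2 * (z * (y + 1)) = 2 * (2 * d) ^ 2 := by linear_combination hy - (y + 1) * hz
      omega
    obtain ⟨g, hg⟩ := sqrt z (y + 1) _ (by omega) hco2 hm
    obtain ⟨f, hf⟩ := sqrt (y + 1) z (2 * d) (by omega) hco2.symm (by rw [mul_comm]; exact hm)
    have hfa : |f| ^ 2 = y + 1 := by rw [sq_abs, hf]
    have hga : |g| ^ 2 = z := by rw [sq_abs, hg]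
    have hf0 : 0 < |f| := abs_pos.2 (by rintro rfl; omega)
    have hg0 : 0 < |g| := abs_pos.2 (by rintro rfl; omega)
    have hfo : |f| % 2 = 1 := by
      by_contra hfo
      obtain ⟨c, hc⟩ : ∃ c, |f| = 2 * c := ⟨|f| / 2, by omega⟩
      rw [hc] at hfa
      have : 2 * (2 * c ^ 2) = y + 1 := by rw [← hfa]; ring
      omega
    refine ⟨|f|, |g|, hf0, hg0, hfo, by omega, by omega, ?_⟩
    have : (4 * d) ^ 2 = (2 * |f| * |g|) ^ 2 := by
      linear_combination -4 * hm - 4 * |g| ^ 2 * hfa - 4 * (y + 1) * hga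
    exact (sq_eq_sq₀ (by omega) (by positivity)).1 this
  · exfalso
    have hco2 : IsCoprime (z + 1) y := by
      rw [show y + 1 = 2 * (z + 1) by omega] at hco
      exact hco.symm.of_mul_left_right
    have hm : (z + 1) * y = (2 * d) ^ 2 := by
      have : 2 * ((z + 1) * y) = 2 * (2 * d) ^ 2 := by linear_combination hy - y * hz
      omega
    obtain ⟨f, hf⟩ := sqrt y (z + 1) (2 * d) (by omega) hco2.symm (by rw [mul_comm]; exact hm)
    have hodd : Odd f := by
      rw [← Int.not_even_iff_odd]
      rintro ⟨c, hc⟩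
      have : y = 2 * (2 * c ^ 2) := by rw [hf, hc]; ring
      omega
    have h8 := Int.sq_mod_eight_eq_one_of_odd hodd
    -- `y = f ^ 2 ≡ 1 (mod 8)` and `y (y + 1)` is divisible by `8`
    obtain ⟨q, hq⟩ : ∃ q, y = 8 * q + 1 := ⟨y / 8, by omega⟩
    have : 8 * (d ^ 2 - 8 * q ^ 2 - 3 * q) = 2 := by rw [hq] at hy; linear_combination -hy
    omega

/-- Iterated descent: a `2 ^ n`-th root of `x + b √2`. -/
lemma pell_root {s : ℕ} (hs : 1 ≤ s) (n : ℕ) : ∀ {x b o : ℤ}, 0 < x → 0 < b →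
    x ^ 2 - 2 * b ^ 2 = 1 → o % 2 = 1 → b = 2 ^ (s + n) * o →
    ∃ f g o' : ℤ, 0 < f ∧ 0 < g ∧ f ^ 2 - 2 * g ^ 2 = 1 ∧ o' % 2 = 1 ∧ g = 2 ^ s * o' ∧
      ((f : ℝ) + g * √2) ^ 2 ^ n = x + b * √2 := by
  induction n with
  | zero => intro x b o hx hb h ho hbo; exact ⟨x, b, o, hx, hb, h, ho, hbo, by simp⟩
  | succ n ih =>
    intro x b o hx hb h ho hbo
    obtain ⟨r, rfl⟩ := Nat.exists_eq_add_of_le' hs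
    obtain ⟨f, g, hf, hg, hfo, hfg, hxf, hbf⟩ := pell_half hx hb h
      ⟨2 ^ (r + n) * o, by rw [hbo]; ring⟩
    have h2 : 2 ^ (r + 1 + n) * o = f * g := by
      have : 2 * (2 ^ (r + 1 + n) * o) = 2 * (f * g) := by
        rw [← mul_assoc 2 f, ← hbf, hbo]; ring
      omega
    have hco : IsCoprime ((2 : ℤ) ^ (r + 1 + n)) f :=
      (Int.isCoprime_two_left.2 (Int.odd_iff.2 hfo)).pow_left
    obtain ⟨o', ho'⟩ := hco.dvd_of_dvd_mul_left (Dvd.intro _ h2)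
    have ho2 : o' % 2 = 1 := by
      have : o = f * o' := by
        refine mul_left_cancel₀ (pow_ne_zero (r + 1 + n) (two_ne_zero : (2 : ℤ) ≠ 0)) ?_
        rw [h2, ho']; ring
      rw [this, Int.mul_emod, hfo] at ho
      omega
    obtain ⟨f', g', o₂, h1, h3, h4, h5, h6, h7⟩ := ih hf hg hfg ho2 ho'
    refine ⟨f', g', o₂, h1, h3, h4, h5, h6, ?_⟩
    rw [pow_succ, pow_mul, h7, hxf, hbf]
    have : (√2 : ℝ) ^ 2 = 2 := Real.sq_sqrt (by norm_num)
    push_cast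
    linear_combination (g : ℝ) ^ 2 * this

/-- Multiplicativity of the absolute value, written with square roots. -/
lemma gauss_sqrt_pow (h : GaussianInt) (k : ℕ) :
    √((h.re : ℝ) ^ 2 + (h.im : ℝ) ^ 2) ^ k = √(((h ^ k).re : ℝ) ^ 2 + ((h ^ k).im : ℝ) ^ 2) := by
  have e : ∀ g : GaussianInt, (g.re : ℝ) ^ 2 + (g.im : ℝ) ^ 2 = ((g.norm : ℤ) : ℝ) := by
    intro g; rw [gaussNorm]; push_cast; ring
  have e2 : ∀ k : ℕ, (h ^ k).norm = h.norm ^ k := by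
    intro k
    induction k with
    | zero => simp
    | succ k ih => rw [pow_succ, Zsqrtd.norm_mul, ih, pow_succ]
  have h0 : (0 : ℝ) ≤ (h.norm : ℤ) := by rw [← e]; positivity
  rw [e, e, e2, Int.cast_pow, ← Real.sqrt_sq (pow_nonneg (Real.sqrt_nonneg _) k), ← pow_mul,
    mul_comm k 2, pow_mul, Real.sq_sqrt h0]

lemma abs_im_pow_le (h : GaussianInt) (k : ℕ) :
    |((h ^ (k + 1)).im : ℝ)| ≤ (k + 1) * |(h.im : ℝ)| * √((h.re : ℝ) ^ 2 + (h.im : ℝ) ^ 2) ^ k := by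
  induction k with
  | zero => simp
  | succ k ih =>
    set r := √((h.re : ℝ) ^ 2 + (h.im : ℝ) ^ 2) with hr
    have hu : |(h.re : ℝ)| ≤ r := Real.abs_le_sqrt (by nlinarith [sq_nonneg (h.im : ℝ)])
    have hX : |((h ^ (k + 1)).re : ℝ)| ≤ r ^ (k + 1) := by
      rw [gauss_sqrt_pow]
      exact Real.abs_le_sqrt (by nlinarith [sq_nonneg ((h ^ (k + 1)).im : ℝ)])
    have e : ((h ^ (k + 1 + 1)).im : ℝ) = (h ^ (k + 1)).re * h.im + (h ^ (k + 1)).im * h.re := by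
      rw [pow_succ, gaussIm_mul]; push_cast; ring
    calc |((h ^ (k + 1 + 1)).im : ℝ)|
        ≤ |((h ^ (k + 1)).re : ℝ)| * |(h.im : ℝ)| + |((h ^ (k + 1)).im : ℝ)| * |(h.re : ℝ)| := by
          rw [e, ← abs_mul, ← abs_mul]; exact abs_add_le _ _
      _ ≤ r ^ (k + 1) * |(h.im : ℝ)| + ((k + 1) * |(h.im : ℝ)| * r ^ k) * r := by gcongr
      _ = _ := by push_cast; ring

/-- If `(f + g √2) ^ k = x + b √2` with `x = |A + B|`, `b = |B|` for `h ^ k = A + i B`, both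
Pell solutions, then `f + g √2` is only slightly larger than `|h|`, so `2 f` is close to `Re h`. -/
lemma pell_size {h : GaussianInt} (hu : 0 < h.re) {k : ℕ} {x b f g : ℤ}
    (hx : x = |(h ^ (k + 1)).re + (h ^ (k + 1)).im|) (hb : b = |(h ^ (k + 1)).im|)
    (hb8 : 8 ≤ b) (hxb : x ^ 2 - 2 * b ^ 2 = 1) (hf : 0 < f) (hg : 0 < g)
    (hfg : f ^ 2 - 2 * g ^ 2 = 1) (e : ((f : ℝ) + g * √2) ^ (k + 1) = x + b * √2) :
    (h.re : ℝ) < 2 * f ∧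
      2 * (f : ℝ) ≤ h.re + 1.84 * |(h.im : ℝ)| + (h.im : ℝ) ^ 2 / (2 * h.re) + 1 / h.re := by
  have hs2 : (√2 : ℝ) ^ 2 = 2 := Real.sq_sqrt (by norm_num)
  have hs0 : (0 : ℝ) ≤ √2 := Real.sqrt_nonneg 2
  have hsl : (1.414 : ℝ) < √2 := by rw [Real.lt_sqrt (by norm_num)]; norm_num
  have hsu : (√2 : ℝ) < 1.415 := by rw [Real.sqrt_lt' (by norm_num)]; norm_num
  set r := √((h.re : ℝ) ^ 2 + (h.im : ℝ) ^ 2) with hr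
  have huR : (0 : ℝ) < h.re := by exact_mod_cast hu
  have hr2 : r ^ 2 = (h.re : ℝ) ^ 2 + (h.im : ℝ) ^ 2 := Real.sq_sqrt (by positivity)
  have hru : (h.re : ℝ) ≤ r := Real.le_sqrt_of_sq_le (by nlinarith [sq_nonneg (h.im : ℝ)])
  have hr0 : 0 < r := huR.trans_le hru
  have hRk := gauss_sqrt_pow h (k + 1)
  rw [← hr] at hRk
  have hA : ∃ A B : ℝ, ((h ^ (k + 1)).re : ℝ) = A ∧ ((h ^ (k + 1)).im : ℝ) = B := ⟨_, _, rfl, rfl⟩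
  obtain ⟨A, B, hA, hB⟩ := hA
  rw [hA, hB] at hRk
  have hxR : (x : ℝ) = |A + B| := by rw [hx, ← hA, ← hB]; push_cast; rfl
  have hbR : (b : ℝ) = |B| := by rw [hb, ← hB]; push_cast; rfl
  have hbim := abs_im_pow_le h k
  rw [← hr, hB, ← hbR] at hbim
  have hb8R : (8 : ℝ) ≤ b := by exact_mod_cast hb8
  have hxbR : (x : ℝ) ^ 2 - 2 * b ^ 2 = 1 := by exact_mod_cast hxb
  have hfgR : (f : ℝ) ^ 2 - 2 * g ^ 2 = 1 := by exact_mod_cast hfg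
  have hfR : (0 : ℝ) < f := by exact_mod_cast hf
  have hgR : (0 : ℝ) < g := by exact_mod_cast hg
  have hx0 : (0 : ℝ) ≤ x := by rw [hxR]; positivity
  set R := r ^ (k + 1) with hR
  have hR2 : R ^ 2 = A ^ 2 + B ^ 2 := by rw [hRk]; exact Real.sq_sqrt (by positivity)
  have hR0 : 0 ≤ R := by positivity
  have hx2 : (x : ℝ) ^ 2 = A ^ 2 + 2 * A * B + B ^ 2 := by rw [hxR, sq_abs]; ring
  have hb2 : (b : ℝ) ^ 2 = B ^ 2 := by rw [hbR, sq_abs]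
  have hRb : (b : ℝ) ≤ R := by
    refine abs_le_of_sq_le_sq' ?_ hR0 |>.2
    nlinarith [sq_nonneg A]
  set α : ℝ := x + b * √2 with hα
  have hxu : (x : ℝ) ≤ 1.425 * b := by
    refine (abs_le_of_sq_le_sq' ?_ (by linarith)).2
    have : (8 : ℝ) ^ 2 ≤ b ^ 2 := pow_le_pow_left₀ (by norm_num) hb8R 2
    linarith
  have hαu : α - R ≤ 1.84 * b := by
    have : b * √2 ≤ b * 1.415 := mul_le_mul_of_nonneg_left hsu.le (by linarith)
    rw [hα]; linarith
  have hαR : R < α := by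
    refine lt_of_pow_lt_pow_left₀ 2 (by positivity) ?_
    have h1 : α ^ 2 = x ^ 2 + 2 * b ^ 2 + 2 * √2 * (x * b) := by rw [hα]; linear_combination (b : ℝ) ^ 2 * hs2
    have h2 : R ^ 2 ≤ x ^ 2 + 2 * b ^ 2 + 2 * (x * b) := by
      have : -(x * b) ≤ (A + B) * B := by
        rw [hxR, hbR, ← abs_mul]; exact neg_abs_le _
      linarith
    have hx1 : 0 < (x : ℝ) := by
      refine lt_of_le_of_ne hx0 fun h0 => ?_
      rw [← h0] at hxbR
      linarith [sq_nonneg (b : ℝ)]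
    have h3 : 0 < (x : ℝ) * b := mul_pos hx1 (by linarith)
    have h4 : 0 < (√2 - 1) * (x * b) := mul_pos (by linarith) h3
    rw [h1]
    linarith
  set μ : ℝ := f + g * √2 with hμ
  have hμ0 : 0 < μ := by positivity
  have hμr : r < μ := by
    refine lt_of_pow_lt_pow_left₀ (k + 1) hμ0.le ?_
    rw [e]; exact hαR
  have hbern : (k + 1) * r ^ k * (μ - r) ≤ α - R := by
    have h1 := one_add_mul_le_pow (a := (μ - r) / r) (by
      have : 0 ≤ (μ - r) / r := div_nonneg (by linarith) hr0.le
      linarith) (k + 1)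
    have h2 : 1 + (μ - r) / r = μ / r := by field_simp; ring
    rw [h2, div_pow, e, ← hR, le_div_iff₀ (by positivity)] at h1
    have h3 : (1 + ((k + 1 : ℕ) : ℝ) * ((μ - r) / r)) * R = R + (k + 1) * r ^ k * (μ - r) := by
      rw [hR, pow_succ]; push_cast; field_simp
    linarith
  have hclose : μ - r ≤ 1.84 * |(h.im : ℝ)| := by
    have h1 : b * (μ - r) ≤ (k + 1) * |(h.im : ℝ)| * r ^ k * (μ - r) :=
      mul_le_mul_of_nonneg_right hbim (by linarith)
    have h2 : |(h.im : ℝ)| * ((k + 1) * r ^ k * (μ - r)) ≤ |(h.im : ℝ)| * (1.84 * b) :=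
      mul_le_mul_of_nonneg_left (hbern.trans hαu) (abs_nonneg _)
    have h3 : b * (μ - r) ≤ b * (1.84 * |(h.im : ℝ)|) := by linarith
    exact le_of_mul_le_mul_left h3 (by linarith)
  have hinv : μ * (f - g * √2) = 1 := by rw [hμ]; linear_combination hfgR - (g : ℝ) ^ 2 * hs2
  have hconj0 : 0 < f - g * √2 := by
    by_contra hneg
    have := mul_nonneg hμ0.le (neg_nonneg.2 (not_lt.1 hneg))
    linarith
  have hconj : f - g * √2 ≤ 1 / h.re := by
    rw [le_div_iff₀ huR, ← hinv, mul_comm]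
    exact mul_le_mul_of_nonneg_right (hru.trans hμr.le) hconj0.le
  have hru2 : r - h.re ≤ (h.im : ℝ) ^ 2 / (2 * h.re) := by
    rw [le_div_iff₀ (by positivity)]
    have := mul_nonneg (sub_nonneg.2 hru) (sub_nonneg.2 hru)
    linarith
  have h2f : 2 * (f : ℝ) = μ + (f - g * √2) := by rw [hμ]; ring
  exact ⟨by linarith, by linarith⟩

lemma abs_two_pow_cases {v : ℤ} {s : ℕ} (hv : |v| = 2 ^ s) : v = 2 ^ s ∨ v = -2 ^ s := by
  rcases abs_cases v with ⟨h1, -⟩ | ⟨h1, -⟩ <;> omega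

lemma abs_eq_two_pow_of_dvd {v : ℤ} {n : ℕ} (h : v ∣ 2 ^ n) : ∃ s, |v| = 2 ^ s := by
  have : v.natAbs ∣ 2 ^ n := by
    have := Int.natAbs_dvd_natAbs.2 h
    rwa [Int.natAbs_pow] at this
  obtain ⟨s, -, hs⟩ := (Nat.dvd_prime_pow Nat.prime_two).1 this
  exact ⟨s, by rw [Int.abs_eq_natAbs, hs]; push_cast; rfl⟩

/-- Expansion of `h ^ (2 j)` to first order in `v`, for `h = ± 1 + v η`. -/
lemma pow_even_form {h η : GaussianInt} {w v : ℤ} (hw : w ^ 2 = 1) (hh : h = w + v * η) (j : ℕ) :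
    ∃ τ : GaussianInt, h ^ (2 * j) = 1 + ((2 * j * w * v : ℤ) : GaussianInt) * η +
      ((v ^ 2 : ℤ) : GaussianInt) * τ := by
  have hwG : ((w : ℤ) : GaussianInt) ^ 2 = 1 := by exact_mod_cast congrArg (Int.cast : ℤ → GaussianInt) hw
  induction j with
  | zero => exact ⟨0, by simp⟩
  | succ j ih =>
    obtain ⟨τ, hτ⟩ := ih
    refine ⟨4 * j * η ^ 2 + 2 * j * w * v * η ^ 3 + h ^ 2 * τ + η ^ 2, ?_⟩
    rw [mul_add, pow_add, hτ, hh]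
    push_cast
    linear_combination (1 + 2 * j * w * v * η + 4 * j * v ^ 2 * η ^ 2 * 1) * hwG

lemma two_pow_dvd_of_sum {h : GaussianInt} (H : OddEven h) {t : ℕ} (ht : 1 ≤ t)
    (e : (h ^ 2 ^ t).re + (h ^ 2 ^ t).im = 1) (hn : |h.re| = 1 ∨ |h.re - h.im| = 1) :
    ∃ s, |h.im| = 2 ^ s := by
  obtain ⟨r, rfl⟩ := Nat.exists_eq_add_of_le' ht
  have key : ∀ (w : ℤ) (η : GaussianInt), w = 1 ∨ w = -1 → h = w + h.im * η →
      (η.re + η.im = 1 ∨ η.re + η.im = 2) → ∃ s, |h.im| = 2 ^ s := by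
    intro w η hw hh hη
    have hw2 : w ^ 2 = 1 := by rcases hw with h | h <;> rw [h] <;> norm_num
    obtain ⟨τ, hτ⟩ := pow_even_form hw2 hh (2 ^ r)
    rw [← pow_succ', ] at hτ
    rw [hτ, Zsqrtd.re_add, Zsqrtd.im_add, Zsqrtd.re_add, Zsqrtd.im_add, Zsqrtd.re_smul,
      Zsqrtd.re_smul, Zsqrtd.im_smul, Zsqrtd.im_smul, Zsqrtd.re_one, Zsqrtd.im_one] at e
    push_cast at e
    have h1 : 2 * 2 ^ r * w * (η.re + η.im) + h.im * (τ.re + τ.im) = 0 := by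
      refine (mul_eq_zero.1 (?_ : h.im * _ = 0)).resolve_left H.ne
      linear_combination e
    refine abs_eq_two_pow_of_dvd (n := r + 2) ?_
    rcases hη with h2 | h2 <;> rw [h2] at h1
    · exact ⟨-2 * w * (τ.re + τ.im), by linear_combination -4 * 2 ^ r * hw2 + 2 * w * h1⟩
    · exact ⟨-w * (τ.re + τ.im), by linear_combination -4 * 2 ^ r * hw2 + w * h1⟩
  rcases hn with h1 | h1
  · refine key h.re ⟨0, 1⟩ (abs_one_cases h1) ?_ (Or.inl rfl)
    apply Zsqrtd.ext <;> simp
  · refine key (h.re - h.im) ⟨1, 1⟩ (abs_one_cases h1) ?_ (Or.inr rfl)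
    apply Zsqrtd.ext <;> simp

/-- Reduction of the residues of `f` when `f ^ 2 - 2 g ^ 2 = 1` and `g = 2 · odd`. -/
lemma pell_mod {f g o : ℤ} (hf : 0 < f) (h : f ^ 2 - 2 * g ^ 2 = 1) (ho : o % 2 = 1)
    (hg : g = 2 * o) : f % 32 = 3 := by
  have ho8 := Int.sq_mod_eight_eq_one_of_odd (Int.odd_iff.2 ho)
  have hf64 : f ^ 2 % 64 = 9 := by
    have : f ^ 2 = 8 * o ^ 2 + 1 := by rw [hg] at h; linear_combination h
    omega
  have hf32 : f % 32 = 3 ∨ f % 32 = 29 := by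
    obtain ⟨q, r, hr0, hr1, hfq⟩ : ∃ q r : ℤ, 0 ≤ r ∧ r < 32 ∧ f = 32 * q + r :=
      ⟨f / 32, f % 32, by omega, by omega, by omega⟩
    have h1 : r ^ 2 % 64 = 9 := by
      have : f ^ 2 = 64 * (16 * q ^ 2 + q * r) + r ^ 2 := by rw [hfq]; ring
      omega
    interval_cases r <;> omega
  rcases hf32 with h1 | h1
  · exact h1
  · exfalso
    have hd : f ∣ (2 * g) ^ 2 - (-2) := ⟨2 * f, by linear_combination -2 * h⟩
    have hJ := jacobiSym_congr hd
    have hodd : Odd f.natAbs := Nat.odd_iff.2 (by omega)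
    have hf8 : f.natAbs % 8 = 5 := by omega
    have h5 : jacobiSym (-2) f.natAbs = -1 := by
      rw [show (-2 : ℤ) = -1 * 2 by rfl, jacobiSym.mul_left, jacobiSym.at_neg_one hodd,
        jacobiSym.at_two hodd, ZMod.χ₄_nat_one_mod_four (by omega), ZMod.χ₈_nat_eq_if_mod_eight]
      simp [hf8]; omega
    rw [h5, jacobiSym.pow_left] at hJ
    nlinarith [sq_nonneg (jacobiSym (2 * g) f.natAbs)]

lemma pow_four_sum (h : GaussianInt) : (h ^ 2 ^ 2).re + (h ^ 2 ^ 2).im =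
    h.re ^ 4 + 4 * h.re ^ 3 * h.im - 6 * h.re ^ 2 * h.im ^ 2 - 4 * h.re * h.im ^ 3 + h.im ^ 4 := by
  rw [show (2 ^ 2 : ℕ) = 2 * 2 by rfl, pow_mul, gaussRe_sq, gaussIm_sq (h ^ 2), gaussRe_sq, gaussIm_sq]; ring

lemma pow_four_sum_eq_one {h : GaussianInt} (hu : 0 < h.re) (hu2 : h.re % 2 = 1) (hv : h.im = 2 ∨ h.im = -2)
    (e : (h ^ 2 ^ 2).re + (h ^ 2 ^ 2).im = 1) : h.re = 3 := by
  rw [pow_four_sum] at e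
  generalize h.re = u at *
  have hd : u ∣ 15 := by
    rcases hv with h1 | h1 <;> rw [h1] at e
    · exact ⟨-(u ^ 3 + 8 * u ^ 2 - 24 * u - 32), by linear_combination e⟩
    · exact ⟨-(u ^ 3 - 8 * u ^ 2 - 24 * u + 32), by linear_combination e⟩
  have := Int.le_of_dvd (by norm_num) hd
  rcases hv with h1 | h1 <;> rw [h1] at e <;> interval_cases u <;> omega

lemma pow_four_sum_mod {h : GaussianInt} (hu : h.re % 2 = 1) (hv : h.im = 2 ∨ h.im = -2) {o : ℤ}
    (ho : o % 2 = 1) (e : (h ^ 2 ^ 2).re + (h ^ 2 ^ 2).im = 1 + 64 * o) :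
    (h.re + h.im) % 32 = 11 ∨ (h.re + h.im) % 32 = 21 := by
  rw [pow_four_sum] at e
  obtain ⟨q, r, hr0, hr1, hfq⟩ : ∃ q r : ℤ, 0 ≤ r ∧ r < 32 ∧ h.re = 32 * q + r :=
    ⟨h.re / 32, h.re % 32, by omega, by omega, by omega⟩
  rw [hfq] at e hu ⊢
  have h1 : (r ^ 4 + 4 * r ^ 3 * h.im - 6 * r ^ 2 * h.im ^ 2 - 4 * r * h.im ^ 3 + h.im ^ 4) % 128 = 65 := by
    have : ∃ z, r ^ 4 + 4 * r ^ 3 * h.im - 6 * r ^ 2 * h.im ^ 2 - 4 * r * h.im ^ 3 + h.im ^ 4 =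
        1 + 64 * o + 128 * z := by
      rcases hv with h1 | h1 <;> rw [h1] at e ⊢
      · exact ⟨-(8192 * q ^ 4 + 1024 * q ^ 3 * r + 48 * q ^ 2 * r ^ 2 + q * r ^ 3 +
          (2048 * q ^ 3 + 192 * q ^ 2 * r + 6 * q * r ^ 2) - (192 * q ^ 2 + 12 * q * r) - 8 * q), by
            linear_combination e⟩
      · exact ⟨-(8192 * q ^ 4 + 1024 * q ^ 3 * r + 48 * q ^ 2 * r ^ 2 + q * r ^ 3 -
          (2048 * q ^ 3 + 192 * q ^ 2 * r + 6 * q * r ^ 2) - (192 * q ^ 2 + 12 * q * r) + 8 * q), by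
            linear_combination e⟩
    omega
  rcases hv with h2 | h2 <;> rw [h2] at h1 ⊢ <;> interval_cases r <;> omega

/-- The case `Im h = ± 2 ^ s` of `OddEven.pow_two_exponent`. The Pell descent produces `f` with
`2 f` congruent to a known residue modulo a power of `2`, while `pell_size` makes `2 f` close to
`Re h`. -/
lemma OddEven.pow_two_exponent_of_im {h : GaussianInt} (H : OddEven h) (hu : 0 < h.re) {s t : ℕ}
    (ht : 2 ≤ t) (hv : |h.im| = 2 ^ s) (e : (h ^ 2 ^ t).re + (h ^ 2 ^ t).im = 1) :
    t = 2 ∧ h.re = 3 ∧ |h.im| = 2 := by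
  have hs : 1 ≤ s := by
    by_contra hs
    have : s = 0 := by omega
    subst this
    rcases abs_one_cases (by simpa using hv) with h1 | h1 <;> have := H.im <;> omega
  obtain ⟨v', hv', hvv⟩ : ∃ v' : ℤ, (v' = 1 ∨ v' = -1) ∧ h.im = 2 ^ s * v' := by
    rcases abs_two_pow_cases hv with h1 | h1
    · exact ⟨1, Or.inl rfl, by rw [h1, mul_one]⟩
    · exact ⟨-1, Or.inr rfl, by rw [h1]; ring⟩
  have hv'o : v' % 2 = 1 := by omega
  by_cases hst : s = 1 ∧ t = 2
  · obtain ⟨rfl, rfl⟩ := hst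
    rw [pow_one] at hv
    refine ⟨rfl, pow_four_sum_eq_one hu H.re ?_ e, hv⟩
    rw [pow_one] at hvv; omega
  exfalso
  obtain ⟨r, rfl⟩ : ∃ r, t = r + 1 := ⟨t - 1, by omega⟩
  obtain ⟨k, hk⟩ : ∃ k, 2 ^ r = k + 1 := ⟨2 ^ r - 1, by have := Nat.two_pow_pos r; omega⟩
  obtain ⟨_, o, ho, -, hB⟩ := H.pow_two_adic r (κ := 1) rfl
  rw [mul_one, hvv] at hB
  have hBo : (v' * o) % 2 = 1 := by rw [Int.mul_emod, hv'o, ho]; rfl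
  have hB' : |(h ^ 2 ^ r).im| = 2 ^ (s + r) * |v' * o| := by
    rw [hB, show 2 ^ r * (2 ^ s * v') * o = 2 ^ (s + r) * (v' * o) by ring, abs_mul,
      abs_of_pos (by positivity : (0 : ℤ) < 2 ^ (s + r))]
  have hao : |v' * o| % 2 = 1 := by rcases abs_cases (v' * o) with ⟨h1, -⟩ | ⟨h1, -⟩ <;> omega
  have hb8 : 8 ≤ |(h ^ 2 ^ r).im| := by
    rw [hB']
    obtain ⟨q, hq⟩ : ∃ q, s + r = q + 3 := ⟨s + r - 3, by omega⟩
    have h1 : (1 : ℤ) ≤ 2 ^ q := one_le_pow₀ (by norm_num)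
    have h2 : 1 ≤ |v' * o| := by have := abs_nonneg (v' * o); omega
    rw [hq, pow_add]
    nlinarith
  have hxb : |(h ^ 2 ^ r).re + (h ^ 2 ^ r).im| ^ 2 - 2 * |(h ^ 2 ^ r).im| ^ 2 = 1 := by
    rw [pow_succ, pow_mul, gaussRe_sq, gaussIm_sq] at e
    rw [sq_abs, sq_abs]
    linear_combination e
  have hx0 : 0 < |(h ^ 2 ^ r).re + (h ^ 2 ^ r).im| := by
    rw [abs_pos]
    rintro h0
    rw [h0, abs_zero] at hxb
    nlinarith [sq_nonneg |(h ^ 2 ^ r).im|]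
  obtain ⟨f, g, o', hf, hg, hfg, ho', hgo, hroot⟩ := pell_root hs r hx0 (by omega) hxb hao hB'
  rw [hk] at hroot hxb hb8
  obtain ⟨hlo, hhi⟩ := pell_size hu rfl rfl hb8 hxb hf hg hfg hroot
  have hloZ : h.re < 2 * f := by exact_mod_cast hlo
  obtain ⟨η, w, hη, hw, hsum⟩ := H.add_pow_two hv'o hvv e (c := 0) (by omega)
  rw [pow_zero, pow_one, add_zero] at hsum
  have hvR : |(h.im : ℝ)| = 2 ^ s := by exact_mod_cast hv
  have hv2R : (h.im : ℝ) ^ 2 = (2 ^ s) ^ 2 := by rw [← sq_abs, hvR]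
  have huR : (0 : ℝ) < h.re := by exact_mod_cast hu
  rcases Nat.lt_or_ge s 2 with hs2 | hs2
  -- `s = 1`: `Re h` and `f` are known modulo a power of `2`
  · have hs1 : s = 1 := by omega
    subst hs1
    rw [pow_one] at hv hvv hgo hvR hv2R
    have hv2 : h.im = 2 ∨ h.im = -2 := by omega
    obtain ⟨η', w', hη', hw', hsum'⟩ := H.add_pow_two hv'o (s := 1) (by rw [pow_one]; exact hvv) e
      (c := 2) (by omega)
    have hη1 : η' = 1 := by
      obtain ⟨l, hl, -, hl2, -, he⟩ := H.pow_form (2 ^ 2)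
      have h2 := (he rfl).1
      obtain ⟨a, ha⟩ : ∃ a, l = 2 * a := ⟨l / 2, by omega⟩
      have : (h ^ 2 ^ 2).im = 4 * (v' * a) := by rw [hl, ha, hvv]; ring
      norm_num at hsum'
      norm_num at this h2
      omega
    have hmod := pow_four_sum_mod H.re hv2 hw' (by rw [hsum', hη1]; norm_num)
    have hfm := pell_mod hf hfg ho' hgo
    have hu9 : 9 ≤ h.re := by omega
    have hu9R : (9 : ℝ) ≤ h.re := by exact_mod_cast hu9
    have h1 : 1 / (h.re : ℝ) ≤ 1 / 9 := one_div_le_one_div_of_le (by norm_num) hu9R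
    have h2 : (2 : ℝ) ^ 2 / (2 * h.re) ≤ 2 / 9 := by
      rw [div_le_iff₀ (by positivity)]; linarith
    rw [hvR, hv2R] at hhi
    have h3 : (2 : ℝ) * f < h.re + 5 := by linarith
    have h4 : 2 * f < h.re + 5 := by exact_mod_cast h3
    omega
  -- `s ≥ 2`: modulo `P ^ 2`, where `P = 2 ^ s`, both `2 f` and `Re h + Im h` are known up to sign.
  -- Their difference is within a bounded distance of an odd multiple of `P ^ 2`, which is outside the
  -- range allowed by `pell_size`.
  · have hP2 : (4 : ℤ) ^ s = (2 ^ s) ^ 2 := by rw [← pow_mul, mul_comm, pow_mul]; norm_num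
    obtain ⟨η', w', hη', hw', hf'⟩ := of_sq_sub_one (x := f) (n := s) (w := o' ^ 2)
      (by rw [sq, Int.mul_emod, ho']; rfl) (by rw [hgo] at hfg; rw [hP2]; linear_combination hfg)
    rw [hP2] at hf' hsum
    have hP4 : (4 : ℤ) ≤ 2 ^ s := by
      obtain ⟨q, rfl⟩ := Nat.exists_eq_add_of_le hs2
      have h1 : (1 : ℤ) ≤ 2 ^ q := one_le_pow₀ (by norm_num)
      rw [pow_add]; omega
    have hvR' : |(h.im : ℝ)| = ((2 ^ s : ℤ) : ℝ) := by rw [hvR]; push_cast; rfl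
    have hv2R' : (h.im : ℝ) ^ 2 = ((2 ^ s : ℤ) : ℝ) ^ 2 := by rw [← sq_abs, hvR']
    rw [hvR', hv2R'] at hhi
    generalize (2 : ℤ) ^ s = P at hf' hsum hP4 hv hhi
    have hvle := neg_abs_le h.im
    have hvle' := le_abs_self h.im
    rw [hv] at hvle hvle'
    have hPP : 4 * P ≤ P ^ 2 := by rw [sq]; exact mul_le_mul_of_nonneg_right hP4 (by omega)
    have huP : P ^ 2 - P - 1 ≤ h.re := by
      rcases (by omega : w ≤ -1 ∨ 1 ≤ w) with h1 | h1
      · have := mul_le_mul_of_nonneg_left h1 (sq_nonneg P)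
        omega
      · have := mul_le_mul_of_nonneg_left h1 (sq_nonneg P)
        omega
    have hP4R : (4 : ℝ) ≤ P := by exact_mod_cast hP4
    have huPR : (P : ℝ) ^ 2 - P - 1 ≤ h.re := by exact_mod_cast huP
    have hPR : (0 : ℝ) ≤ (P - 4) * (P + 1.16) := mul_nonneg (by linarith) (by linarith)
    have hPR' : (0 : ℝ) ≤ (P - 4) * (0.46 * P - 0.365) := mul_nonneg (by linarith) (by linarith)
    have hPPR : (4 : ℝ) * P ≤ P ^ 2 := by exact_mod_cast hPP
    have hu11 : (11 : ℝ) ≤ h.re := by linarith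
    have h1 : 1 / (h.re : ℝ) ≤ 1 / 11 := one_div_le_one_div_of_le (by norm_num) hu11
    have h2 : (P : ℝ) ^ 2 / (2 * h.re) ≤ 0.73 := by
      rw [div_le_iff₀ (by positivity)]; linarith
    have h3 : 2 * (f : ℝ) ≤ h.re + 1.84 * P + 0.83 := by linarith
    have hD : 2 * f - (h.re + h.im) = 2 * η' - η + P ^ 2 * (2 * w' - w) := by
      rw [hsum, hf']; ring
    rcases (by omega : 2 * w' - w ≤ -1 ∨ 1 ≤ 2 * w' - w) with h4 | h4
    · have h5 := mul_le_mul_of_nonneg_left h4 (sq_nonneg P)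
      omega
    · have h5 := mul_le_mul_of_nonneg_left h4 (sq_nonneg P)
      have h7 : (h.re : ℝ) + P ^ 2 - P - 3 ≤ 2 * f := by
        have : h.re + P ^ 2 - P - 3 ≤ 2 * f := by omega
        exact_mod_cast this
      linarith

/-- If `Re h ^ m + Im h ^ m = 1` with `m = 2 ^ t ≥ 4`, and `h` itself has a coordinate `± 2 ^ a` or
`Re h ± Im h = ± 1`, then `m = 4` and `h = ± 3 ± 2 i`. -/
lemma OddEven.pow_two_exponent {h : GaussianInt} (H : OddEven h) {t : ℕ} (ht : 2 ≤ t)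
    (hn : |h.re| = 1 ∨ (∃ a, |h.im| = 2 ^ a) ∨ |h.re + h.im| = 1 ∨ |h.re - h.im| = 1)
    (e : (h ^ 2 ^ t).re + (h ^ 2 ^ t).im = 1) : t = 2 ∧ |h.re| = 3 ∧ |h.im| = 2 := by
  have him : ∃ s, |h.im| = 2 ^ s := by
    rcases hn with h1 | h1 | h1 | h1
    · exact two_pow_dvd_of_sum H (by omega) e (Or.inl h1)
    · exact h1
    · exfalso
      obtain ⟨s, κ, hκ, hs⟩ := exists_two_pow_mul_odd' (Int.natAbs_ne_zero.2 H.ne)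
      have hs1 : 1 ≤ s := by
        by_contra hs1
        have : s = 0 := by omega
        subst this
        have := H.im
        omega
      obtain ⟨v', hv', hv⟩ : ∃ v' : ℤ, v' % 2 = 1 ∧ h.im = 2 ^ s * v' := by
        rcases Int.natAbs_eq h.im with h2 | h2
        · exact ⟨κ, by omega, by rw [h2, hs]; push_cast; rfl⟩
        · exact ⟨-κ, by omega, by rw [h2, hs]; push_cast; ring⟩
      obtain ⟨η, w, hη, hw, hsum⟩ := H.add_pow_two hv' hv e (c := 0) (by omega)
      rw [pow_zero, pow_one, add_zero] at hsum
      obtain ⟨q, rfl⟩ := Nat.exists_eq_add_of_le' hs1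
      have h2 : (4 : ℤ) ^ (q + 1) * w = 4 * (4 ^ q * w) := by ring
      have h3 : (4 : ℤ) ^ q * w ≠ 0 := mul_ne_zero (by positivity) (by rintro rfl; omega)
      have := abs_one_cases h1
      omega
    · exact two_pow_dvd_of_sum H (by omega) e (Or.inr h1)
  obtain ⟨s, hs⟩ := him
  rcases lt_trichotomy 0 h.re with h1 | h1 | h1
  · obtain ⟨a, b, c⟩ := H.pow_two_exponent_of_im h1 ht hs e
    exact ⟨a, by rw [b]; rfl, c⟩
  · have := H.re; omega
  · have H' : OddEven (-h) :=
      ⟨by have := H.re; simp; omega, by have := H.im; simp; omega, by simpa using H.ne⟩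
    have he : Even (2 ^ t) := by
      rw [Nat.even_pow]; exact ⟨even_two, by omega⟩
    rw [← he.neg_pow] at e
    obtain ⟨a, b, c⟩ := H'.pow_two_exponent_of_im (by simpa using h1) ht (by simpa using hs) e
    refine ⟨a, ?_, by simpa using c⟩
    have : h.re = -3 := by rw [Zsqrtd.re_neg] at b; omega
    rw [this]; rfl

/-- The property, for an odd-even `h`, that `h` comes from the argument of a 2-integer ratio: a
coordinate is `± 2 ^ a`, or the coordinates differ by `1` in absolute value. -/
def Nice (h : GaussianInt) : Prop :=
  |h.re| = 1 ∨ (∃ a, |h.im| = 2 ^ a) ∨ |h.re + h.im| = 1 ∨ |h.re - h.im| = 1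

lemma Nice.star {h : GaussianInt} (N : Nice h) : Nice (star h) := by
  unfold Nice at *
  simp only [Zsqrtd.re_star, Zsqrtd.im_star, abs_neg, ← sub_eq_add_neg, sub_neg_eq_add]
  tauto

lemma Nice.neg {h : GaussianInt} (N : Nice h) : Nice (-h) := by
  unfold Nice at *
  simp only [Zsqrtd.re_neg, Zsqrtd.im_neg, abs_neg, ← neg_add, ← neg_sub']
  exact N

lemma OddEven.of_norm_five {h : GaussianInt} (H : OddEven h) (hn : h.norm = 5) :
    |h.re| = 1 ∧ |h.im| = 2 := by
  rw [gaussNorm] at hn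
  have h1 := H.re
  have h2 := H.im
  have h3 := H.ne
  have h4 : h.re ≤ 2 := by nlinarith
  have h5 : -2 ≤ h.re := by nlinarith
  have h6 : h.im ≤ 2 := by nlinarith
  have h7 : -2 ≤ h.im := by nlinarith
  have h8 : h.re = 1 ∨ h.re = -1 := by omega
  have h9 : h.im = 2 ∨ h.im = -2 := by omega
  rcases h8 with h8 | h8 <;> rcases h9 with h9 | h9 <;> rw [h8, h9] <;> exact ⟨rfl, rfl⟩

/-- For nice `h`, the real and imaginary parts of the square `h ^ 2` have sum `± 1` only if `h` is small. -/
lemma OddEven.sum_sq {h : GaussianInt} (H : OddEven h) (N : Nice h)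
    (e : |(h ^ 2).re + (h ^ 2).im| = 1) :
    (|h.re| = 1 ∨ |h.re| = 5) ∧ |h.im| = 2 := by
  rw [gaussRe_sq, gaussIm_sq] at e
  have h1 := H.re
  have h2 := H.im
  have h3 := H.ne
  have h4 := abs_one_cases e
  unfold Nice at N
  generalize h.re = u at *
  generalize h.im = v at *
  have habs : ∀ x y : ℤ, 0 < y → (x = y ∨ x = -y) → |x| = y := by
    rintro x y hy (rfl | rfl)
    · exact abs_of_pos hy
    · rw [abs_neg, abs_of_pos hy]
  obtain ⟨c, rfl⟩ : ∃ c, v = 2 * c := ⟨v / 2, by omega⟩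
  rcases N with h5 | ⟨s, hs⟩ | h5 | h5
  · refine ⟨Or.inl h5, ?_⟩
    have hu : u ^ 2 = 1 := by rw [← sq_abs, h5]; rfl
    rw [hu] at h4
    rcases h4 with h4 | h4
    · have : c * (u - c) = 0 := by linarith
      rcases mul_eq_zero.1 this with h6 | h6
      · omega
      · apply habs _ _ (by norm_num)
        have := abs_one_cases h5
        omega
    · have : 2 * (c ^ 2 - u * c) = 1 := by linarith
      omega
  · rcases s with _ | s
    · have := abs_one_cases (show |2 * c| = 1 by simpa using hs); omega
    have hc : |c| = 2 ^ s := by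
      rw [abs_mul, pow_succ, mul_comm] at hs
      exact mul_right_cancel₀ (by norm_num : (2 : ℤ) ≠ 0) (by simpa using hs)
    obtain ⟨d, hd⟩ : ∃ d, u + 2 * c = 2 * d + 1 := ⟨(u + 2 * c) / 2, by omega⟩
    have h6 : d * (d + 1) = 2 * c ^ 2 := by
      have h7 : (2 * d + 1) ^ 2 - 8 * c ^ 2 = 1 ∨ (2 * d + 1) ^ 2 - 8 * c ^ 2 = -1 := by
        rw [← hd]
        rcases h4 with h4 | h4
        · left; linear_combination h4
        · right; linear_combination h4
      rcases h7 with h7 | h7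
      · linarith
      · have : 4 * (d ^ 2 + d - 2 * c ^ 2) = -2 := by linear_combination h7
        omega
    have h7 : d * (d + 1) = 2 ^ (2 * s + 1) := by
      rw [h6, ← sq_abs, hc]; ring
    -- of two consecutive integers whose product is a power of two, the odd one is `± 1`
    have h8 : d = 1 ∨ d = -2 := by
      rcases Int.emod_two_eq_zero_or_one d with h9 | h9
      · rcases dvd_two_pow_odd (Dvd.intro_left _ h7) (by omega) with h10 | h10
        · exfalso
          rw [show d = 0 by omega, zero_mul] at h7
          exact (by positivity : (0 : ℤ) < 2 ^ (2 * s + 1)).ne h7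
        · omega
      · rcases dvd_two_pow_odd (Dvd.intro _ h7) h9 with h10 | h10
        · exact Or.inl h10
        · exfalso
          rw [h10] at h7
          exact (by positivity : (0 : ℤ) < 2 ^ (2 * s + 1)).ne (by simpa using h7)
    have hc1 : c = 1 ∨ c = -1 := by
      have : c ^ 2 = 1 := by rcases h8 with rfl | rfl <;> linarith
      exact abs_one_cases (by rw [← sq_eq_sq₀ (abs_nonneg _) zero_le_one, sq_abs, this]; rfl)
    refine ⟨?_, habs _ _ (by norm_num) (by omega)⟩
    rcases (by omega : (u = 1 ∨ u = -1) ∨ (u = 5 ∨ u = -5)) with h9 | h9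
    · exact Or.inl (habs _ _ (by norm_num) h9)
    · exact Or.inr (habs _ _ (by norm_num) h9)
  · exfalso
    have h6 : (u + 2 * c) ^ 2 = 1 := by rw [← sq_abs, h5]; rfl
    have h7 : 0 < c ^ 2 := by have : c ≠ 0 := by omega
                              positivity
    have h8 : (u + 2 * c) ^ 2 - 8 * c ^ 2 = 1 ∨ (u + 2 * c) ^ 2 - 8 * c ^ 2 = -1 := by
      rcases h4 with h4 | h4
      · left; linear_combination h4
      · right; linear_combination h4
    omega
  · have h6 : (u - 2 * c) ^ 2 = 1 := by rw [← sq_abs, h5]; rfl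
    have h7 : 2 * u ^ 2 - (u - 2 * c) ^ 2 = 1 ∨ 2 * u ^ 2 - (u - 2 * c) ^ 2 = -1 := by
      rcases h4 with h4 | h4
      · left; linear_combination h4
      · right; linear_combination h4
    have h8 : u ^ 2 = 1 := by
      rcases h7 with h7 | h7
      · omega
      · have : u ^ 2 = 0 := by omega
        have : u = 0 := by simpa using this
        omega
    have h9 : |u| = 1 := by rw [← sq_eq_sq₀ (abs_nonneg _) zero_le_one, sq_abs, h8]; rfl
    refine ⟨Or.inl h9, habs _ _ (by norm_num) ?_⟩
    have := abs_one_cases h9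
    have := abs_one_cases h5
    omega

/-- The exponents `m` for which `h ^ m` can be nice. -/
lemma OddEven.nice_pow {h : GaussianInt} (H : OddEven h) {m : ℕ} (hm : m ≠ 0) (N : Nice (h ^ m)) :
    m = 1 ∨ (m = 2 ∧ |h.re| = 1 ∧ ∃ b, |h.im| = 2 ^ b) ∨ (m = 3 ∧ |h.re| = 1 ∧ |h.im| = 2) ∨
      ∃ t, 1 ≤ t ∧ m = 2 ^ t ∧
        (|(h ^ m).re + (h ^ m).im| = 1 ∨ |(h ^ m).re - (h ^ m).im| = 1) := by
  by_cases hm1 : m = 1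
  · exact Or.inl hm1
  right
  have hstar : Star.star h ^ m = Star.star (h ^ m) := (star_pow h m).symm
  rcases N with h1 | ⟨a, h1⟩ | h1 | h1
  · exact absurd (H.re_pow hm h1) hm1
  · rcases Nat.even_or_odd' m with ⟨k, rfl | rfl⟩
    · obtain ⟨hk, h2, h3⟩ := H.im_pow_even (by omega) h1
      exact Or.inl ⟨by omega, h2, h3⟩
    · obtain ⟨hk, h2⟩ := H.im_pow_odd (by omega) h1
      exact Or.inr (Or.inl ⟨by omega, H.of_norm_five h2⟩)
  · obtain ⟨t, rfl⟩ := H.add_pow_exponent hm h1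
    refine Or.inr (Or.inr ⟨t, ?_, rfl, Or.inl h1⟩)
    by_contra ht
    exact hm1 (by rw [show t = 0 by omega, pow_zero])
  · have h2 : |(Star.star h ^ m).re + (Star.star h ^ m).im| = 1 := by
      rw [hstar]
      rw [Zsqrtd.re_star, Zsqrtd.im_star, ← sub_eq_add_neg]
      exact h1
    obtain ⟨t, rfl⟩ := H.star.add_pow_exponent hm h2
    refine Or.inr (Or.inr ⟨t, ?_, rfl, Or.inr h1⟩)
    by_contra ht
    exact hm1 (by rw [show t = 0 by omega, pow_zero])

/-- The exponents `m` for which both `h` and `h ^ m` are nice. -/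
lemma OddEven.nice_pow_of_nice {h : GaussianInt} (H : OddEven h) (N : Nice h) {m : ℕ} (hm : m ≠ 0)
    (N' : Nice (h ^ m)) :
    m = 1 ∨ (m = 2 ∧ |h.re| = 1 ∧ ∃ b, |h.im| = 2 ^ b) ∨ (m = 3 ∧ |h.re| = 1 ∧ |h.im| = 2) ∨
      (m = 2 ∧ |h.re| = 5 ∧ |h.im| = 2) ∨ (m = 4 ∧ |h.re| = 3 ∧ |h.im| = 2) := by
  rcases H.nice_pow hm N' with h1 | h1 | h1 | ⟨t, ht, rfl, h1⟩
  · exact Or.inl h1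
  · exact Or.inr (Or.inl h1)
  · exact Or.inr (Or.inr (Or.inl h1))
  -- conjugation exchanges `Re + Im` and `Re - Im`
  wlog h2 : |(h ^ 2 ^ t).re + (h ^ 2 ^ t).im| = 1 generalizing h
  · have h3 : |(h ^ 2 ^ t).re - (h ^ 2 ^ t).im| = 1 := by tauto
    have h4 : |(Star.star h ^ 2 ^ t).re + (Star.star h ^ 2 ^ t).im| = 1 := by
      rw [← star_pow]
      rw [Zsqrtd.re_star, Zsqrtd.im_star, ← sub_eq_add_neg]
      exact h3
    simpa using this H.star N.star (by rw [← star_pow]; exact N'.star) (Or.inl h4) h4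
  right
  rcases Nat.lt_or_ge t 2 with h3 | h3
  · have : t = 1 := by omega
    subst this
    rw [pow_one] at h2
    obtain ⟨h4 | h4, h5⟩ := H.sum_sq N h2
    · exact Or.inl ⟨rfl, h4, 1, by simpa using h5⟩
    · exact Or.inr (Or.inr (Or.inl ⟨rfl, h4, h5⟩))
  · -- the sum is `1` modulo `4`
    have h4 : (h ^ 2 ^ t).re + (h ^ 2 ^ t).im = 1 := by
      rcases abs_one_cases h2 with h4 | h4
      · exact h4
      exfalso
      obtain ⟨l, hl, -, hl2, -, he⟩ := H.pow_form (2 ^ t)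
      obtain ⟨r, rfl⟩ := Nat.exists_eq_add_of_le' h3
      have h5 : 2 ^ (r + 2) % 2 = 0 := by rw [pow_succ]; omega
      have h6 := (he h5).1
      obtain ⟨a, ha⟩ : ∃ a, l = 2 * a := ⟨l / 2, by omega⟩
      obtain ⟨b, hb⟩ : ∃ b, h.im = 2 * b := ⟨h.im / 2, by have := H.im; omega⟩
      have : (h ^ 2 ^ (r + 2)).im = 4 * (b * a) := by rw [hl, ha, hb]; ring
      omega
    obtain ⟨rfl, h5, h6⟩ := H.pow_two_exponent h3 N h4
    exact Or.inr (Or.inr (Or.inr ⟨rfl, h5, h6⟩))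

/-- The coprime pairs of exponents for which both powers of `h` are nice. -/
lemma OddEven.nice_pow_pair {h : GaussianInt} (H : OddEven h) {m n : ℕ} (hm : m ≠ 0) (hn : n ≠ 0)
    (hmn : m.Coprime n) (M : Nice (h ^ m)) (N : Nice (h ^ n)) :
    (m = 1 ∧ n = 1) ∨ (|h.re| = 1 ∧ |h.im| = 2 ∧ m ≤ 3 ∧ n ≤ 3) ∨
    ((m = 1 ∧ n = 2 ∨ m = 2 ∧ n = 1) ∧ |h.re| = 1 ∧ ∃ b, 2 ≤ b ∧ |h.im| = 2 ^ b) ∨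
    ((m = 1 ∧ n = 2 ∨ m = 2 ∧ n = 1) ∧ |h.re| = 5 ∧ |h.im| = 2) ∨
    ((m = 1 ∧ n = 4 ∨ m = 4 ∧ n = 1) ∧ |h.re| = 3 ∧ |h.im| = 2) := by
  -- a power of two and a power of two are coprime only if one of them is `1`
  wlog h1 : m % 2 = 1 generalizing m n
  · have h2 : n % 2 = 1 := by
      by_contra h2
      have := Nat.dvd_gcd (Nat.dvd_of_mod_eq_zero (by omega : m % 2 = 0))
        (Nat.dvd_of_mod_eq_zero (by omega : n % 2 = 0))
      rw [hmn] at this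
      omega
    rcases this hn hm hmn.symm N M h2 with ⟨a, b⟩ | ⟨a, b, c, d⟩ | ⟨a, b⟩ | ⟨a, b⟩ | ⟨a, b⟩
    · exact Or.inl ⟨b, a⟩
    · exact Or.inr (Or.inl ⟨a, b, d, c⟩)
    · exact Or.inr (Or.inr (Or.inl ⟨a.symm.imp And.symm And.symm, b⟩))
    · exact Or.inr (Or.inr (Or.inr (Or.inl ⟨a.symm.imp And.symm And.symm, b⟩)))
    · exact Or.inr (Or.inr (Or.inr (Or.inr ⟨a.symm.imp And.symm And.symm, b⟩)))
  have hH : m = 1 ∨ m = 3 ∧ |h.re| = 1 ∧ |h.im| = 2 := by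
    rcases H.nice_pow hm M with h2 | ⟨h2, -⟩ | h2 | ⟨t, h2, h3, -⟩
    · exact Or.inl h2
    · omega
    · exact Or.inr h2
    · obtain ⟨r, rfl⟩ := Nat.exists_eq_add_of_le' h2
      rw [pow_succ] at h3
      omega
  have hN : Nice h := by
    rcases hH with h2 | ⟨-, h2, -⟩
    · rwa [h2, pow_one] at M
    · exact Or.inl h2
  rcases H.nice_pow_of_nice hN hn N with h2 | ⟨h2, h3, b, h4⟩ | ⟨h2, h3, h4⟩ | ⟨h2, h3, h4⟩ |
    ⟨h2, h3, h4⟩ <;> rcases hH with h5 | ⟨h5, h6, h7⟩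
  · exact Or.inl ⟨h5, h2⟩
  · exact Or.inr (Or.inl ⟨h6, h7, by omega, by omega⟩)
  · have hb : b ≠ 0 := by
      rintro rfl
      have := abs_one_cases (by simpa using h4)
      have := H.im
      omega
    rcases Nat.lt_or_ge b 2 with h6 | h6
    · have : b = 1 := by omega
      subst this
      exact Or.inr (Or.inl ⟨h3, by simpa using h4, by omega, by omega⟩)
    · exact Or.inr (Or.inr (Or.inl ⟨Or.inl ⟨h5, h2⟩, h3, b, h6, h4⟩))
  · exact Or.inr (Or.inl ⟨h6, h7, by omega, by omega⟩)
  · exact Or.inr (Or.inl ⟨h3, h4, by omega, by omega⟩)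
  · exact Or.inr (Or.inl ⟨h6, h7, by omega, by omega⟩)
  · exact Or.inr (Or.inr (Or.inr (Or.inl ⟨Or.inl ⟨h5, h2⟩, h3, h4⟩)))
  · omega
  · exact Or.inr (Or.inr (Or.inr (Or.inr ⟨Or.inl ⟨h5, h2⟩, h3, h4⟩)))
  · omega

/-! ### From arctangents to Gaussian integers -/

/-- If powers of `x` and `y` agree up to a unit, then `x` and `y` are, up to units, coprime powers of
a common base. -/
lemma exists_common_base : ∀ (N : ℕ) {m n : ℕ} {x y : GaussianInt}, m + n ≤ N → m ≠ 0 → n ≠ 0 →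
    x ≠ 0 → Associated (x ^ m) (y ^ n) →
    ∃ (h : GaussianInt) (i j : ℕ), i ≠ 0 ∧ j ≠ 0 ∧ i.Coprime j ∧
      Associated x (h ^ i) ∧ Associated y (h ^ j) := by
  intro N
  induction N with
  | zero => intro m n x y h1 h2; omega
  | succ N ih =>
    intro m n x y hN hm hn hx hxy
    have hy : y ≠ 0 := by
      rintro rfl
      rw [zero_pow hn, associated_zero_iff_eq_zero] at hxy
      exact pow_ne_zero _ hx hxy
    wlog hmn : n ≤ m generalizing m n x y
    · obtain ⟨h, i, j, hi, hj, hij, h1, h2⟩ :=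
        this (m := n) (n := m) (by omega) hn hm hy hxy.symm hx (by omega)
      exact ⟨h, j, i, hj, hi, hij.symm, h2, h1⟩
    obtain ⟨l, rfl⟩ := Nat.exists_eq_add_of_le hmn
    obtain ⟨w, rfl⟩ : x ∣ y := (IsIntegrallyClosed.pow_dvd_pow_iff hn).1
      ((pow_dvd_pow x (Nat.le_add_right n l)).trans hxy.dvd)
    rw [pow_add, mul_pow] at hxy
    have hlw : Associated (x ^ l) (w ^ n) :=
      hxy.of_mul_left (Associated.refl _) (pow_ne_zero _ hx)
    rcases Nat.eq_zero_or_pos l with rfl | hl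
    · refine ⟨x, 1, 1, one_ne_zero, one_ne_zero, Nat.coprime_one_left 1, by rw [pow_one], ?_⟩
      have hw : IsUnit w := by
        rw [pow_zero] at hlw
        exact (isUnit_pow_iff hn).1 (hlw.isUnit isUnit_one)
      rw [pow_one]
      exact associated_mul_unit_left x w hw
    · obtain ⟨h, i, j, hi, hj, hij, h1, h2⟩ := ih (by omega) hl.ne' hn hx hlw
      refine ⟨h, i, i + j, hi, by omega, by simpa using hij, h1, ?_⟩
      rw [pow_add]
      exact h1.mul_mul h2

lemma gauss_unit {u : GaussianInt} (hu : IsUnit u) : u = 1 ∨ u = -1 ∨ u = ⟨0, 1⟩ ∨ u = ⟨0, -1⟩ := by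
  have h1 := (Zsqrtd.norm_eq_one_iff' (by norm_num) u).2 hu
  rw [gaussNorm] at h1
  have h4 : u.re ≤ 1 := by nlinarith
  have h5 : -1 ≤ u.re := by nlinarith
  have h6 : u.im ≤ 1 := by nlinarith
  have h7 : -1 ≤ u.im := by nlinarith
  obtain ⟨a, b⟩ := u
  simp only at *
  interval_cases a <;> interval_cases b <;> first | omega | (simp [Zsqrtd.ext_iff])

lemma OddEven.eq_or_eq_neg {a b : GaussianInt} (A : OddEven a) (B : OddEven b)
    (h : Associated b a) : a = b ∨ a = -b := by
  obtain ⟨u, rfl⟩ := h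
  have h1 := A.re
  have h2 := B.im
  rcases gauss_unit u.isUnit with h | h | h | h <;> rw [h] at h1 ⊢
  · left; rw [mul_one]
  · right; rw [mul_neg, mul_one]
  · rw [gaussRe_mul] at h1; simp only at h1; omega
  · rw [gaussRe_mul] at h1; simp only at h1; omega

/-- The common base can be taken odd-even, and then the units are `± 1`. -/
lemma OddEven.common_base {G K : GaussianInt} (A : OddEven G) (B : OddEven K) {m n : ℕ} (hm : m ≠ 0)
    (hn : n ≠ 0) (hGK : Associated (G ^ m) (K ^ n)) :
    ∃ (h : GaussianInt) (i j : ℕ), OddEven h ∧ i ≠ 0 ∧ j ≠ 0 ∧ i.Coprime j ∧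
      (G = h ^ i ∨ G = -h ^ i) ∧ (K = h ^ j ∨ K = -h ^ j) := by
  have hG : G ≠ 0 := by rintro rfl; exact A.ne rfl
  obtain ⟨h, i, j, hi, hj, hij, h1, h2⟩ := exists_common_base _ le_rfl hm hn hG hGK
  have key : ∀ h : GaussianInt, h.re % 2 = 1 → h.im % 2 = 0 → Associated G (h ^ i) →
      Associated K (h ^ j) → ∃ (h : GaussianInt) (i j : ℕ), OddEven h ∧ i ≠ 0 ∧ j ≠ 0 ∧
      i.Coprime j ∧ (G = h ^ i ∨ G = -h ^ i) ∧ (K = h ^ j ∨ K = -h ^ j) := by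
    intro h hre him h1 h2
    have H : OddEven h := by
      refine ⟨hre, him, fun h0 => ?_⟩
      obtain ⟨u, hu⟩ := h1.symm
      have h3 : h = ((h.re : ℤ) : GaussianInt) := by ext <;> simp [h0]
      rw [h3, ← Int.cast_pow] at hu
      generalize h.re ^ i = r at hu
      have h4 := A.re
      have h5 := A.ne
      rw [← hu, gaussRe_mul] at h4
      rw [← hu, gaussIm_mul] at h5
      rcases gauss_unit u.isUnit with h | h | h | h <;> rw [h] at h4 h5 <;> simp at h4 h5
    exact ⟨h, i, j, H, hi, hj, hij, A.eq_or_eq_neg (H.pow hi) h1.symm,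
      B.eq_or_eq_neg (H.pow hj) h2.symm⟩
  have hnorm : G.norm = h.norm ^ i := by
    obtain ⟨u, rfl⟩ := h1.symm
    have := (Zsqrtd.norm_eq_one_iff' (by norm_num) (u : GaussianInt)).2 u.isUnit
    rw [Zsqrtd.norm_mul, this, mul_one]
    exact map_pow Zsqrtd.normMonoidHom h i
  have hodd : ¬ Even h.norm := by
    intro h3
    have h4 : Even G.norm := by rw [hnorm]; exact h3.pow_of_ne_zero hi
    rw [gaussNorm, Int.even_add, Int.even_pow' two_ne_zero, Int.even_pow' two_ne_zero] at h4
    have := A.re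
    have := A.im
    rw [Int.even_iff, Int.even_iff] at h4
    omega
  rw [gaussNorm, Int.even_add, Int.even_pow' two_ne_zero, Int.even_pow' two_ne_zero, Int.even_iff,
    Int.even_iff] at hodd
  rcases Int.emod_two_eq_zero_or_one h.re with h3 | h3
  · have hI : ∀ k : ℕ, Associated (h ^ k) ((h * ⟨0, 1⟩) ^ k) := fun k =>
      Associated.pow_pow (associated_mul_unit_right h ⟨0, 1⟩
        ((Zsqrtd.norm_eq_one_iff' (by norm_num) _).1 rfl))
    refine key (h * ⟨0, 1⟩) ?_ ?_ (h1.trans (hI i)) (h2.trans (hI j))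
    · rw [gaussRe_mul]; simp only; omega
    · rw [gaussIm_mul]; simp only; omega
  · exact key h h3 (by omega) h1 h2

lemma OddEven.isCoprime_star {G : GaussianInt} (A : OddEven G) (hc : IsCoprime G.re G.im) :
    IsCoprime G (Star.star G) := by
  obtain ⟨a, b, hab⟩ := hc
  obtain ⟨k, hk⟩ : ∃ k, G.norm = 2 * k + 1 := by
    refine ⟨G.norm / 2, ?_⟩
    rw [gaussNorm]
    have h1 : G.re ^ 2 % 2 = 1 := by rw [sq, Int.mul_emod, A.re]; rfl
    have h2 : G.im ^ 2 % 2 = 0 := by rw [sq, Int.mul_emod, A.im]; rfl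
    omega
  rw [gaussNorm] at hk
  refine ⟨Star.star G - k * ⟨a, -b⟩, -k * ⟨a, b⟩, ?_⟩
  ext
  · simp
    linear_combination hk - 2 * k * hab
  · simp
    ring

/-- If `G ^ m * K ^ n` is real, then `G ^ m` and `conj K ^ n` agree up to a unit. -/
lemma OddEven.associated_of_im {G K : GaussianInt} (A : OddEven G) (B : OddEven K)
    (hG : IsCoprime G.re G.im) (hK : IsCoprime K.re K.im) {m n : ℕ} (h : (G ^ m * K ^ n).im = 0) :
    Associated (G ^ m) (Star.star K ^ n) := by
  have h1 : Star.star (G ^ m * K ^ n) = G ^ m * K ^ n := by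
    rw [Zsqrtd.ext_iff, Zsqrtd.re_star, Zsqrtd.im_star, h]; simp
  rw [star_mul, star_pow, star_pow] at h1
  apply associated_of_dvd_dvd
  · exact (A.isCoprime_star hG).pow.dvd_of_dvd_mul_right ⟨K ^ n, h1⟩
  · exact (B.isCoprime_star hK).symm.pow.dvd_of_dvd_mul_right ⟨Star.star G ^ m, h1.symm⟩

/-- `φ` is an argument of the Gaussian integer `G` modulo `π`. -/
def Ang (G : GaussianInt) (φ : ℝ) : Prop := (G.im : ℝ) * Real.cos φ = G.re * Real.sin φ

lemma Ang.mul {G K : GaussianInt} {φ ψ : ℝ} (h1 : Ang G φ) (h2 : Ang K ψ) :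
    Ang (G * K) (φ + ψ) := by
  unfold Ang at *
  rw [gaussRe_mul, gaussIm_mul, Real.cos_add, Real.sin_add]
  push_cast
  linear_combination (K.re * Real.cos ψ + K.im * Real.sin ψ) * h1 +
    (G.re * Real.cos φ + G.im * Real.sin φ) * h2

lemma Ang.pow {G : GaussianInt} {φ : ℝ} (h : Ang G φ) (n : ℕ) : Ang (G ^ n) (n * φ) := by
  induction n with
  | zero => simp [Ang]
  | succ n ih =>
    rw [pow_succ, show ((n + 1 : ℕ) : ℝ) * φ = n * φ + φ by push_cast; ring]
    exact ih.mul h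

lemma Ang.star {G : GaussianInt} {φ : ℝ} (h : Ang G φ) : Ang (Star.star G) (-φ) := by
  unfold Ang at *
  rw [Zsqrtd.re_star, Zsqrtd.im_star, Real.cos_neg, Real.sin_neg]
  push_cast
  linear_combination -h

lemma Ang.im_eq_zero {G : GaussianInt} {k : ℤ} (h : Ang G (k * Real.pi)) : G.im = 0 := by
  unfold Ang at h
  rw [Real.sin_int_mul_pi, mul_zero, Real.cos_int_mul_pi] at h
  rcases mul_eq_zero.1 h with h | h
  · exact_mod_cast h
  · exact absurd h (zpow_ne_zero _ (by norm_num))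

/-- How the ratio `z` is read off from the odd-even Gaussian integer `± u ± v i` attached to it: for
`z = p / q` with `p` or `q` even, `u` and `v` are `p` and `q` in some order; otherwise `p = 1`, and
`u ± v i` is `(q + i) / (1 + i)` up to a unit. -/
def Shape (z : ℚ) (u v : ℤ) : Prop :=
  ((z = v / u ∨ z = u / v) ∧ (u = 1 ∨ ∃ a : ℕ, v = 2 ^ a)) ∨
    (z = 1 / (u + v) ∧ (u - v = 1 ∨ v - u = 1))

lemma Shape.nice {z : ℚ} {h : GaussianInt} (H : Shape z |h.re| |h.im|) : Nice h := by
  rcases H with ⟨-, h1 | h1⟩ | ⟨-, h1⟩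
  · exact Or.inl h1
  · exact Or.inr (Or.inl h1)
  · right; right
    have h5 : ∀ x : ℤ, x = 1 ∨ x = -1 → |x| = 1 := by rintro x (rfl | rfl) <;> rfl
    rcases abs_cases h.re with ⟨h2, -⟩ | ⟨h2, -⟩ <;>
      rcases abs_cases h.im with ⟨h3, -⟩ | ⟨h3, -⟩ <;> rw [h2, h3] at h1
    · exact Or.inr (h5 _ (by omega))
    · exact Or.inl (h5 _ (by omega))
    · exact Or.inl (h5 _ (by omega))
    · exact Or.inr (h5 _ (by omega))

/-- The odd-even Gaussian integer attached to a 2-integer ratio `z` in `(0, 1)`: its argument is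
`± arctan z` up to a multiple of `π / 4`. -/
lemma exists_gauss_of_ratio_aux {z : ℚ} (hz : 0 < z) (hz1 : z < 1)
    (h2 : (∃ a : ℕ, z.num = 2 ^ a) ∨ (∃ a : ℕ, z.den = 2 ^ a)) :
    ∃ (G : GaussianInt) (ε : ℤ) (k : ℤ), (ε = 1 ∨ ε = -1) ∧ OddEven G ∧ IsCoprime G.re G.im ∧
      Shape z |G.re| |G.im| ∧ Ang G (ε * Real.arctan z + k * (Real.pi / 4)) := by
  have hp : 0 < z.num := Rat.num_pos.2 hz
  have hq : (0 : ℤ) < z.den := by exact_mod_cast z.den_pos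
  have hpq : z.num < z.den := Rat.num_lt_denom_iff.2 hz1
  have hc : IsCoprime z.num (z.den : ℤ) := Rat.isCoprime_num_den z
  have hzq : z = (z.num : ℚ) / ((z.den : ℤ) : ℚ) := by simpa using (Rat.num_div_den z).symm
  have h2' : (∃ a : ℕ, z.num = 2 ^ a) ∨ (∃ a : ℕ, (z.den : ℤ) = 2 ^ a) := by
    rcases h2 with h | ⟨a, h⟩
    · exact Or.inl h
    · exact Or.inr ⟨a, by exact_mod_cast h⟩
  have hpow : ∀ {x : ℤ} {a : ℕ}, x = 2 ^ a → x % 2 = 1 → x = 1 := by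
    rintro x a rfl h
    rcases a with _ | a
    · rfl
    · rw [pow_succ] at h; omega
  have hsin : ((z.den : ℤ) : ℝ) * Real.sin (Real.arctan z) = z.num * Real.cos (Real.arctan z) := by
    have h1 := Real.tan_arctan (z : ℝ)
    have h3 := (Real.cos_arctan_pos (z : ℝ)).ne'
    rw [Real.tan_eq_sin_div_cos, div_eq_iff h3] at h1
    rw [h1]
    have h4 : (z : ℝ) = (z.num : ℝ) / ((z.den : ℤ) : ℝ) := by
      conv_lhs => rw [hzq]
      push_cast; rfl
    have h5 : ((z.den : ℤ) : ℝ) ≠ 0 := by exact_mod_cast hq.ne'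
    rw [← mul_assoc]
    congr 1
    rw [h4]
    field_simp
  generalize Real.arctan (z : ℝ) = θ at hsin ⊢
  generalize (z.den : ℤ) = q at *
  generalize z.num = p at *
  rcases Int.emod_two_eq_zero_or_one p with hp2 | hp2 <;>
    rcases Int.emod_two_eq_zero_or_one q with hq2 | hq2
  · exfalso
    have := hc.isUnit_of_dvd' (Int.dvd_of_emod_eq_zero hp2) (Int.dvd_of_emod_eq_zero hq2)
    rw [Int.isUnit_iff] at this
    omega
  · refine ⟨⟨q, p⟩, 1, 0, Or.inl rfl, ⟨hq2, hp2, hp.ne'⟩, hc.symm, ?_, ?_⟩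
    · rw [abs_of_pos hp, abs_of_pos hq]
      refine Or.inl ⟨Or.inl hzq, ?_⟩
      rcases h2' with h | ⟨a, h⟩
      · exact Or.inr h
      · exact Or.inl (hpow h hq2)
    · unfold Ang
      simp only [Int.cast_one, one_mul, Int.cast_zero, zero_mul, add_zero]
      exact hsin.symm
  · refine ⟨⟨p, q⟩, -1, 2, Or.inr rfl, ⟨hp2, hq2, hq.ne'⟩, hc, ?_, ?_⟩
    · rw [abs_of_pos hp, abs_of_pos hq]
      refine Or.inl ⟨Or.inr hzq, ?_⟩
      rcases h2' with ⟨a, h⟩ | h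
      · exact Or.inl (hpow h hp2)
      · exact Or.inr h
    · unfold Ang
      rw [show ((-1 : ℤ) : ℝ) * θ + ((2 : ℤ) : ℝ) * (Real.pi / 4) = Real.pi / 2 - θ by
        push_cast; ring, Real.cos_pi_div_two_sub, Real.sin_pi_div_two_sub]
      exact hsin
  · have hp1 : p = 1 := by
      rcases h2' with ⟨a, h⟩ | ⟨a, h⟩
      · exact hpow h hp2
      · have := hpow h hq2; omega
    subst hp1
    have hsq : (0 : ℝ) < √2 / 2 := by positivity
    obtain ⟨d, rfl⟩ : ∃ d, q = 2 * d + 1 := ⟨q / 2, by omega⟩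
    push_cast at hsin hzq
    rcases Int.emod_two_eq_zero_or_one d with hd2 | hd2
    · refine ⟨⟨d + 1, -d⟩, 1, -1, Or.inl rfl, ⟨by simp only; omega, by simp only; omega,
        by simp only; omega⟩, ⟨1, 1, by ring⟩, ?_, ?_⟩
      · simp only
        rw [abs_neg, abs_of_pos (by omega : 0 < d), abs_of_pos (by omega : 0 < d + 1)]
        refine Or.inr ⟨?_, Or.inl (by ring)⟩
        rw [hzq]; push_cast; ring
      · unfold Ang
        rw [show ((1 : ℤ) : ℝ) * θ + ((-1 : ℤ) : ℝ) * (Real.pi / 4) = θ - Real.pi / 4 by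
          push_cast; ring, Real.cos_sub, Real.sin_sub, Real.cos_pi_div_four, Real.sin_pi_div_four]
        push_cast
        linear_combination -(√2 / 2) * hsin
    · refine ⟨⟨d, d + 1⟩, 1, 1, Or.inl rfl, ⟨hd2, by simp only; omega,
        by simp only; omega⟩, ⟨-1, 1, by ring⟩, ?_, ?_⟩
      · simp only
        rw [abs_of_pos (by omega : 0 < d), abs_of_pos (by omega : 0 < d + 1)]
        refine Or.inr ⟨?_, Or.inr (by ring)⟩
        rw [hzq]; push_cast; ring
      · unfold Ang
        rw [show ((1 : ℤ) : ℝ) * θ + ((1 : ℤ) : ℝ) * (Real.pi / 4) = θ + Real.pi / 4 by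
          push_cast; ring, Real.cos_add, Real.sin_add, Real.cos_pi_div_four, Real.sin_pi_div_four]
        push_cast
        linear_combination -(√2 / 2) * hsin

/-- Conjugation allows the sign of `arctan z` to be prescribed. -/
lemma exists_gauss_of_ratio {z : ℚ} (hz : 0 < z) (hz1 : z < 1)
    (h2 : (∃ a : ℕ, z.num = 2 ^ a) ∨ (∃ a : ℕ, z.den = 2 ^ a)) (m : ℤ) :
    ∃ (G : GaussianInt) (k : ℤ), OddEven G ∧ IsCoprime G.re G.im ∧
      Shape z |G.re| |G.im| ∧ Ang (G ^ (4 * m.natAbs)) (4 * m * Real.arctan z + k * Real.pi) := by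
  obtain ⟨G, ε, k, hε, h1, hc, h3, h4⟩ := exists_gauss_of_ratio_aux hz hz1 h2
  obtain ⟨n, hn⟩ : ∃ n, n = m.natAbs := ⟨_, rfl⟩
  rw [← hn]
  by_cases h5 : (n : ℤ) * ε = m
  · refine ⟨G, n * k, h1, hc, h3, ?_⟩
    convert h4.pow (4 * n) using 1
    have h6 : (n : ℝ) * ε = m := by exact_mod_cast h5
    rw [← h6]
    push_cast
    ring
  · have h5' : (n : ℤ) * -ε = m := by
      rcases hε with rfl | rfl <;> omega
    refine ⟨Star.star G, -(n * k), h1.star, ?_, ?_, ?_⟩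
    · rw [Zsqrtd.re_star, Zsqrtd.im_star]; exact hc.neg_right
    · rw [Zsqrtd.re_star, Zsqrtd.im_star, abs_neg]; exact h3
    · convert h4.star.pow (4 * n) using 1
      have h6 : (n : ℝ) * -ε = m := by exact_mod_cast h5'
      rw [← h6]
      push_cast
      ring

/-- `arctan z` is not a rational multiple of `π`. -/
lemma int_mul_arctan_ne {z : ℚ} (hz : 0 < z) (hz1 : z < 1)
    (h2 : (∃ a : ℕ, z.num = 2 ^ a) ∨ (∃ a : ℕ, z.den = 2 ^ a)) {m : ℤ} (hm : m ≠ 0) (c : ℤ) :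
    (m : ℝ) * Real.arctan z ≠ c * Real.pi := by
  intro h
  obtain ⟨G, k, h1, -, -, h4⟩ := exists_gauss_of_ratio hz hz1 h2 m
  refine h1.im_pow_ne (k := 4 * m.natAbs) (by omega) (Ang.im_eq_zero (k := 4 * c + k) ?_)
  convert h4 using 1
  push_cast
  linear_combination -4 * h

/-- A linear relation between two arctangents comes from a common base `h`. -/
lemma exists_base_of_relation {z₁ z₂ : ℚ} (hz₁ : 0 < z₁) (hz₁' : z₁ < 1) (hz₂ : 0 < z₂)
    (hz₂' : z₂ < 1)
    (h₁ : (∃ a : ℕ, z₁.num = 2 ^ a) ∨ (∃ a : ℕ, z₁.den = 2 ^ a))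
    (h₂ : (∃ a : ℕ, z₂.num = 2 ^ a) ∨ (∃ a : ℕ, z₂.den = 2 ^ a))
    {m n c : ℤ} (hm : m ≠ 0) (hn : n ≠ 0)
    (e : (m : ℝ) * Real.arctan z₁ + n * Real.arctan z₂ = c * Real.pi) :
    ∃ (h : GaussianInt) (i j : ℕ), OddEven h ∧ i ≠ 0 ∧ j ≠ 0 ∧ i.Coprime j ∧
      Shape z₁ |(h ^ i).re| |(h ^ i).im| ∧ Shape z₂ |(h ^ j).re| |(h ^ j).im| := by
  obtain ⟨G, k, hG, hGc, hGs, hGa⟩ := exists_gauss_of_ratio hz₁ hz₁' h₁ m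
  obtain ⟨K, l, hK, hKc, hKs, hKa⟩ := exists_gauss_of_ratio hz₂ hz₂' h₂ n
  have h3 : (G ^ (4 * m.natAbs) * K ^ (4 * n.natAbs)).im = 0 := by
    refine Ang.im_eq_zero (k := 4 * c + k + l) ?_
    convert hGa.mul hKa using 1
    push_cast
    linear_combination -4 * e
  obtain ⟨h, i, j, H, hi, hj, hij, hGh, hKh⟩ := hG.common_base hK.star (by omega) (by omega)
    (hG.associated_of_im hK hGc hKc h3)
  refine ⟨h, i, j, H, hi, hj, hij, ?_, ?_⟩
  · rcases hGh with rfl | rfl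
    · exact hGs
    · simpa using hGs
  · have h4 : |(Star.star K).re| = |K.re| ∧ |(Star.star K).im| = |K.im| := by simp
    rw [← h4.1, ← h4.2] at hKs
    rcases hKh with h5 | h5 <;> rw [h5] at hKs
    · exact hKs
    · simpa using hKs

/-! ### Solutions -/

lemma rat_mul_arctan {z : ℚ} (hz : 0 < z) (hz1 : z < 1)
    (h2 : (∃ a : ℕ, z.num = 2 ^ a) ∨ (∃ a : ℕ, z.den = 2 ^ a)) {x c : ℚ}
    (e : (x : ℝ) * Real.arctan z = c * Real.pi) : x = 0 := by
  by_contra hx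
  refine int_mul_arctan_ne hz hz1 h2 (m := x.num * c.den)
    (mul_ne_zero (Rat.num_ne_zero.2 hx) (by exact_mod_cast c.den_ne_zero)) (c.num * x.den) ?_
  have h3 : (x : ℝ) * x.den = x.num := by exact_mod_cast Rat.mul_den_eq_num x
  have h4 : (c : ℝ) * c.den = c.num := by exact_mod_cast Rat.mul_den_eq_num c
  push_cast
  rw [← h3, ← h4]
  linear_combination (x.den * c.den : ℝ) * e

/-- The coefficients of a relation `x₁ arctan z₁ + x₂ arctan z₂ = π / 4` are determined by
`z₁, z₂`. -/
lemma coeff_unique {z₁ z₂ x₁ x₂ y₁ y₂ : ℚ} (hz : 0 < z₂) (hz1 : z₂ < 1)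
    (h2 : (∃ a : ℕ, z₂.num = 2 ^ a) ∨ (∃ a : ℕ, z₂.den = 2 ^ a))
    (hx : (x₁ : ℝ) * Real.arctan z₁ + x₂ * Real.arctan z₂ = Real.pi / 4)
    (hy : (y₁ : ℝ) * Real.arctan z₁ + y₂ * Real.arctan z₂ = Real.pi / 4) :
    x₁ = y₁ ∧ x₂ = y₂ := by
  have hd : x₁ - y₁ = 0 := by
    by_contra hd
    have hdR : ((x₁ - y₁ : ℚ) : ℝ) ≠ 0 := by exact_mod_cast hd
    -- eliminating `arctan z₁` leaves a multiple of `arctan z₂`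
    have h3 : ((y₁ * x₂ - x₁ * y₂ : ℚ) : ℝ) * Real.arctan z₂ =
        ((-((x₁ - y₁) / 4) : ℚ) : ℝ) * Real.pi := by
      push_cast
      linear_combination y₁ * hx - x₁ * hy
    have h4 := rat_mul_arctan hz hz1 h2 h3
    rw [h4, Rat.cast_zero, zero_mul] at h3
    have h5 := mul_eq_zero.1 h3.symm
    rcases h5 with h5 | h5
    · have : -((x₁ - y₁) / 4) = 0 := by exact_mod_cast h5
      exact hd (by linarith)
    · exact Real.pi_ne_zero h5
  have hd2 : x₂ - y₂ = 0 := by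
    apply rat_mul_arctan hz hz1 h2 (c := 0)
    have h3 : x₁ = y₁ := by linarith
    rw [h3] at hx
    push_cast
    linear_combination hx - hy
  exact ⟨by linarith, by linarith⟩

lemma arctan_add_arctan_compl {z : ℝ} (hz : 0 < z) (hz1 : z < 1) :
    Real.arctan z + Real.arctan ((1 - z) / (1 + z)) = Real.pi / 4 := by
  have h1 : z * ((1 - z) / (1 + z)) < 1 := by
    rw [mul_div_assoc', div_lt_one (by linarith)]; nlinarith
  rw [Real.arctan_add h1, ← Real.arctan_one]
  congr 1
  rw [div_eq_one_iff_eq (by linarith)]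
  field_simp
  ring

/-- The arctangents of the ratios attached to the powers of `1 + 2 i`. -/
lemma arctan_five :
    Real.arctan (1 / 3) = Real.pi / 4 - Real.arctan (1 / 2) ∧
    Real.arctan (3 / 4) = Real.pi / 2 - 2 * Real.arctan (1 / 2) ∧
    Real.arctan (1 / 7) = 2 * Real.arctan (1 / 2) - Real.pi / 4 ∧
    Real.arctan (2 / 11) = Real.pi / 2 - 3 * Real.arctan (1 / 2) := by
  have h1 := arctan_add_arctan_compl (z := 1 / 2) (by norm_num) (by norm_num)
  have h2 := Real.two_mul_arctan (x := 1 / 3) (by norm_num) (by norm_num)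
  have h3 := arctan_add_arctan_compl (z := 3 / 4) (by norm_num) (by norm_num)
  have h4 := Real.arctan_add (x := 2 / 11) (y := 1 / 7) (by norm_num)
  rw [show (1 - 1 / 2 : ℝ) / (1 + 1 / 2) = 1 / 3 by norm_num] at h1
  rw [show 2 * (1 / 3 : ℝ) / (1 - (1 / 3) ^ 2) = 3 / 4 by norm_num] at h2
  rw [show (1 - 3 / 4 : ℝ) / (1 + 3 / 4) = 1 / 7 by norm_num] at h3
  rw [show (2 / 11 + 1 / 7 : ℝ) / (1 - 2 / 11 * (1 / 7)) = 1 / 3 by norm_num] at h4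
  refine ⟨?_, ?_, ?_, ?_⟩ <;> linarith

lemma arctan_others :
    Real.arctan (1 / 41) + 2 * Real.arctan (2 / 5) = Real.pi / 4 ∧
    Real.arctan (2 / 3) + Real.arctan (1 / 5) = Real.pi / 4 ∧
    4 * Real.arctan (1 / 5) - Real.arctan (1 / 239) = Real.pi / 4 := by
  have h1 := Real.two_mul_arctan (x := 2 / 5) (by norm_num) (by norm_num)
  have h2 := arctan_add_arctan_compl (z := 20 / 21) (by norm_num) (by norm_num)
  have h3 := arctan_add_arctan_compl (z := 2 / 3) (by norm_num) (by norm_num)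
  have h4 := Real.four_mul_arctan_inv_5_sub_arctan_inv_239
  rw [show 2 * (2 / 5 : ℝ) / (1 - (2 / 5) ^ 2) = 20 / 21 by norm_num] at h1
  rw [show (1 - 20 / 21 : ℝ) / (1 + 20 / 21) = 1 / 41 by norm_num] at h2
  rw [show (1 - 2 / 3 : ℝ) / (1 + 2 / 3) = 1 / 5 by norm_num] at h3
  refine ⟨by linarith, h3, ?_⟩
  simpa only [one_div] using h4

/-- The values of `z` of a given shape, in the cases that occur. -/
lemma shape_values {z : ℚ} (hz1 : z < 1) :
    (Shape z 1 2 → z = 1 / 2 ∨ z = 1 / 3) ∧ (Shape z 3 4 → z = 3 / 4 ∨ z = 1 / 7) ∧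
    (Shape z 11 2 → z = 2 / 11) ∧ (Shape z 5 2 → z = 2 / 5) ∧ (Shape z 21 20 → z = 1 / 41) ∧
    (Shape z 3 2 → z = 2 / 3 ∨ z = 1 / 5) ∧ (Shape z 119 120 → z = 1 / 239) := by
  have h5 : ∀ {v : ℤ}, 5 ∣ v → ¬ ∃ a : ℕ, v = 2 ^ a := by
    rintro v h ⟨a, rfl⟩
    have := dvd_two_pow_odd h rfl
    omega
  refine ⟨?_, ?_, ?_, ?_, ?_, ?_, ?_⟩ <;> rintro (⟨rfl | rfl, h⟩ | ⟨rfl, h⟩) <;> norm_num at *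
  · exact absurd h (by simpa using h5 (v := 20) (by norm_num))
  · exact absurd h (by simpa using h5 (v := 120) (by norm_num))

lemma shape_two_pow {z : ℚ} (hz1 : z < 1) {b : ℕ} (hb : 2 ≤ b) (S : Shape z 1 (2 ^ b)) :
    z = 1 / 2 ^ b := by
  obtain ⟨c, rfl⟩ := Nat.exists_eq_add_of_le' hb
  rcases S with ⟨h | h, -⟩ | ⟨-, h⟩
  · exfalso
    have h3 : (1 : ℚ) ≤ 2 ^ (c + 2) := one_le_pow₀ (by norm_num)
    rw [h] at hz1
    push_cast at hz1
    linarith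
  · simpa using h
  · have h3 : (1 : ℤ) ≤ 2 ^ c := one_le_pow₀ (by norm_num)
    rw [pow_add] at h
    omega

lemma shape_two_pow_sq {z : ℚ} (hz1 : z < 1) {b : ℕ} (hb : 2 ≤ b)
    (S : Shape z ((2 ^ b) ^ 2 - 1) (2 * 2 ^ b)) : z = 2 * 2 ^ b / ((2 ^ b) ^ 2 - 1) := by
  have h4 : (4 : ℤ) ≤ 2 ^ b := by
    obtain ⟨c, rfl⟩ := Nat.exists_eq_add_of_le' hb
    have h3 : (1 : ℤ) ≤ 2 ^ c := one_le_pow₀ (by norm_num)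
    rw [pow_add]; omega
  have h4' : (4 : ℚ) ≤ 2 ^ b := by exact_mod_cast h4
  rcases S with ⟨h | h, -⟩ | ⟨-, h⟩
  · push_cast at h; exact h
  · exfalso
    rw [h] at hz1
    push_cast at hz1
    rw [div_lt_one (by positivity)] at hz1
    nlinarith
  · exfalso
    have : (2 ^ b : ℤ) * (2 ^ b - 2) ≥ 4 * 2 := by
      apply mul_le_mul <;> omega
    rcases h with h | h <;> nlinarith

/-- Two distinct ratios of the same shape belong to one of the two infinite families. -/
lemma shape_family {z₁ z₂ : ℚ} (h0 : 0 < z₁) (hlt : z₁ < z₂) (h1 : z₂ < 1) {u v : ℤ} (hu : 0 < u)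
    (hv : 0 < v) (hu2 : u % 2 = 1) (hv2 : v % 2 = 0) (S₁ : Shape z₁ u v) (S₂ : Shape z₂ u v) :
    ∃ a : ℕ, 0 < a ∧ (z₁ = 1 / (2 ^ (a + 1) + 1) ∧ z₂ = 2 ^ a / (2 ^ a + 1) ∨
      z₁ = 1 / (2 ^ (a + 1) - 1) ∧ z₂ = (2 ^ a - 1) / 2 ^ a) := by
  have huQ : (0 : ℚ) < u := by exact_mod_cast hu
  have hvQ : (0 : ℚ) < v := by exact_mod_cast hv
  have hv2Q : (2 : ℚ) ≤ v := by exact_mod_cast (by omega : 2 ≤ v)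
  -- the first ratio is of the second type and the second one of the first type
  have key : (z₂ = v / u ∨ z₂ = u / v) ∧ (u = 1 ∨ ∃ a : ℕ, v = 2 ^ a) ∧ z₁ = 1 / (u + v) ∧
      (u - v = 1 ∨ v - u = 1) := by
    rcases S₁ with ⟨h2, h3⟩ | ⟨h2, h3⟩ <;> rcases S₂ with ⟨h4, h5⟩ | ⟨h4, h5⟩
    · exfalso
      have huv : (v : ℚ) / u * (u / v) = 1 := by field_simp
      rcases h2 with h2 | h2 <;> rcases h4 with h4 | h4
      · exact hlt.ne (h2.trans h4.symm)
      · rw [← h2, ← h4] at huv; nlinarith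
      · rw [← h2, ← h4] at huv; nlinarith
      · exact hlt.ne (h2.trans h4.symm)
    · exfalso
      rw [h4, lt_div_iff₀ (by positivity)] at hlt
      rcases h5 with h5 | h5
      · have h6 : (u : ℚ) = v + 1 := by exact_mod_cast (by omega : u = v + 1)
        rcases h2 with h2 | h2
        · rw [h2, h6, div_mul_eq_mul_div, div_lt_one (by positivity)] at hlt
          nlinarith
        · rw [h2, h6, div_mul_eq_mul_div, div_lt_one (by positivity)] at hlt
          nlinarith
      · have h6 : (v : ℚ) = u + 1 := by exact_mod_cast (by omega : v = u + 1)
        rcases h2 with h2 | h2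
        · rw [h2, h6, div_mul_eq_mul_div, div_lt_one (by positivity)] at hlt
          nlinarith
        · rw [h2, h6, div_mul_eq_mul_div, div_lt_one (by positivity)] at hlt
          nlinarith
    · exact ⟨h4, h5, h2, h3⟩
    · exact absurd (h2.trans h4.symm) hlt.ne
  obtain ⟨h2, h3, h4, h5⟩ := key
  obtain ⟨a, ha⟩ : ∃ a : ℕ, v = 2 ^ a := by
    rcases h3 with h3 | h3
    · exact ⟨1, by omega⟩
    · exact h3
  have ha0 : 0 < a := by
    rcases a with _ | a
    · rw [ha] at hv2; simp at hv2
    · omega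
  have haQ : (v : ℚ) = 2 ^ a := by exact_mod_cast ha
  refine ⟨a, ha0, ?_⟩
  rw [pow_succ, ← haQ]
  rcases h5 with h5 | h5
  · have h6 : (u : ℚ) = v + 1 := by exact_mod_cast (by omega : u = v + 1)
    left
    rw [h4, h6]
    refine ⟨by ring, ?_⟩
    rcases h2 with h2 | h2
    · rw [h2, h6]
    · rw [h2, div_lt_one hvQ] at h1; linarith
  · have h6 : (u : ℚ) = v - 1 := by exact_mod_cast (by omega : u = v - 1)
    right
    rw [h4, h6]
    refine ⟨by ring, ?_⟩
    rcases h2 with h2 | h2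
    · rw [h2, div_lt_one huQ] at h1; linarith
    · rw [h2, h6]

lemma abs_cases_eq {x y : ℤ} (h : |x| = y) : x = y ∨ x = -y := by
  rcases abs_cases x with ⟨h1, -⟩ | ⟨h1, -⟩ <;> omega

lemma pow_values_five {h : GaussianInt} (hre : |h.re| = 1) (him : |h.im| = 2) :
    |(h ^ 2).re| = 3 ∧ |(h ^ 2).im| = 4 ∧ |(h ^ 3).re| = 11 ∧ |(h ^ 3).im| = 2 := by
  obtain ⟨u, v⟩ := h
  rcases abs_cases_eq hre with rfl | rfl <;> rcases abs_cases_eq him with rfl | rfl <;>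
    exact ⟨rfl, rfl, rfl, rfl⟩

lemma pow_values_five_two {h : GaussianInt} (hre : |h.re| = 5) (him : |h.im| = 2) :
    |(h ^ 2).re| = 21 ∧ |(h ^ 2).im| = 20 := by
  obtain ⟨u, v⟩ := h
  rcases abs_cases_eq hre with rfl | rfl <;> rcases abs_cases_eq him with rfl | rfl <;>
    exact ⟨rfl, rfl⟩

lemma pow_values_three_two {h : GaussianInt} (hre : |h.re| = 3) (him : |h.im| = 2) :
    |(h ^ 4).re| = 119 ∧ |(h ^ 4).im| = 120 := by
  obtain ⟨u, v⟩ := h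
  rcases abs_cases_eq hre with rfl | rfl <;> rcases abs_cases_eq him with rfl | rfl <;>
    exact ⟨rfl, rfl⟩

lemma pow_values_two_pow {h : GaussianInt} {b : ℕ} (hre : |h.re| = 1) (him : |h.im| = 2 ^ b) :
    |(h ^ 2).re| = (2 ^ b) ^ 2 - 1 ∧ |(h ^ 2).im| = 2 * 2 ^ b := by
  rw [gaussRe_sq, gaussIm_sq, abs_mul, abs_mul, hre, him, ← sq_abs h.re, ← sq_abs h.im, hre, him,
    abs_sub_comm]
  have h1 : (1 : ℤ) ≤ (2 ^ b) ^ 2 := one_le_pow₀ (one_le_pow₀ (by norm_num))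
  exact ⟨by rw [abs_of_nonneg (by omega)]; ring, by norm_num⟩

/-- The pairs of ratios attached to a common base. In the last case the arctangents are
proportional. -/
lemma ratio_pairs {z₁ z₂ : ℚ} (h0 : 0 < z₁) (hlt : z₁ < z₂) (h1 : z₂ < 1) {h : GaussianInt}
    {i j : ℕ} (H : OddEven h) (hi : i ≠ 0) (hj : j ≠ 0) (hij : i.Coprime j)
    (S₁ : Shape z₁ |(h ^ i).re| |(h ^ i).im|) (S₂ : Shape z₂ |(h ^ j).re| |(h ^ j).im|) :
    (∃ a : ℕ, 0 < a ∧ (z₁ = 1 / (2 ^ (a + 1) + 1) ∧ z₂ = 2 ^ a / (2 ^ a + 1) ∨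
      z₁ = 1 / (2 ^ (a + 1) - 1) ∧ z₂ = (2 ^ a - 1) / 2 ^ a)) ∨
    ((z₁ = 1 / 2 ∨ z₁ = 1 / 3 ∨ z₁ = 3 / 4 ∨ z₁ = 1 / 7 ∨ z₁ = 2 / 11) ∧
      (z₂ = 1 / 2 ∨ z₂ = 1 / 3 ∨ z₂ = 3 / 4 ∨ z₂ = 1 / 7 ∨ z₂ = 2 / 11)) ∨
    (z₁ = 1 / 41 ∧ z₂ = 2 / 5) ∨ (z₁ = 1 / 239 ∧ (z₂ = 2 / 3 ∨ z₂ = 1 / 5)) ∨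
    z₂ = 2 * z₁ / (1 - z₁ ^ 2) := by
  have h1' : z₁ < 1 := hlt.trans h1
  rcases H.nice_pow_pair hi hj hij S₁.nice S₂.nice with ⟨rfl, rfl⟩ | ⟨hu, hv, hi3, hj3⟩ |
    ⟨h2, hu, b, hb, hv⟩ | ⟨h2, hu, hv⟩ | ⟨h2, hu, hv⟩
  · rw [pow_one] at S₁ S₂
    left
    have hre := H.re
    have him := H.im
    refine shape_family h0 hlt h1 (abs_pos.2 fun h => by omega) (abs_pos.2 H.ne) ?_ ?_ S₁ S₂
    · rcases abs_cases h.re with ⟨h3, -⟩ | ⟨h3, -⟩ <;> omega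
    · rcases abs_cases h.im with ⟨h3, -⟩ | ⟨h3, -⟩ <;> omega
  · right; left
    obtain ⟨e1, e2, e3, e4⟩ := pow_values_five hu hv
    have key : ∀ {z : ℚ} {i : ℕ}, i ≠ 0 → i ≤ 3 → z < 1 → Shape z |(h ^ i).re| |(h ^ i).im| →
        z = 1 / 2 ∨ z = 1 / 3 ∨ z = 3 / 4 ∨ z = 1 / 7 ∨ z = 2 / 11 := by
      intro z i hi hi3 hz S
      obtain ⟨v1, v2, v3, -⟩ := shape_values hz
      rcases (by omega : i = 1 ∨ i = 2 ∨ i = 3) with rfl | rfl | rfl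
      · rw [pow_one, hu, hv] at S
        have := v1 S
        tauto
      · rw [e1, e2] at S
        have := v2 S
        tauto
      · rw [e3, e4] at S
        have := v3 S
        tauto
    exact ⟨key hi hi3 h1' S₁, key hj hj3 h1 S₂⟩
  · right; right; right; right
    obtain ⟨e1, e2⟩ := pow_values_two_pow hu hv
    have hP : (4 : ℚ) ≤ 2 ^ b := by
      obtain ⟨c, rfl⟩ := Nat.exists_eq_add_of_le' hb
      have h3 : (1 : ℚ) ≤ 2 ^ c := one_le_pow₀ (by norm_num)
      rw [pow_add]; linarith
    have hP2 : (16 : ℚ) ≤ (2 ^ b) ^ 2 := by nlinarith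
    have hP3 : ((2 : ℚ) ^ b) ^ 2 - 1 ≠ 0 := by linarith
    rcases h2 with ⟨rfl, rfl⟩ | ⟨rfl, rfl⟩
    · rw [pow_one, hu, hv] at S₁
      rw [e1, e2] at S₂
      rw [shape_two_pow h1' hb S₁, shape_two_pow_sq h1 hb S₂]
      field_simp
    · exfalso
      rw [pow_one, hu, hv] at S₂
      rw [e1, e2] at S₁
      rw [shape_two_pow h1 hb S₂, shape_two_pow_sq h1' hb S₁, div_lt_div_iff₀ (by linarith)
        (by linarith)] at hlt
      nlinarith
  · right; right; left
    obtain ⟨e1, e2⟩ := pow_values_five_two hu hv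
    obtain ⟨-, -, -, v1, v2, -⟩ := shape_values h1'
    obtain ⟨-, -, -, w1, w2, -⟩ := shape_values h1
    rcases h2 with ⟨rfl, rfl⟩ | ⟨rfl, rfl⟩
    · exfalso
      rw [pow_one, hu, hv] at S₁
      rw [e1, e2] at S₂
      rw [v1 S₁, w2 S₂] at hlt
      norm_num at hlt
    · rw [pow_one, hu, hv] at S₂
      rw [e1, e2] at S₁
      exact ⟨v2 S₁, w1 S₂⟩
  · right; right; right; left
    obtain ⟨e1, e2⟩ := pow_values_three_two hu hv
    obtain ⟨-, -, -, -, -, v1, v2⟩ := shape_values h1'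
    obtain ⟨-, -, -, -, -, w1, w2⟩ := shape_values h1
    rcases h2 with ⟨rfl, rfl⟩ | ⟨rfl, rfl⟩
    · exfalso
      rw [pow_one, hu, hv] at S₁
      rw [e1, e2] at S₂
      rw [w2 S₂] at hlt
      rcases v1 S₁ with h3 | h3 <;> rw [h3] at hlt <;> norm_num at hlt
    · rw [pow_one, hu, hv] at S₂
      rw [e1, e2] at S₁
      exact ⟨v2 S₁, w1 S₂⟩

theorem stmt_0 (x₁ x₂ z₁ z₂ : ℚ)
    (hx₁ : x₁ ≠ 0) (hx₂ : x₂ ≠ 0)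
    (hz₁pos : 0 < z₁) (hz₁₂ : z₁ < z₂) (hz₂lt : z₂ < 1)
    (h2int₁ : (∃ a : ℕ, z₁.num = 2 ^ a) ∨ (∃ a : ℕ, z₁.den = 2 ^ a))
    (h2int₂ : (∃ a : ℕ, z₂.num = 2 ^ a) ∨ (∃ a : ℕ, z₂.den = 2 ^ a))
    (heq : (x₁ : ℝ) * Real.arctan (z₁ : ℝ) + (x₂ : ℝ) * Real.arctan (z₂ : ℝ) =
      Real.pi / 4) :
    (x₁, z₁, x₂, z₂) = (-1, 1/239, 4, 1/5) ∨
    (x₁, z₁, x₂, z₂) = (-1, 1/7, 2, 1/2) ∨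
    (x₁, z₁, x₂, z₂) = (-1, 2/11, 3/2, 3/4) ∨
    (x₁, z₁, x₂, z₂) = (-1, 2/11, 3, 1/3) ∨
    (x₁, z₁, x₂, z₂) = (1/3, 1/239, 4/3, 2/3) ∨
    (x₁, z₁, x₂, z₂) = (1/2, 2/11, 3/2, 1/2) ∨
    (x₁, z₁, x₂, z₂) = (1, 1/41, 2, 2/5) ∨
    (x₁, z₁, x₂, z₂) = (1, 1/7, 2, 1/3) ∨
    (x₁, z₁, x₂, z₂) = (1, 1/2, 1/2, 3/4) ∨
    (x₁, z₁, x₂, z₂) = (3, 1/7, 2, 2/11) ∨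
    (∃ a : ℕ, 0 < a ∧
      ((x₁, z₁, x₂, z₂) = (1, 1 / (2 ^ (a + 1) + 1), 1, 2 ^ a / (2 ^ a + 1)) ∨
       (x₁, z₁, x₂, z₂) = (1, 1 / (2 ^ (a + 1) - 1), 1, (2 ^ a - 1) / 2 ^ a))) := by
  have hz₂pos := hz₁pos.trans hz₁₂
  have hz₁lt := hz₁₂.trans hz₂lt
  have rel : ((4 * (x₁.num * x₂.den) : ℤ) : ℝ) * Real.arctan z₁ +
      ((4 * (x₂.num * x₁.den) : ℤ) : ℝ) * Real.arctan z₂ =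
      ((x₁.den * x₂.den : ℤ) : ℝ) * Real.pi := by
    have h3 : (x₁ : ℝ) * x₁.den = x₁.num := by exact_mod_cast Rat.mul_den_eq_num x₁
    have h4 : (x₂ : ℝ) * x₂.den = x₂.num := by exact_mod_cast Rat.mul_den_eq_num x₂
    push_cast
    rw [← h3, ← h4]
    linear_combination (4 * x₁.den * x₂.den : ℝ) * heq
  have hn₁ : 4 * (x₁.num * x₂.den) ≠ 0 :=
    mul_ne_zero (by norm_num) (mul_ne_zero (Rat.num_ne_zero.2 hx₁) (by exact_mod_cast x₂.den_ne_zero))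
  have hn₂ : 4 * (x₂.num * x₁.den) ≠ 0 :=
    mul_ne_zero (by norm_num) (mul_ne_zero (Rat.num_ne_zero.2 hx₂) (by exact_mod_cast x₁.den_ne_zero))
  obtain ⟨h, i, j, H, hi, hj, hij, S₁, S₂⟩ := exists_base_of_relation hz₁pos hz₁lt hz₂pos hz₂lt
    h2int₁ h2int₂ hn₁ hn₂ rel
  have pairs := ratio_pairs hz₁pos hz₁₂ hz₂lt H hi hj hij S₁ S₂
  clear hn₁ hn₂ rel S₁ S₂
  -- it suffices to know one relation for each pair of ratios
  have uniq : ∀ y₁ y₂ : ℚ, (y₁ : ℝ) * Real.arctan z₁ + y₂ * Real.arctan z₂ = Real.pi / 4 →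
      x₁ = y₁ ∧ x₂ = y₂ := fun y₁ y₂ hy => coeff_unique hz₂pos hz₂lt h2int₂ heq hy
  have degenerate : z₂ ≠ 2 * z₁ / (1 - z₁ ^ 2) := by
    intro hd
    have h1 : Real.arctan z₂ = 2 * Real.arctan z₁ := by
      have h2 : (0 : ℝ) < z₁ := by exact_mod_cast hz₁pos
      have h3 : (z₁ : ℝ) < 1 := by exact_mod_cast hz₁lt
      rw [Real.two_mul_arctan (by linarith) h3, hd]
      push_cast
      rfl
    rw [h1] at heq
    have h2 : ((x₁ + 2 * x₂ : ℚ) : ℝ) * Real.arctan z₁ = ((1 / 4 : ℚ) : ℝ) * Real.pi := by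
      push_cast
      linear_combination heq
    have h3 := rat_mul_arctan hz₁pos hz₁lt h2int₁ h2
    rw [h3] at h2
    push_cast at h2
    linarith [Real.pi_pos]
  have compl : z₁ = (1 - z₂) / (1 + z₂) → x₁ = 1 ∧ x₂ = 1 := by
    intro hc
    apply uniq
    have h1 := arctan_add_arctan_compl (z := z₂) (by exact_mod_cast hz₂pos)
      (by exact_mod_cast hz₂lt)
    rw [hc]
    push_cast
    linear_combination h1
  obtain ⟨a3, a34, a7, a11⟩ := arctan_five
  obtain ⟨b1, b2, b3⟩ := arctan_others
  rcases pairs with ⟨a, ha, h1⟩ | ⟨h1, h2⟩ | ⟨rfl, rfl⟩ | ⟨rfl, rfl | rfl⟩ | h1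
  · have hP : (2 : ℚ) ≤ 2 ^ a := by simpa using pow_le_pow_right₀ one_le_two ha
    obtain ⟨rfl, rfl⟩ : x₁ = 1 ∧ x₂ = 1 := by
      apply compl
      rcases h1 with ⟨h1, h2⟩ | ⟨h1, h2⟩
      · rw [h1, h2, pow_succ]
        field_simp
        ring
      · rw [h1, h2, pow_succ]
        have h3 : (2 : ℚ) ^ a * 2 - 1 ≠ 0 := by linarith
        have h4 : 1 + ((2 : ℚ) ^ a - 1) / 2 ^ a = (2 ^ a * 2 - 1) / 2 ^ a := by
          field_simp; ring
        rw [h4]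
        field_simp
        ring
    iterate 10 right
    refine ⟨a, ha, ?_⟩
    rcases h1 with ⟨h1, h2⟩ | ⟨h1, h2⟩
    · left; rw [h1, h2]
    · right; rw [h1, h2]
  · rcases h1 with rfl | rfl | rfl | rfl | rfl <;> rcases h2 with rfl | rfl | rfl | rfl | rfl <;>
      first | (exfalso; revert hz₁₂; norm_num; done) | skip
    · obtain ⟨rfl, rfl⟩ := uniq 1 (1 / 2) (by push_cast; linarith)
      iterate 8 right
      exact Or.inl rfl
    · obtain ⟨rfl, rfl⟩ := uniq 1 1 (by push_cast; linarith)
      iterate 10 right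
      exact ⟨1, by norm_num, Or.inr (by norm_num)⟩
    · exact absurd (by norm_num) degenerate
    · obtain ⟨rfl, rfl⟩ := uniq (-1) 2 (by push_cast; linarith)
      iterate 1 right
      exact Or.inl rfl
    · obtain ⟨rfl, rfl⟩ := uniq 1 2 (by push_cast; linarith)
      iterate 7 right
      exact Or.inl rfl
    · obtain ⟨rfl, rfl⟩ := uniq 1 1 (by push_cast; linarith)
      iterate 10 right
      exact ⟨2, by norm_num, Or.inr (by norm_num)⟩
    · obtain ⟨rfl, rfl⟩ := uniq 3 2 (by push_cast; linarith)
      iterate 9 right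
      exact Or.inl rfl
    · obtain ⟨rfl, rfl⟩ := uniq (1 / 2) (3 / 2) (by push_cast; linarith)
      iterate 5 right
      exact Or.inl rfl
    · obtain ⟨rfl, rfl⟩ := uniq (-1) 3 (by push_cast; linarith)
      iterate 3 right
      exact Or.inl rfl
    · obtain ⟨rfl, rfl⟩ := uniq (-1) (3 / 2) (by push_cast; linarith)
      iterate 2 right
      exact Or.inl rfl
  · obtain ⟨rfl, rfl⟩ := uniq 1 2 (by push_cast; linarith)
    iterate 6 right
    exact Or.inl rfl
  · obtain ⟨rfl, rfl⟩ := uniq (1 / 3) (4 / 3) (by push_cast; linarith)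
    iterate 4 right
    exact Or.inl rfl
  · obtain ⟨rfl, rfl⟩ := uniq (-1) 4 (by push_cast; linarith)
    exact Or.inl rfl
  · exact absurd h1 degenerate
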